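/- arXiv:1405.1000 — 3 statements merged into one kernel-verified Lean document; each statement's English description precedes it below -/
import Mathlib

section
/- Let S be a compact connected surface and f ∈ Homeo₀(S). If f is a distortion element of the group Homeo₀(S), then f is non-spreading, i.e. diam(f̃ⁿ(D))/n → 0 as n → +∞. -/
open Filter Topology Set

/-- `f` is isotopic to the identity through homeomorphisms. -/
def IsotopicToId {X : Type*} [TopologicalSpace X] (f : X ≃ₜ X) : Prop :=
  ∃ F : unitInterval → X ≃ₜ X,
    Continuous (fun p : unitInterval × X => F p.1 p.2) ∧
    F 0 = Homeomorph.refl X ∧ F 1 = f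

/-- The group of homeomorphisms of `X`, with `f * g = f ∘ g`. -/
noncomputable instance {X : Type*} [TopologicalSpace X] : Group (X ≃ₜ X) where
  mul f g := g.trans f
  one := Homeomorph.refl X
  inv := Homeomorph.symm
  mul_assoc f g h := rfl
  one_mul f := Homeomorph.ext fun _ => rfl
  mul_one f := Homeomorph.ext fun _ => rfl
  inv_mul_cancel f := Homeomorph.ext fun x => f.symm_apply_apply x

/-- The word length of `g` with respect to `S`. -/
noncomputable def wordLength {G : Type*} [Group G] (S : Set G) (g : G) : ℕ :=
  sInf {n | ∃ l : List G, l.length = n ∧ (∀ x ∈ l, x ∈ S ∨ x⁻¹ ∈ S) ∧ l.prod = g}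

/-- `g` is a distortion element of the subgroup of `G` whose carrier is the subset `H`. -/
def IsDistortionElementIn {G : Type*} [Group G] (H : Set G) (g : G) : Prop :=
  ∃ S : Finset G, (S : Set G) ⊆ H ∧ g ∈ Subgroup.closure (S : Set G) ∧
    Tendsto (fun n : ℕ => (wordLength (S : Set G) (g ^ n) : ℝ) / n) atTop (nhds 0)

/-- `γ` is a deck transformation of the covering `p : Scov → S`. -/
def IsDeck {S Scov : Type*} [TopologicalSpace S] [TopologicalSpace Scov]
    (p : Scov → S) (γ : Scov ≃ₜ Scov) : Prop :=
  p ∘ γ = p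

/-- `D` is a fundamental domain for the action of the deck transformation group of
`p : Scov → S`: a compact connected set projecting onto `S`, whose interior is disjoint
from the interior of each of its translates under a nontrivial deck transformation. -/
def IsFundDomain {S Scov : Type*} [TopologicalSpace S] [TopologicalSpace Scov]
    (p : Scov → S) (D : Set Scov) : Prop :=
  IsCompact D ∧ IsConnected D ∧ p '' D = univ ∧
    ∀ γ : Scov ≃ₜ Scov, IsDeck p γ → γ ≠ Homeomorph.refl Scov →
      interior D ∩ interior (γ '' D) = ∅

/-- `ft` is the distinguished lift of `f` to the universal cover: a lift which commutes
with every deck transformation (this characterizes the time-one map of the lift, starting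
at the identity, of an isotopy from the identity to `f`). -/
def IsGoodLift {S Scov : Type*} [TopologicalSpace S] [TopologicalSpace Scov]
    (p : Scov → S) (f : S ≃ₜ S) (ft : Scov ≃ₜ Scov) : Prop :=
  p ∘ ft = f ∘ p ∧ ∀ γ : Scov ≃ₜ Scov, IsDeck p γ → (γ : Scov → Scov) ∘ ft = ft ∘ γ

/-!
Lift an isotopy from the identity to `h ∈ Homeo₀(S)`, starting at the identity of the universal
cover. The time-one map commutes with the deck transformations, so, `D` being compact, it moves
every point by at most a constant `C_h`. If `M` bounds these constants for a finite set of
generators and their inverses, then composing lifts along a shortest word shows that `fⁿ` has a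
lift with displacement at most `M * wordLength (fⁿ)`. This lift differs from `f̃ⁿ` by a deck
transformation, which is an isometry, hence `diam (f̃ⁿ D) ≤ diam D + 2 * M * wordLength (fⁿ)`;
divide by `n`.
-/

section Word

variable {G : Type*} [Group G]

theorem exists_list_length_eq_wordLength {T : Set G} {g : G} (hg : g ∈ Subgroup.closure T) :
    ∃ l : List G, l.length = wordLength T g ∧ (∀ x ∈ l, x ∈ T ∨ x⁻¹ ∈ T) ∧ l.prod = g := by
  rw [← Subgroup.mem_toSubmonoid, Subgroup.closure_toSubmonoid] at hg
  obtain ⟨l, hl, hprod⟩ := Submonoid.exists_list_of_mem_closure hg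
  have hword : ∀ x ∈ l, x ∈ T ∨ x⁻¹ ∈ T := fun x hx => by simpa using hl x hx
  exact Nat.sInf_mem (s := {n | ∃ l : List G, l.length = n ∧ (∀ x ∈ l, x ∈ T ∨ x⁻¹ ∈ T) ∧
    l.prod = g}) ⟨l.length, l, rfl, hword, hprod⟩

theorem IsDistortionElementIn.mono {H K : Set G} (hHK : H ⊆ K) {g : G}
    (hg : IsDistortionElementIn H g) : IsDistortionElementIn K g :=
  let ⟨T, hTH, hgT, hlim⟩ := hg
  ⟨T, hTH.trans hHK, hgT, hlim⟩

end Word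

section Homotopy

variable {X : Type*} [TopologicalSpace X]

theorem IsotopicToId.homotopic_id {h : X ≃ₜ X} (hh : IsotopicToId h) :
    (ContinuousMap.id X).Homotopic h := by
  obtain ⟨F, hF, hF0, hF1⟩ := hh
  exact ⟨{
    toFun := fun q => F q.1 q.2
    continuous_toFun := hF
    map_zero_left := fun x => by simp [hF0]
    map_one_left := fun x => by simp [hF1] }⟩

theorem homotopic_id_inv {h : X ≃ₜ X} (hh : (ContinuousMap.id X).Homotopic h) :
    (ContinuousMap.id X).Homotopic (h⁻¹ : X ≃ₜ X) := by
  have hcomp : ((h⁻¹ : X ≃ₜ X) : C(X, X)).comp (h : C(X, X)) = ContinuousMap.id X :=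
    h.symm_comp_toContinuousMap
  simpa only [hcomp, ContinuousMap.comp_id] using
    ((ContinuousMap.Homotopic.refl ((h⁻¹ : X ≃ₜ X) : C(X, X))).comp hh).symm

end Homotopy

section Deck

variable {X E : Type*} [TopologicalSpace X] [TopologicalSpace E] {p : E → X}

theorem locallyPathConnectedSpace_of_isLocalHomeomorph [LocallyPathConnectedSpace X]
    (hp : IsLocalHomeomorph p) : LocallyPathConnectedSpace E := by
  choose e mem_source _ using hp
  let : ChartedSpace X E :=
    { atlas := range e
      chartAt := e
      mem_chart_source := mem_source
      chart_mem_atlas := mem_range_self }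
  exact ChartedSpace.locallyPathConnectedSpace X E

theorem exists_isDeck_apply_eq [SimplyConnectedSpace E] [LocallyPathConnectedSpace E]
    (hp : IsCoveringMap p) {x y : E} (hxy : p x = p y) : ∃ γ : E ≃ₜ E, IsDeck p γ ∧ γ x = y := by
  have exists_lift (a b : E) (hab : p b = p a) : ∃ g : C(E, E), g a = b ∧ p ∘ g = p :=
    (hp.existsUnique_continuousMap_lifts ⟨p, hp.continuous⟩ a b hab).exists
  have comp_eq_id {a : E} {u v : C(E, E)} (hu : p ∘ u = p) (hv : p ∘ v = p)
      (ha : u (v a) = a) : u ∘ v = id :=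
    hp.eq_of_comp_eq (u.continuous.comp v.continuous) continuous_id
      (by rw [← Function.comp_assoc, hu, hv, Function.comp_id]) a ha
  obtain ⟨g, hgx, hpg⟩ := exists_lift x y hxy.symm
  obtain ⟨k, hky, hpk⟩ := exists_lift y x hxy
  exact ⟨{
    toFun := g
    invFun := k
    left_inv := congrFun (comp_eq_id (a := x) hpk hpg (by rw [hgx, hky]))
    right_inv := congrFun (comp_eq_id (a := y) hpg hpk (by rw [hky, hgx]))
    continuous_toFun := g.continuous
    continuous_invFun := k.continuous }, hpg, hgx⟩

theorem exists_isDeck_comp_eq [SimplyConnectedSpace E] [LocallyPathConnectedSpace E]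
    {A : Type*} [TopologicalSpace A] [ConnectedSpace A] (hp : IsCoveringMap p) {g₁ g₂ : A → E}
    (hg₁ : Continuous g₁) (hg₂ : Continuous g₂) (hpg : p ∘ g₁ = p ∘ g₂) :
    ∃ γ : E ≃ₜ E, IsDeck p γ ∧ γ ∘ g₁ = g₂ := by
  obtain ⟨a⟩ : Nonempty A := inferInstance
  obtain ⟨γ, hγ, hγa⟩ := exists_isDeck_apply_eq hp (congrFun hpg a)
  have hpγ : p ∘ γ ∘ g₁ = p ∘ g₂ := by rw [← Function.comp_assoc, hγ, hpg]
  exact ⟨γ, hγ, hp.eq_of_comp_eq (γ.continuous.comp hg₁) hg₂ hpγ a hγa⟩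

theorem exists_lift_commute_isDeck (hp : IsCoveringMap p) {h : C(X, X)}
    (hh : (ContinuousMap.id X).Homotopic h) :
    ∃ g : E → E, Continuous g ∧ Function.Semiconj p g h ∧
      ∀ γ : E ≃ₜ E, IsDeck p γ → Function.Commute γ g := by
  obtain ⟨F⟩ := hh
  let H : C(unitInterval × E, X) :=
    ⟨fun q => F (q.1, p q.2), by have := hp.continuous; fun_prop⟩
  have H_zero : ∀ x, H (0, x) = p (ContinuousMap.id E x) := fun x => F.apply_zero (p x)
  let L := hp.liftHomotopy H (ContinuousMap.id E) H_zero
  have p_L : ∀ t x, p (L (t, x)) = F (t, p x) := fun t x =>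
    congrFun (hp.liftHomotopy_lifts H (ContinuousMap.id E) H_zero) (t, x)
  have L_zero : ∀ x, L (0, x) = x := hp.liftHomotopy_zero H (ContinuousMap.id E) H_zero
  refine ⟨fun x => L (1, x), by fun_prop, fun x => by rw [p_L, F.apply_one], fun γ hγ x => ?_⟩
  have p_γ : ∀ y, p (γ y) = p y := congrFun hγ
  -- `t ↦ γ (L (t, x))` and `t ↦ L (t, γ x)` lift the same path and both start at `γ x`.
  have paths_eq : (fun t : unitInterval => γ (L (t, x))) = fun t => L (t, γ x) :=
    hp.eq_of_comp_eq (by fun_prop) (by fun_prop)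
      (by ext t; simp only [Function.comp_apply, p_L, p_γ]) 0 (by simp only [L_zero])
  exact congrFun paths_eq 1

end Deck

section Displacement

open scoped NNReal

variable {X E : Type*} [PseudoMetricSpace E] {p : E → X}

/-- `h : X → X` has a continuous lift through `p : E → X` which moves every point of `E` by at
most `C`. The constant is taken in `ℝ≥0` so that bounds built from it are nonnegative. -/
def HasLiftWithDisplacementLE (p : E → X) (h : X → X) (C : ℝ≥0) : Prop :=
  ∃ g : E → E, Continuous g ∧ Function.Semiconj p g h ∧ ∀ x, nndist (g x) x ≤ C

namespace HasLiftWithDisplacementLE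

theorem mono {h : X → X} {C C' : ℝ≥0} (hh : HasLiftWithDisplacementLE p h C) (hC : C ≤ C') :
    HasLiftWithDisplacementLE p h C' :=
  let ⟨g, hg, hpg, hgC⟩ := hh
  ⟨g, hg, hpg, fun x => (hgC x).trans hC⟩

protected theorem id : HasLiftWithDisplacementLE p id 0 :=
  ⟨id, continuous_id, Function.Semiconj.id_right, fun x => (nndist_self x).le⟩

theorem comp {h₁ h₂ : X → X} {C₁ C₂ : ℝ≥0} (H₁ : HasLiftWithDisplacementLE p h₁ C₁)
    (H₂ : HasLiftWithDisplacementLE p h₂ C₂) :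
    HasLiftWithDisplacementLE p (h₁ ∘ h₂) (C₁ + C₂) := by
  obtain ⟨g₁, hg₁, hpg₁, hC₁⟩ := H₁
  obtain ⟨g₂, hg₂, hpg₂, hC₂⟩ := H₂
  exact ⟨g₁ ∘ g₂, hg₁.comp hg₂, hpg₁.comp_right hpg₂, fun x =>
    (nndist_triangle _ (g₂ x) _).trans (add_le_add (hC₁ (g₂ x)) (hC₂ x))⟩

variable [TopologicalSpace X]

theorem list_prod {M : ℝ≥0} {l : List (X ≃ₜ X)}
    (hl : ∀ h ∈ l, HasLiftWithDisplacementLE p h M) :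
    HasLiftWithDisplacementLE p l.prod (l.length * M) := by
  induction l with
  | nil =>
    rw [List.prod_nil, List.length_nil, Nat.cast_zero, zero_mul]
    exact HasLiftWithDisplacementLE.id
  | cons h l ih =>
    rw [List.forall_mem_cons] at hl
    rw [List.prod_cons, List.length_cons, Nat.cast_succ, add_one_mul, add_comm]
    exact hl.1.comp (ih hl.2)

theorem of_mem_closure {M : ℝ≥0} {T : Set (X ≃ₜ X)}
    (hT : ∀ h ∈ T, HasLiftWithDisplacementLE p h M ∧
      HasLiftWithDisplacementLE p (h⁻¹ : X ≃ₜ X) M)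
    {f : X ≃ₜ X} (hf : f ∈ Subgroup.closure T) :
    HasLiftWithDisplacementLE p f (wordLength T f * M) := by
  obtain ⟨l, hlength, hmem, rfl⟩ := exists_list_length_eq_wordLength hf
  rw [← hlength]
  refine list_prod fun h hh => ?_
  rcases hmem h hh with hhT | hhT
  · exact (hT h hhT).1
  · simpa only [inv_inv] using (hT h⁻¹ hhT).2

variable [SimplyConnectedSpace E] [LocallyPathConnectedSpace E]

theorem diam_image_le (hp : IsCoveringMap p)
    (hinv : ∀ γ : E ≃ₜ E, IsDeck p γ → Isometry γ) {h : X → X} {C : ℝ≥0}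
    (hh : HasLiftWithDisplacementLE p h C) {φ : E → E} (hφ : Continuous φ)
    (hpφ : Function.Semiconj p φ h) {A : Set E} (hA : Bornology.IsBounded A) :
    Metric.diam (φ '' A) ≤ Metric.diam A + 2 * C := by
  obtain ⟨g, hg, hpg, hgC⟩ := hh
  obtain ⟨γ, hγ, rfl⟩ := exists_isDeck_comp_eq hp hg hφ (hpg.comp_eq.trans hpφ.comp_eq.symm)
  rw [image_comp, (hinv γ hγ).diam_image]
  refine Metric.diam_le_of_forall_dist_le (by positivity) ?_
  rintro _ ⟨x, hx, rfl⟩ _ ⟨y, hy, rfl⟩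
  calc dist (g x) (g y) ≤ dist (g x) x + dist x y + dist y (g y) := dist_triangle4 ..
    _ ≤ C + Metric.diam A + C := by
      gcongr
      · exact hgC x
      · exact Metric.dist_le_diam_of_mem hA hx hy
      · rw [dist_comm]
        exact hgC y
    _ = Metric.diam A + 2 * C := by ring

end HasLiftWithDisplacementLE

variable [TopologicalSpace X] [SimplyConnectedSpace E] [LocallyPathConnectedSpace E]

theorem exists_nndist_le_of_commute_isDeck (hp : IsCoveringMap p)
    (hinv : ∀ γ : E ≃ₜ E, IsDeck p γ → Isometry γ) {D : Set E} (hD : IsCompact D)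
    (hpD : p '' D = univ) {g : E → E} (hg : Continuous g)
    (hcomm : ∀ γ : E ≃ₜ E, IsDeck p γ → Function.Commute γ g) :
    ∃ C : ℝ≥0, ∀ x, nndist (g x) x ≤ C := by
  obtain ⟨C, hC⟩ := hD.bddAbove_image (hg.nndist continuous_id).continuousOn
  refine ⟨C, fun x => ?_⟩
  obtain ⟨d, hd, hdx⟩ : p x ∈ p '' D := hpD ▸ mem_univ _
  obtain ⟨γ, hγ, rfl⟩ := exists_isDeck_apply_eq hp hdx
  rw [← (hcomm γ hγ).eq d, (hinv γ hγ).nndist_eq]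
  exact hC (mem_image_of_mem _ hd)

theorem eventually_hasLiftWithDisplacementLE (hp : IsCoveringMap p)
    (hinv : ∀ γ : E ≃ₜ E, IsDeck p γ → Isometry γ) {D : Set E} (hD : IsCompact D)
    (hpD : p '' D = univ) {h : C(X, X)} (hh : (ContinuousMap.id X).Homotopic h) :
    ∀ᶠ C in atTop, HasLiftWithDisplacementLE p h C := by
  obtain ⟨g, hg, hpg, hcomm⟩ := exists_lift_commute_isDeck hp hh
  obtain ⟨C, hC⟩ := exists_nndist_le_of_commute_isDeck hp hinv hD hpD hg hcomm
  have hlift : HasLiftWithDisplacementLE p h C := ⟨g, hg, hpg, hC⟩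
  exact eventually_atTop.2 ⟨C, fun _ => hlift.mono⟩

theorem exists_hasLiftWithDisplacementLE_finset (hp : IsCoveringMap p)
    (hinv : ∀ γ : E ≃ₜ E, IsDeck p γ → Isometry γ) {D : Set E} (hD : IsCompact D)
    (hpD : p '' D = univ) {T : Finset (X ≃ₜ X)}
    (hT : ∀ h ∈ T, (ContinuousMap.id X).Homotopic h) :
    ∃ M : ℝ≥0, ∀ h ∈ T, HasLiftWithDisplacementLE p h M ∧
      HasLiftWithDisplacementLE p (h⁻¹ : X ≃ₜ X) M :=
  ((eventually_all_finset T).2 fun h hh =>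
    (eventually_hasLiftWithDisplacementLE hp hinv hD hpD (hT h hh)).and
      (eventually_hasLiftWithDisplacementLE hp hinv hD hpD
        (homotopic_id_inv (hT h hh)))).exists

end Displacement

theorem semiconj_iterate_pow {X E : Type*} [TopologicalSpace X] {p : E → X} {φ : E → E}
    {f : X ≃ₜ X} (hφ : Function.Semiconj p φ f) (n : ℕ) :
    Function.Semiconj p φ^[n] (f ^ n : X ≃ₜ X) := by
  rw [hom_coe_pow (fun h : X ≃ₜ X => (h : X → X)) rfl (fun _ _ => rfl) f n]
  exact hφ.iterate_right n

theorem nonspreading_of_distortion_general {X E : Type*} [TopologicalSpace X]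
    [LocallyPathConnectedSpace X] [PseudoMetricSpace E] [SimplyConnectedSpace E]
    {p : E → X} (hp : IsCoveringMap p) (hinv : ∀ γ : E ≃ₜ E, IsDeck p γ → Isometry γ)
    {D : Set E} (hD : IsCompact D) (hpD : p '' D = univ)
    {f : X ≃ₜ X} {φ : E → E} (hφ : Continuous φ) (hpφ : Function.Semiconj p φ f)
    (hf : IsDistortionElementIn {h : X ≃ₜ X | (ContinuousMap.id X).Homotopic h} f)
    {A : Set E} (hA : Bornology.IsBounded A) :
    Tendsto (fun n : ℕ => Metric.diam (φ^[n] '' A) / n) atTop (𝓝 0) := by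
  have := locallyPathConnectedSpace_of_isLocalHomeomorph hp.isLocalHomeomorph
  obtain ⟨T, hT, hfT, hlim⟩ := hf
  obtain ⟨M, hM⟩ := exists_hasLiftWithDisplacementLE_finset hp hinv hD hpD hT
  have hdiam (n : ℕ) : Metric.diam (φ^[n] '' A) ≤
      Metric.diam A + 2 * (wordLength (T : Set (X ≃ₜ X)) (f ^ n) * M) :=
    (HasLiftWithDisplacementLE.of_mem_closure hM (pow_mem hfT n)).diam_image_le hp hinv
      (hφ.iterate n) (semiconj_iterate_pow hpφ n) hA
  have hbound : Tendsto (fun n : ℕ => Metric.diam A / n +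
      2 * (wordLength (T : Set (X ≃ₜ X)) (f ^ n) / n * M)) atTop (𝓝 0) := by
    simpa using (tendsto_const_div_atTop_nhds_zero_nat (Metric.diam A)).add
      ((hlim.mul_const (M : ℝ)).const_mul 2)
  refine squeeze_zero (fun n => by positivity) (fun n => ?_) hbound
  calc Metric.diam (φ^[n] '' A) / n
      ≤ (Metric.diam A + 2 * (wordLength (T : Set (X ≃ₜ X)) (f ^ n) * M)) / n := by
        gcongr
        exact hdiam n
    _ = Metric.diam A / n + 2 * (wordLength (T : Set (X ≃ₜ X)) (f ^ n) / n * M) := by ring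

/-- **Proposition.** On a compact connected surface `S`, any distortion element of
`Homeo₀(S)` is non-spreading: `diam(f̃ⁿ(D))/n → 0`. -/
theorem nonspreading_of_distortion
    {S Scov : Type*} [TopologicalSpace S] [CompactSpace S] [ConnectedSpace S]
    [ChartedSpace (EuclideanHalfSpace 2) S]
    [MetricSpace Scov] [SimplyConnectedSpace Scov]
    (p : Scov → S) (hp : IsCoveringMap p)
    (hinv : ∀ γ : Scov ≃ₜ Scov, IsDeck p γ → Isometry γ)
    (D : Set Scov) (hD : IsFundDomain p D)
    (f : S ≃ₜ S) (hf : IsotopicToId f)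
    (ft : Scov ≃ₜ Scov) (hft : IsGoodLift p f ft)
    (hdist : IsDistortionElementIn {h : S ≃ₜ S | IsotopicToId h} f) :
    Tendsto (fun n : ℕ => Metric.diam ((⇑ft)^[n] '' D) / n) atTop (nhds 0) := by
  have := ChartedSpace.locallyPathConnectedSpace (EuclideanHalfSpace 2) S
  exact nonspreading_of_distortion_general hp hinv hD.1 hD.2.2.1 ft.continuous (congrFun hft.1)
    (hdist.mono fun _ hh => hh.homotopic_id) hD.1.isBounded
end

section
/- Let (f_n)_{n ≥ 1} be a sequence of homeomorphisms of ℝ^d, each supported in the closed unit ball. Then there exists a finite set 𝒢 of compactly supported homeomorphisms of ℝ^d such that: (1) #𝒢 ≤ 5; (2) every f_n belongs to the subgroup generated by 𝒢; (3) for every n ≥ 1, l_𝒢(f_n) ≤ 14·log(n) + 14, where l_𝒢(h) is the minimal number of factors needed to write h as a product of elements of 𝒢 ∪ 𝒢⁻¹. The same statement holds for homeomorphisms of the half-space H^d = {x ∈ ℝ^d : x₁ ≥ 0} supported in the unit half-ball, with 𝒢 a finite set of compactly supported homeomorphisms of H^d. -/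
open Filter Topology Set

/-- The support of a homeomorphism: the closure of the set of non-fixed points. -/
def homeoSupport {X : Type*} [TopologicalSpace X] (g : X ≃ₜ X) : Set X :=
  closure {x | g x ≠ x}

/-- The half-space `H^d = {x ∈ ℝ^d | x₁ ≥ 0}`. -/
abbrev HalfSpace (d : ℕ) [NeZero d] : Type :=
  {x : EuclideanSpace ℝ (Fin d) // 0 ≤ x 0}

/-!
A homeomorphism `h` supported in `B` is a commutator `⁅H, s⁆` as soon as the images `sʲ B` are
pairwise disjoint: take for `H` the product of all `sʲ h s⁻ʲ`. For a ping-pong pair `a`, `b`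
whose binary words `wₙ` (of length about `log₂ n`) move a region `D` containing all those images
to disjoint sets `wₙ D`, conjugates of the `Hₙ` belonging to the `fₙ` fit together into a single
homeomorphism `F`, and `fₙ = ⁅wₙ⁻¹ F wₙ, s⁆` has length at most `4 log₂ n + O(1)` in the four
generators `a`, `b`, `s`, `F`.

This covers `ℝ^d` and, displacing along the boundary hyperplane, `H^d` for `d ≥ 2`. On the
half-line the endpoint is fixed by every homeomorphism. The coordinate `-log x` turns the `fₙ` into
increasing homeomorphisms of `ℝ` that are the identity on a left half-line. After a
reparametrisation `fₙ` displaces the integers beyond `(log₂ n) / 16` by at most one place; a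
power of a shift `T`, the fifth generator, brings this range to the origin, and there `fₙ` is the
product of two maps that, up to conjugation by `T`, are supported in a periodic union of
intervals. The commutator argument applies to these maps, with all the intervals treated at once.
-/

open scoped Pointwise commutatorElement

section Words

variable {G : Type*} [Group G] {S : Set G} {a b g h s F w : G} {m n : ℕ}

/-- The closed ball of radius `n` around `1` in the word metric defined by `S`: the products of at
most `n` letters from `S ∪ S⁻¹`. -/
def wordBall (S : Set G) (n : ℕ) : Set G :=
  {g | ∃ l : List G, l.length ≤ n ∧ (∀ x ∈ l, x ∈ S ∨ x⁻¹ ∈ S) ∧ l.prod = g}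

theorem wordBall_mono (hmn : m ≤ n) : wordBall S m ⊆ wordBall S n :=
  fun _ ⟨l, hlen, hl, hprod⟩ => ⟨l, hlen.trans hmn, hl, hprod⟩

theorem wordBall_subset_wordBall {S' : Set G} (hSS' : S ⊆ S') : wordBall S n ⊆ wordBall S' n :=
  fun _ ⟨l, hlen, hl, hprod⟩ => ⟨l, hlen, fun x hx => (hl x hx).imp (@hSS' x) (@hSS' _), hprod⟩

theorem one_mem_wordBall : (1 : G) ∈ wordBall S n :=
  ⟨[], by simp⟩

theorem mem_wordBall_one (hg : g ∈ S) : g ∈ wordBall S 1 :=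
  ⟨[g], by simp [hg]⟩

theorem mul_mem_wordBall (hg : g ∈ wordBall S m) (hh : h ∈ wordBall S n) :
    g * h ∈ wordBall S (m + n) := by
  obtain ⟨l, hlen, hl, rfl⟩ := hg
  obtain ⟨l', hlen', hl', rfl⟩ := hh
  refine ⟨l ++ l', by grind, fun x hx => ?_, List.prod_append⟩
  exact (List.mem_append.1 hx).elim (hl x) (hl' x)

theorem inv_mem_wordBall (hg : g ∈ wordBall S n) : g⁻¹ ∈ wordBall S n := by
  obtain ⟨l, hlen, hl, rfl⟩ := hg
  refine ⟨(l.map (·⁻¹)).reverse, by simpa using hlen, fun x hx => ?_,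
    (List.prod_inv_reverse l).symm⟩
  obtain ⟨y, hy, rfl⟩ := List.mem_map.1 (List.mem_reverse.1 hx)
  rw [inv_inv]
  exact (hl y hy).symm

theorem conj_mem_wordBall (hw : w ∈ wordBall S m) (hg : g ∈ wordBall S n) :
    w * g * w⁻¹ ∈ wordBall S (m + n + m) :=
  mul_mem_wordBall (mul_mem_wordBall hw hg) (inv_mem_wordBall hw)

theorem pow_mem_wordBall (hg : g ∈ wordBall S 1) : g ^ n ∈ wordBall S n := by
  induction n with
  | zero => exact (pow_zero g).symm ▸ one_mem_wordBall
  | succ n ih => exact pow_succ g n ▸ mul_mem_wordBall ih hg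

theorem map_mem_wordBall {G' : Type*} [Group G'] (ρ : G →* G') (hg : g ∈ wordBall S n) :
    ρ g ∈ wordBall (ρ '' S) n := by
  obtain ⟨l, hlen, hl, rfl⟩ := hg
  refine ⟨l.map ρ, by simpa using hlen, fun x hx => ?_, (map_list_prod ρ l).symm⟩
  obtain ⟨y, hy, rfl⟩ := List.mem_map.1 hx
  exact (hl y hy).imp (mem_image_of_mem ρ) fun h => ⟨y⁻¹, h, map_inv ρ y⟩

theorem commutator_conj_mem_wordBall (hw : w ∈ wordBall S n) (hF : F ∈ wordBall S 1)
    (hs : s ∈ wordBall S 1) : ⁅w⁻¹ * F * w, s⁆ ∈ wordBall S (4 * n + 4) := by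
  have hconj := mul_mem_wordBall (mul_mem_wordBall (inv_mem_wordBall hw) hF) hw
  exact wordBall_mono (by omega) (mul_mem_wordBall (mul_mem_wordBall (mul_mem_wordBall hconj hs)
    (inv_mem_wordBall hconj)) (inv_mem_wordBall hs))

theorem wordLength_le_of_mem_wordBall (hg : g ∈ wordBall S n) : wordLength S g ≤ n := by
  obtain ⟨l, hlen, hl, hprod⟩ := hg
  exact le_trans (Nat.sInf_le ⟨l, rfl, hl, hprod⟩) hlen

theorem mem_closure_of_mem_wordBall (hg : g ∈ wordBall S n) : g ∈ Subgroup.closure S := by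
  obtain ⟨l, -, hl, rfl⟩ := hg
  refine Subgroup.list_prod_mem _ fun x hx => ?_
  exact (hl x hx).elim (fun h => Subgroup.subset_closure h)
    fun h => inv_mem_iff.1 (Subgroup.subset_closure h)

/-- The word in `a` and `b` spelled by the binary digits of `n` below the leading one, read from
the last digit, with `a` for `0` and `b` for `1`. -/
def binaryWord (a b : G) : ℕ → G :=
  Nat.binaryRecFromOne 1 1 fun digit _ _ w => cond digit b a * w

theorem binaryWord_one : binaryWord a b 1 = 1 :=
  Nat.binaryRecFromOne_one _

theorem binaryWord_bit (digit : Bool) (hn : n ≠ 0) :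
    binaryWord a b (Nat.bit digit n) = cond digit b a * binaryWord a b n :=
  Nat.binaryRecFromOne_eq _ _ hn

theorem binaryWord_mem_wordBall (ha : a ∈ wordBall S 1) (hb : b ∈ wordBall S 1) (n : ℕ) :
    binaryWord a b n ∈ wordBall S (Nat.log 2 n) := by
  induction n using Nat.binaryRecFromOne with
  | zero => exact one_mem_wordBall
  | one =>
    rw [binaryWord_one]
    exact one_mem_wordBall
  | bit digit n hn ih =>
    have hlog : Nat.log 2 (Nat.bit digit n) = 1 + Nat.log 2 n := by
      have htwo : 2 ≤ Nat.bit digit n := by cases digit <;> simp [Nat.bit] <;> omega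
      rw [Nat.log_of_one_lt_of_le one_lt_two htwo, add_comm, ← Nat.div2_val, Nat.div2_bit]
    rw [binaryWord_bit digit hn, hlog]
    exact mul_mem_wordBall (by cases digit <;> assumption) ih

/-- A family of words indexed by `ℤ`: the binary words for `n ≥ 0` (shifted by one, as they start
at `1`), supplemented by the negative powers of `b`. The negative indices make room for the pair
`2 * n - 2`, `2 * n - 1` at `n = 0`. -/
def intWord (a b : G) : ℤ → G
  | .ofNat n => binaryWord a b (n + 1)
  | .negSucc k => b⁻¹ ^ (k + 1)

/-- The length of `intWord a b z` as a word in `a` and `b`. -/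
def intWordLength : ℤ → ℕ
  | .ofNat n => Nat.log 2 (n + 1)
  | .negSucc k => k + 1

theorem intWordLength_natCast (n : ℕ) : intWordLength n = Nat.log 2 (n + 1) :=
  rfl

theorem intWord_mem_wordBall (ha : a ∈ wordBall S 1) (hb : b ∈ wordBall S 1) :
    ∀ z : ℤ, intWord a b z ∈ wordBall S (intWordLength z)
  | .ofNat _ => binaryWord_mem_wordBall ha hb _
  | .negSucc _ => pow_mem_wordBall (inv_mem_wordBall hb)

theorem intWord_mem_subgroup {H : Subgroup G} (ha : a ∈ H)
    (hb : b ∈ H) (z : ℤ) : intWord a b z ∈ H :=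
  (Subgroup.closure_le H).2 (insert_subset ha (singleton_subset_iff.2 hb))
    (mem_closure_of_mem_wordBall (intWord_mem_wordBall (mem_wordBall_one (by simp))
      (mem_wordBall_one (by simp)) z))

end Words

section RigidStabilizer

variable (G : Type*) {X ι : Type*} [Group G] [MulAction G X]

/-- The elements of `G` that move only points of `K`. -/
def rigidStabilizer (K : Set X) : Subgroup G := fixingSubgroup G Kᶜ

/-- Elements supported in the members of the family `K` can be combined into a single element of
`G` that acts on each `K i` as the `i`-th of them and moves no point outside the union. -/
def IsGluable (K : ι → Set X) : Prop :=
  ∀ φ : ι → G, (∀ i, φ i ∈ rigidStabilizer G (K i)) →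
    ∃ F ∈ rigidStabilizer G (⋃ i, K i), ∀ i, ∀ x ∈ K i, F • x = φ i • x

variable {G} {K B C D E : Set X} {a b g h s H u v : G} {w : ι → G}

theorem mem_rigidStabilizer : g ∈ rigidStabilizer G K ↔ ∀ x ∉ K, g • x = x :=
  mem_fixingSubgroup_iff G

theorem rigidStabilizer_mono (hKD : K ⊆ D) : rigidStabilizer G K ≤ rigidStabilizer G D :=
  fixingSubgroup_antitone G X (compl_subset_compl.2 hKD)

theorem smul_mem_iff_of_mem_rigidStabilizer (hg : g ∈ rigidStabilizer G K) {x : X} :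
    g • x ∈ K ↔ x ∈ K := by
  refine not_iff_not.1 ⟨fun hgx => ?_, fun hx => (mem_rigidStabilizer.1 hg x hx).symm ▸ hx⟩
  exact smul_left_cancel g (mem_rigidStabilizer.1 hg _ hgx) ▸ hgx

theorem conj_mem_rigidStabilizer_smul (hg : g ∈ rigidStabilizer G K) (c : G) :
    c * g * c⁻¹ ∈ rigidStabilizer G (c • K) := by
  refine mem_rigidStabilizer.2 fun x hx => ?_
  rw [mem_smul_set_iff_inv_smul_mem] at hx
  rw [mul_smul, mul_smul, mem_rigidStabilizer.1 hg _ hx, smul_inv_smul]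

theorem pow_smul_subset (hs : s ∈ rigidStabilizer G D) (hBD : B ⊆ D) (n : ℕ) : s ^ n • B ⊆ D := by
  rintro _ ⟨x, hx, rfl⟩
  exact (smul_mem_iff_of_mem_rigidStabilizer (pow_mem hs n)).2 (hBD hx)

theorem pairwise_disjoint_pow_smul (hBC : s • B ⊆ C) (hCC : s • C ⊆ C) (hdisj : Disjoint B C) :
    Pairwise (Function.onFun Disjoint fun n : ℕ => s ^ n • B) := by
  have hpow : ∀ n : ℕ, s ^ (n + 1) • B ⊆ C := by
    intro n
    induction n with
    | zero => simpa only [zero_add, pow_one] using hBC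
    | succ n ih => exact pow_succ' s (n + 1) ▸ mul_smul s _ B ▸ (smul_set_mono ih).trans hCC
  refine (pairwise_disjoint_on _).2 fun m n hmn => ?_
  obtain ⟨k, rfl⟩ := Nat.exists_eq_add_of_lt hmn
  rw [add_assoc, pow_add, mul_smul, disjoint_smul_set]
  exact hdisj.mono_right (hpow k)

section Faithful

variable [FaithfulSMul G X]

theorem commute_of_mem_fixingSubgroup (hv : v ∈ fixingSubgroup G D)
    (hs : s ∈ rigidStabilizer G D) : Commute v s := by
  refine eq_of_smul_eq_smul (α := X) fun x => ?_
  rw [mul_smul, mul_smul]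
  by_cases hx : x ∈ D
  · rw [(mem_fixingSubgroup_iff G).1 hv x hx, (mem_fixingSubgroup_iff G).1 hv _
      ((smul_mem_iff_of_mem_rigidStabilizer hs).2 hx)]
  · have hvx : v • x ∉ D := fun h => hx <| by
      rwa [← inv_smul_smul v x, (mem_fixingSubgroup_iff G).1 (inv_mem hv) _ h]
    rw [mem_rigidStabilizer.1 hs x hx, mem_rigidStabilizer.1 hs _ hvx]

theorem commutator_eq_of_eqOn (hs : s ∈ rigidStabilizer G D) (huH : ∀ x ∈ D, u • x = H • x) :
    ⁅u, s⁆ = ⁅H, s⁆ := by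
  have hfix : H⁻¹ * u ∈ fixingSubgroup G D :=
    (mem_fixingSubgroup_iff G).2 fun x hx => by rw [mul_smul, huH x hx, inv_smul_smul]
  have hcomm := (commute_of_mem_fixingSubgroup hfix hs).eq
  calc ⁅u, s⁆ = H * ((H⁻¹ * u) * s) * u⁻¹ * s⁻¹ := by rw [commutatorElement_def]; group
    _ = ⁅H, s⁆ := by rw [hcomm, commutatorElement_def]; group

-- `H` is the infinite product of the conjugates `sʲ h s⁻ʲ`.
theorem exists_eq_mul_conj (hs : s ∈ rigidStabilizer G D) (hBD : B ⊆ D)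
    (hdisj : Pairwise (Function.onFun Disjoint fun n : ℕ => s ^ n • B))
    (hglue : IsGluable G fun n : ℕ => s ^ n • B) (hh : h ∈ rigidStabilizer G B) :
    ∃ H ∈ rigidStabilizer G D, H = h * (s * H * s⁻¹) := by
  obtain ⟨H, hHsupp, hH⟩ := hglue (fun n => s ^ n * h * (s ^ n)⁻¹)
    fun n => conj_mem_rigidStabilizer_smul hh _
  refine ⟨H, rigidStabilizer_mono (iUnion_subset (pow_smul_subset hs hBD)) hHsupp,
    eq_of_smul_eq_smul (α := X) fun x => ?_⟩
  have mem_succ_iff : ∀ n x, x ∈ s ^ (n + 1) • B ↔ s⁻¹ • x ∈ s ^ n • B := fun n x => by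
    rw [pow_succ', mul_smul, mem_smul_set_iff_inv_smul_mem]
  simp only [mul_smul]
  by_cases hx : ∃ n, s⁻¹ • x ∈ s ^ n • B
  · obtain ⟨n, hn⟩ := hx
    have hsH : s • H • s⁻¹ • x = H • x := by
      rw [hH n _ hn, hH (n + 1) x ((mem_succ_iff n x).2 hn), smul_smul, smul_smul, pow_succ']
      congr 1
      group
    have hHx : H • x ∈ s ^ (n + 1) • B := by
      rw [hH (n + 1) x ((mem_succ_iff n x).2 hn),
        smul_mem_iff_of_mem_rigidStabilizer (conj_mem_rigidStabilizer_smul hh _)]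
      exact (mem_succ_iff n x).2 hn
    have hHxB : H • x ∉ B := fun hB =>
      disjoint_left.1 (hdisj n.succ_ne_zero) hHx (by simpa using hB)
    rw [hsH, mem_rigidStabilizer.1 hh _ hHxB]
  · rw [mem_rigidStabilizer.1 hHsupp (s⁻¹ • x) (by simpa using hx), smul_inv_smul]
    by_cases hxB : x ∈ B
    · simpa using hH 0 x (by simpa using hxB)
    · rw [mem_rigidStabilizer.1 hh x hxB]
      refine mem_rigidStabilizer.1 hHsupp x fun hmem => ?_
      obtain ⟨_ | n, hn⟩ := mem_iUnion.1 hmem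
      · exact hxB (by simpa using hn)
      · exact hx ⟨n, (mem_succ_iff n x).1 hn⟩

theorem exists_eq_commutator (hs : s ∈ rigidStabilizer G D) (hBD : B ⊆ D)
    (hdisj : Pairwise (Function.onFun Disjoint fun n : ℕ => s ^ n • B))
    (hglue : IsGluable G fun n : ℕ => s ^ n • B) (hh : h ∈ rigidStabilizer G B) :
    ∃ H ∈ rigidStabilizer G D, h = ⁅H, s⁆ := by
  obtain ⟨H, hHsupp, hH⟩ := exists_eq_mul_conj hs hBD hdisj hglue hh
  refine ⟨H, hHsupp, ?_⟩
  calc h = h * (s * H * s⁻¹) * (s * H⁻¹ * s⁻¹) := by group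
    _ = ⁅H, s⁆ := by rw [← hH, commutatorElement_def]; group

theorem exists_forall_eq_commutator {f : ι → G} (hs : s ∈ rigidStabilizer G D) (hBD : B ⊆ D)
    (hdisj : Pairwise (Function.onFun Disjoint fun n : ℕ => s ^ n • B))
    (hglue : IsGluable G fun n : ℕ => s ^ n • B) (hglueWords : IsGluable G fun i => w i • D)
    (hf : ∀ i, f i ∈ rigidStabilizer G B) :
    ∃ F ∈ rigidStabilizer G (⋃ i, w i • D), ∀ i, f i = ⁅(w i)⁻¹ * F * w i, s⁆ := by
  choose H hHsupp hH using fun i => exists_eq_commutator hs hBD hdisj hglue (hf i)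
  obtain ⟨F, hFsupp, hF⟩ := hglueWords (fun i => w i * H i * (w i)⁻¹)
    fun i => conj_mem_rigidStabilizer_smul (hHsupp i) _
  refine ⟨F, hFsupp, fun i => (hH i).trans (commutator_eq_of_eqOn hs fun x hx => ?_).symm⟩
  rw [mul_smul, mul_smul, hF i _ (smul_mem_smul_set hx), mul_smul, mul_smul, inv_smul_smul,
    inv_smul_smul]

end Faithful

/-- Ping-pong data: `a` and `b` map the arena `E` to disjoint parts of `E` that avoid `D`. -/
structure IsPingPong (a b : G) (D E : Set X) : Prop where
  base_subset : D ⊆ E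
  left_smul_subset : a • E ⊆ E \ D
  right_smul_subset : b • E ⊆ E \ D
  disjoint_smul : Disjoint (a • E) (b • E)

namespace IsPingPong

theorem cond_smul_subset (hab : IsPingPong a b D E) (digit : Bool) :
    cond digit b a • E ⊆ E \ D := by
  cases digit
  exacts [hab.left_smul_subset, hab.right_smul_subset]

theorem binaryWord_smul_subset (hab : IsPingPong a b D E) (n : ℕ) :
    binaryWord a b n • E ⊆ E := by
  induction n using Nat.binaryRecFromOne with
  | zero => exact (one_smul G E).subset
  | one => exact binaryWord_one (a := a) ▸ (one_smul G E).subset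
  | bit digit n hn ih =>
    rw [binaryWord_bit digit hn, mul_smul]
    exact (smul_set_mono ih).trans ((hab.cond_smul_subset digit).trans sdiff_subset)

theorem binaryWord_bit_smul_subset (hab : IsPingPong a b D E) (digit : Bool) {n : ℕ}
    (hn : n ≠ 0) : binaryWord a b (Nat.bit digit n) • D ⊆ cond digit b a • E := by
  rw [binaryWord_bit digit hn, mul_smul]
  exact smul_set_mono ((smul_set_mono hab.base_subset).trans (hab.binaryWord_smul_subset n))

theorem disjoint_binaryWord_bit_smul (hab : IsPingPong a b D E) (digit : Bool) {n : ℕ}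
    (hn : n ≠ 0) : Disjoint D (binaryWord a b (Nat.bit digit n) • D) :=
  (disjoint_sdiff_left.mono_left
    ((hab.binaryWord_bit_smul_subset digit hn).trans (hab.cond_smul_subset digit))).symm

theorem disjoint_binaryWord_smul (hab : IsPingPong a b D E) {m n : ℕ}
    (hm : m ≠ 0) (hn : n ≠ 0) (hmn : m ≠ n) :
    Disjoint (binaryWord a b m • D) (binaryWord a b n • D) := by
  induction m using Nat.binaryRecFromOne generalizing n with
  | zero => exact absurd rfl hm
  | one =>
    cases n using Nat.binaryRecFromOne with
    | zero => exact absurd rfl hn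
    | one => exact absurd rfl hmn
    | bit digit n hn' _ =>
      rw [binaryWord_one, one_smul]
      exact hab.disjoint_binaryWord_bit_smul digit hn'
  | bit digit m hm' ih =>
    cases n using Nat.binaryRecFromOne with
    | zero => exact absurd rfl hn
    | one =>
      rw [binaryWord_one, one_smul]
      exact (hab.disjoint_binaryWord_bit_smul digit hm').symm
    | bit digit' n hn' _ =>
      by_cases hdigit : digit = digit'
      · subst hdigit
        rw [binaryWord_bit digit hm', binaryWord_bit digit hn', mul_smul, mul_smul,
          disjoint_smul_set]
        exact ih hm' hn' fun h => hmn (h ▸ rfl)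
      · refine Disjoint.mono (hab.binaryWord_bit_smul_subset digit hm')
          (hab.binaryWord_bit_smul_subset digit' hn') ?_
        cases digit <;> cases digit'
        exacts [absurd rfl hdigit, hab.disjoint_smul, hab.disjoint_smul.symm, absurd rfl hdigit]

theorem disjoint_inv_pow_smul (hab : IsPingPong a b D E) (k : ℕ) :
    Disjoint (b⁻¹ ^ (k + 1) • D) E := by
  have hpow : ∀ k : ℕ, b ^ (k + 1) • E ⊆ E \ D := by
    intro k
    induction k with
    | zero => simpa only [zero_add, pow_one] using hab.right_smul_subset
    | succ k ih =>
      rw [pow_succ', mul_smul]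
      exact (smul_set_mono (ih.trans sdiff_subset)).trans hab.right_smul_subset
  rw [inv_pow, ← disjoint_smul_set (a := b ^ (k + 1)), smul_inv_smul]
  exact disjoint_sdiff_right.mono_right (hpow k)

theorem pairwise_disjoint_intWord_smul (hab : IsPingPong a b D E) :
    Pairwise (Function.onFun Disjoint fun z : ℤ => intWord a b z • D) := by
  refine (pairwise_disjoint_on _).2 fun y z hyz => ?_
  rcases y with m | j <;> rcases z with n | k
  · exact hab.disjoint_binaryWord_smul m.succ_ne_zero n.succ_ne_zero (by grind)
  · exact absurd hyz (by grind)
  · exact (hab.disjoint_inv_pow_smul j).mono_right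
      ((smul_set_mono hab.base_subset).trans (hab.binaryWord_smul_subset _))
  · obtain ⟨i, rfl⟩ : ∃ i, j = k + (i + 1) := ⟨j - k - 1, by grind⟩
    change Disjoint (b⁻¹ ^ (k + (i + 1) + 1) • D) (b⁻¹ ^ (k + 1) • D)
    rw [show k + (i + 1) + 1 = (k + 1) + (i + 1) by omega, pow_add, mul_smul, disjoint_smul_set]
    exact (hab.disjoint_inv_pow_smul i).mono_right hab.base_subset

end IsPingPong

end RigidStabilizer

section Glue

variable {G X ι : Type*} [Group G] [MulAction G X] {K : ι → Set X} {φ : ι → G} {x : X}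

open Classical in
/-- The map acting on each `K i` as `φ i` and fixing all other points. It is meant for pairwise
disjoint `K i`; where they overlap an arbitrary index is chosen. -/
noncomputable def glue (K : ι → Set X) (φ : ι → G) (x : X) : X :=
  if h : ∃ i, x ∈ K i then φ h.choose • x else x

theorem glue_of_mem (hK : Pairwise (Function.onFun Disjoint K)) {i : ι} (hx : x ∈ K i) :
    glue K φ x = φ i • x := by
  have h : ∃ i, x ∈ K i := ⟨i, hx⟩
  rw [glue, dif_pos h, hK.eq (not_disjoint_iff.2 ⟨x, h.choose_spec, hx⟩)]

theorem glue_of_forall_notMem (hx : ∀ i, x ∉ K i) : glue K φ x = x :=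
  dif_neg (not_exists.2 hx)

theorem glue_inv_glue (hK : Pairwise (Function.onFun Disjoint K))
    (hφ : ∀ i, φ i ∈ rigidStabilizer G (K i)) : Function.LeftInverse (glue K φ⁻¹) (glue K φ) := by
  intro x
  by_cases hx : ∃ i, x ∈ K i
  · obtain ⟨i, hi⟩ := hx
    rw [glue_of_mem hK hi, glue_of_mem hK ((smul_mem_iff_of_mem_rigidStabilizer (hφ i)).2 hi),
      Pi.inv_apply, inv_smul_smul]
  · rw [glue_of_forall_notMem (not_exists.1 hx), glue_of_forall_notMem (not_exists.1 hx)]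

theorem glue_glue_inv (hK : Pairwise (Function.onFun Disjoint K))
    (hφ : ∀ i, φ i ∈ rigidStabilizer G (K i)) : Function.RightInverse (glue K φ⁻¹) (glue K φ) := by
  have hinv := glue_inv_glue hK (φ := φ⁻¹) fun i => inv_mem (hφ i)
  rwa [inv_inv] at hinv

theorem isGluable_of_forall_exists_glue_eq (hK : Pairwise (Function.onFun Disjoint K))
    (hglue : ∀ φ : ι → G, (∀ i, φ i ∈ rigidStabilizer G (K i)) →
      ∃ F : G, ∀ x, F • x = glue K φ x) : IsGluable G K := by
  intro φ hφ
  obtain ⟨F, hF⟩ := hglue φ hφ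
  refine ⟨F, mem_rigidStabilizer.2 fun x hx => ?_, fun i x hx => ?_⟩
  · rw [hF, glue_of_forall_notMem (by simpa using hx)]
  · rw [hF, glue_of_mem hK hx]

theorem prod_range_smul_of_forall_notMem {K : ℕ → Set X} {φ : ℕ → G}
    (hφ : ∀ i, φ i ∈ rigidStabilizer G (K i)) {N : ℕ} (hx : ∀ i < N, x ∉ K i) :
    ((List.range N).map φ).prod • x = x := by
  induction N with
  | zero => simp
  | succ N ih =>
    rw [List.prod_range_succ, mul_smul, mem_rigidStabilizer.1 (hφ N) x (hx N N.lt_succ_self)]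
    exact ih fun i hi => hx i (hi.trans N.lt_succ_self)

theorem prod_range_smul_of_mem {K : ℕ → Set X} {φ : ℕ → G}
    (hK : Pairwise (Function.onFun Disjoint K)) (hφ : ∀ i, φ i ∈ rigidStabilizer G (K i))
    {i N : ℕ} (hi : i < N) (hx : x ∈ K i) : ((List.range N).map φ).prod • x = φ i • x := by
  induction N with
  | zero => exact absurd hi i.not_lt_zero
  | succ N ih =>
    rw [List.prod_range_succ, mul_smul]
    rcases (Nat.lt_succ_iff.1 hi).eq_or_lt with rfl | hiN
    · refine prod_range_smul_of_forall_notMem hφ fun j hj => ?_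
      exact disjoint_left.1 (hK hj.ne') ((smul_mem_iff_of_mem_rigidStabilizer (hφ i)).2 hx)
    · rw [mem_rigidStabilizer.1 (hφ N) x (disjoint_left.1 (hK hiN.ne) hx), ih hiN]

end Glue

section GlueOrderIso

variable {α ι : Type*} [LinearOrder α] {K : ι → Set α}

theorem strictMono_glue (hK : Pairwise (Function.onFun Disjoint K)) {φ : ι → α ≃o α}
    (hφ : ∀ i, φ i ∈ rigidStabilizer (α ≃o α) (K i)) : StrictMono (glue K φ) := by
  have lt_glue : ∀ x z, z < x → (∀ i, x ∈ K i → z ∉ K i) → z < glue K φ x := by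
    intro x z hzx hz
    by_cases hx : ∃ i, x ∈ K i
    · obtain ⟨i, hi⟩ := hx
      rw [glue_of_mem hK hi, ← mem_rigidStabilizer.1 (hφ i) z (hz i hi)]
      exact (φ i).strictMono hzx
    · rwa [glue_of_forall_notMem (not_exists.1 hx)]
  intro x y hxy
  by_cases hx : ∃ i, x ∈ K i
  · obtain ⟨i, hi⟩ := hx
    by_cases hyi : y ∈ K i
    · rw [glue_of_mem hK hi, glue_of_mem hK hyi]
      exact (φ i).strictMono hxy
    · rw [glue_of_mem hK hi]
      refine lt_glue y _ ?_ fun j hyj hj => ?_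
      · exact ((φ i).strictMono hxy).trans_eq (mem_rigidStabilizer.1 (hφ i) y hyi)
      · have hij := hK.eq (not_disjoint_iff.2
          ⟨_, (smul_mem_iff_of_mem_rigidStabilizer (hφ i)).2 hi, hj⟩)
        exact hyi (hij ▸ hyj)
  · rw [glue_of_forall_notMem (not_exists.1 hx)]
    exact lt_glue y x hxy fun i _ hi => hx ⟨i, hi⟩

theorem isGluable_orderIso (hK : Pairwise (Function.onFun Disjoint K)) :
    IsGluable (α ≃o α) K :=
  isGluable_of_forall_exists_glue_eq hK fun _ hφ =>
    ⟨(strictMono_glue hK hφ).orderIsoOfRightInverse _ _ (glue_glue_inv hK hφ), fun _ => rfl⟩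

end GlueOrderIso

section GlueHomeomorph

instance {X : Type*} [TopologicalSpace X] : MulAction (X ≃ₜ X) X where
  smul g x := g x
  one_smul _ := rfl
  mul_smul _ _ _ := rfl

instance {X : Type*} [TopologicalSpace X] : FaithfulSMul (X ≃ₜ X) X where
  eq_of_smul_eq_smul := Homeomorph.ext

variable {X : Type*} [PseudoMetricSpace X] {K : ℕ → Set X}

theorem tendstoUniformly_prod_range_smul (hK : Pairwise (Function.onFun Disjoint K))
    (hdiam : Tendsto (fun i => Metric.ediam (K i)) atTop (𝓝 0)) {φ : ℕ → X ≃ₜ X}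
    (hφ : ∀ i, φ i ∈ rigidStabilizer (X ≃ₜ X) (K i)) :
    TendstoUniformly (fun N => ⇑((List.range N).map φ).prod) (glue K φ) atTop := by
  refine EMetric.tendstoUniformly_iff.2 fun ε hε => ?_
  obtain ⟨N, hN⟩ := eventually_atTop.1 ((tendsto_order.1 hdiam).2 ε hε)
  filter_upwards [eventually_ge_atTop N] with n hn x
  change edist (glue K φ x) (((List.range n).map φ).prod • x) < ε
  by_cases hx : ∃ i, x ∈ K i
  · obtain ⟨i, hi⟩ := hx
    rw [glue_of_mem hK hi]
    rcases lt_or_ge i n with hin | hin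
    · rwa [prod_range_smul_of_mem hK hφ hin hi, edist_self]
    · rw [prod_range_smul_of_forall_notMem hφ fun j hj =>
        disjoint_left.1 (hK (hj.trans_le hin).ne') hi]
      exact (Metric.edist_le_ediam_of_mem ((smul_mem_iff_of_mem_rigidStabilizer (hφ i)).2 hi)
        hi).trans_lt (hN i (hn.trans hin))
  · rwa [glue_of_forall_notMem (not_exists.1 hx),
      prod_range_smul_of_forall_notMem hφ fun i _ hi => hx ⟨i, hi⟩, edist_self]

theorem continuous_glue (hK : Pairwise (Function.onFun Disjoint K))
    (hdiam : Tendsto (fun i => Metric.ediam (K i)) atTop (𝓝 0)) {φ : ℕ → X ≃ₜ X}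
    (hφ : ∀ i, φ i ∈ rigidStabilizer (X ≃ₜ X) (K i)) : Continuous (glue K φ) :=
  (tendstoUniformly_prod_range_smul hK hdiam hφ).continuous
    (Frequently.of_forall fun N => ((List.range N).map φ).prod.continuous)

theorem isGluable_homeomorph (hK : Pairwise (Function.onFun Disjoint K))
    (hdiam : Tendsto (fun i => Metric.ediam (K i)) atTop (𝓝 0)) : IsGluable (X ≃ₜ X) K :=
  isGluable_of_forall_exists_glue_eq hK fun φ hφ =>
    ⟨{ toFun := glue K φ
       invFun := glue K φ⁻¹
       left_inv := glue_inv_glue hK hφ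
       right_inv := glue_glue_inv hK hφ
       continuous_toFun := continuous_glue hK hdiam hφ
       continuous_invFun := continuous_glue hK hdiam fun i => inv_mem (hφ i) }, fun _ => rfl⟩

end GlueHomeomorph

section OrderIsoConstructions

variable {α : Type*} [LinearOrder α]

/-- The pointwise maximum of two order automorphisms; its inverse is the minimum of the
inverses. -/
def supOrderIso (e f : α ≃o α) : α ≃o α :=
  StrictMono.orderIsoOfRightInverse (fun x => e x ⊔ f x)
    (fun _ _ hxy => max_lt_max (e.strictMono hxy) (f.strictMono hxy))
    (fun y => e.symm y ⊓ f.symm y) fun y => by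
      rcases le_total (e.symm y) (f.symm y) with h | h
      · simpa only [inf_eq_left.2 h, e.apply_symm_apply, sup_eq_left] using f.le_symm_apply.1 h
      · simpa only [inf_eq_right.2 h, f.apply_symm_apply, sup_eq_right] using e.le_symm_apply.1 h

/-- The pointwise minimum of two order automorphisms. -/
def infOrderIso (e f : α ≃o α) : α ≃o α := (supOrderIso e.symm f.symm).symm

/-- The affine order automorphism of `ℝ` of slope `c` sending `p` to `q`. -/
noncomputable def affineOrderIso (p q c : ℝ) (hc : 0 < c) : ℝ ≃o ℝ :=
  ((OrderIso.subRight p).trans (OrderIso.mulLeft₀ c hc)).trans (OrderIso.addLeft q)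

theorem exists_orderIso_push {p x y q : ℝ} (hpx : p < x) (hxy : x ≤ y) (hyq : y < q) :
    ∃ g ∈ rigidStabilizer (ℝ ≃o ℝ) (Ioo p q), (∀ t, t ≤ g t) ∧
      ∀ t ∈ Icc p x, g t = p + (y - p) / (x - p) * (t - p) := by
  set c := (y - p) / (x - p)
  set c' := (q - y) / (q - x)
  have hcx : c * (x - p) = y - p := div_mul_cancel₀ _ (by linarith)
  have hcx' : c' * (q - x) = q - y := div_mul_cancel₀ _ (by linarith)
  have hc : 1 ≤ c := (one_le_div (by linarith)).2 (by linarith)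
  have hc' : c' ≤ 1 := (div_le_one (by linarith)).2 (by linarith)
  have hc'pos : 0 < c' := div_pos (by linarith) (by linarith)
  refine ⟨supOrderIso 1 (infOrderIso (affineOrderIso p p c (one_pos.trans_le hc))
    (affineOrderIso q q c' hc'pos)), mem_rigidStabilizer.2 fun t ht => ?_,
    fun t => le_sup_left, fun t ht => ?_⟩
  · refine sup_eq_left.2 ?_
    rcases le_or_gt t p with htp | htp
    · refine inf_le_left.trans ?_
      change p + c * (t - p) ≤ t
      nlinarith
    · have hqt : q ≤ t := not_lt.1 fun h => ht ⟨htp, h⟩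
      refine inf_le_right.trans ?_
      change q + c' * (t - q) ≤ t
      nlinarith
  · have hlines : p + c * (t - p) ≤ q + c' * (t - q) := by nlinarith [ht.2]
    have hid : t ≤ p + c * (t - p) := by nlinarith [ht.1]
    exact (congrArg (t ⊔ ·) (inf_eq_left.2 hlines)).trans (sup_eq_right.2 hid)

end OrderIsoConstructions

section LocalContraction

/-- `g` contracts the ball of radius `r` around its fixed point `p` by the factor `10` and is
supported in the ball of radius `2 * r`. -/
structure IsLocalContraction {X : Type*} [PseudoMetricSpace X] (g : X ≃ₜ X) (p : X) (r : ℝ) :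
    Prop where
  apply_center : g p = p
  dist_apply_le : ∀ x ∈ Metric.closedBall p r, ∀ y ∈ Metric.closedBall p r,
    dist (g x) (g y) ≤ dist x y / 10
  mem_rigidStabilizer : g ∈ rigidStabilizer (X ≃ₜ X) (Metric.closedBall p (2 * r))

section Radial

variable {X V : Type*} [MetricSpace X] [NormedAddCommGroup V] [NormedSpace ℝ V] {ι : X → V}
  {p : X} {m m' : X → X} {r c : ℝ} {η : ℝ ≃o ℝ}

/-- Seen through the embedding `ι`, the map `m` moves every point along its ray from `p`, changing
its distance `t` to `p` into `η t`. -/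
def IsRadialMap (ι : X → V) (p : X) (η : ℝ ≃o ℝ) (m : X → X) : Prop :=
  ∀ x, ∃ k > 0, ι (m x) = ι p + k • (ι x - ι p) ∧ k * dist x p = η (dist x p)

theorem exists_continuous_mul_eq (hc : 0 < c) (hr : 0 < r) (hη : ∀ t ∈ Icc 0 r, η t = c * t) :
    ∃ k : ℝ → ℝ, Continuous k ∧ (∀ t, 0 < k t) ∧ ∀ t, 0 ≤ t → k t * t = η t := by
  have hmax : ∀ t, 0 < max t r := fun t => hr.trans_le (le_max_right t r)
  have hηr : η r = c * r := hη r ⟨hr.le, le_rfl⟩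
  refine ⟨fun t => η (max t r) / max t r, ?_, fun t => div_pos ?_ (hmax t), fun t ht => ?_⟩
  · exact (η.continuous.comp (by fun_prop)).div (by fun_prop) fun t => (hmax t).ne'
  · exact (hηr ▸ mul_pos hc hr).trans_le (η.monotone (le_max_right t r))
  · rcases le_total t r with htr | htr
    · simp only [max_eq_right htr, hηr, hη t ⟨ht, htr⟩]
      field_simp
    · simp only [max_eq_left htr]
      exact div_mul_cancel₀ _ (hr.trans_le htr).ne'

theorem exists_isRadialMap (hι : Isometry ι)
    (hcone : ∀ x, ∀ t : ℝ, 0 < t → ∃ y, ι y = ι p + t • (ι x - ι p)) (hc : 0 < c) (hr : 0 < r)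
    (hη : ∀ t ∈ Icc 0 r, η t = c * t) : ∃ m, Continuous m ∧ IsRadialMap ι p η m := by
  obtain ⟨k, hkcont, hkpos, hk⟩ := exists_continuous_mul_eq hc hr hη
  choose m hm using fun x => hcone x (k (dist x p)) (hkpos _)
  refine ⟨m, ?_, fun x => ⟨_, hkpos _, hm x, hk _ dist_nonneg⟩⟩
  rw [hι.isEmbedding.continuous_iff, show ι ∘ m = _ from funext hm]
  have hιcont := hι.continuous
  fun_prop

theorem IsRadialMap.leftInverse (hι : Isometry ι) (hm : IsRadialMap ι p η m)
    (hm' : IsRadialMap ι p η.symm m') : Function.LeftInverse m' m := by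
  intro x
  obtain ⟨k, hkpos, hmx, hk⟩ := hm x
  obtain ⟨l, -, hm'x, hl⟩ := hm' (m x)
  have hdist : dist (m x) p = k * dist x p := by
    rw [← hι.dist_eq, hmx, dist_self_add_left, norm_smul, ← dist_eq_norm, hι.dist_eq,
      Real.norm_of_nonneg hkpos.le]
  rw [hdist, hk, η.symm_apply_apply, ← hk, ← mul_assoc] at hl
  apply hι.injective
  rw [hm'x, hmx, add_sub_cancel_left, smul_smul]
  rcases eq_or_ne x p with rfl | hxp
  · simp only [sub_self, smul_zero, add_zero]
  · rw [mul_right_cancel₀ (dist_ne_zero.2 hxp) (hl.trans (one_mul _).symm), one_smul,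
      add_sub_cancel]

theorem IsRadialMap.apply_eq (hm : IsRadialMap ι p η m) {x : X}
    (hx : η (dist x p) = c * dist x p) : ι (m x) = ι p + c • (ι x - ι p) := by
  obtain ⟨k, -, hmx, hk⟩ := hm x
  rcases eq_or_ne x p with rfl | hxp
  · rw [hmx, sub_self, smul_zero, smul_zero]
  · rw [hmx, mul_right_cancel₀ (dist_ne_zero.2 hxp) (hk.trans hx)]

theorem exists_orderIso_tenfold_contraction (hr : 0 < r) :
    ∃ η : ℝ ≃o ℝ, (∀ t ∈ Icc 0 r, η t = 1 / 10 * t) ∧ (∀ t ∈ Icc 0 (r / 10), η.symm t = 10 * t) ∧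
      ∀ t, 2 * r ≤ t → η t = t := by
  obtain ⟨g, hg, -, hglin⟩ := exists_orderIso_push (p := 0) (x := r / 10) (y := r) (q := 2 * r)
    (by positivity) (by linarith) (by linarith)
  have hg10 : ∀ t ∈ Icc 0 (r / 10), g t = 10 * t := by
    intro t ht
    rw [hglin t ht]
    simp only [sub_zero, zero_add]
    field_simp
  refine ⟨g.symm, fun t ht => ?_, hg10, fun t ht => ?_⟩
  · rw [OrderIso.symm_apply_eq, hg10 _ ⟨by linarith [ht.1], by linarith [ht.2]⟩]
    ring
  · exact mem_rigidStabilizer.1 (inv_mem hg) t fun h => ht.not_gt h.2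

theorem exists_isLocalContraction (hι : Isometry ι)
    (hcone : ∀ x, ∀ t : ℝ, 0 < t → ∃ y, ι y = ι p + t • (ι x - ι p)) (hr : 0 < r) :
    ∃ g : X ≃ₜ X, IsLocalContraction g p r := by
  obtain ⟨η, hη, hηsymm, hηid⟩ := exists_orderIso_tenfold_contraction hr
  obtain ⟨m, hmcont, hm⟩ := exists_isRadialMap hι hcone (by norm_num) hr hη
  obtain ⟨m', hm'cont, hm'⟩ :=
    exists_isRadialMap hι hcone (by norm_num) (div_pos hr (by norm_num)) hηsymm
  have hball : ∀ x ∈ Metric.closedBall p r, ι (m x) = ι p + (1 / 10 : ℝ) • (ι x - ι p) :=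
    fun x hx => hm.apply_eq (hη _ ⟨dist_nonneg, hx⟩)
  refine ⟨⟨⟨m, m', hm.leftInverse hι hm', hm'.leftInverse hι hm⟩, hmcont, hm'cont⟩, ?_, ?_, ?_⟩
  · refine hι.injective ((hball p (Metric.mem_closedBall_self hr.le)).trans ?_)
    rw [sub_self, smul_zero, add_zero]
  · intro x hx y hy
    change dist (m x) (m y) ≤ _
    rw [← hι.dist_eq, hball x hx, hball y hy, dist_add_left, dist_smul₀, dist_sub_right,
      hι.dist_eq, Real.norm_of_nonneg (by norm_num)]
    exact (one_div_mul_eq_div _ _).le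
  · refine mem_rigidStabilizer.2 fun x hx => hι.injective ?_
    have hid : η (dist x p) = 1 * dist x p :=
      (hηid _ (not_le.1 (Metric.mem_closedBall.not.1 hx)).le).trans (one_mul _).symm
    exact (hm.apply_eq hid).trans (by rw [one_smul, add_sub_cancel])

end Radial

variable {X : Type*} [PseudoMetricSpace X] {g a b s : X ≃ₜ X} {p : X} {r ρ : ℝ} {γ : ℝ → X}

theorem closedBall_subset_of_isometry (hγ : Isometry γ) {σ τ ρ ρ' : ℝ} (h : ρ + |σ - τ| ≤ ρ') :
    Metric.closedBall (γ σ) ρ ⊆ Metric.closedBall (γ τ) ρ' :=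
  Metric.closedBall_subset_closedBall' (by rwa [hγ.dist_eq, Real.dist_eq])

theorem closedBall_disjoint_of_isometry (hγ : Isometry γ) {σ τ ρ ρ' : ℝ}
    (h : ρ + ρ' < |σ - τ|) : Disjoint (Metric.closedBall (γ σ) ρ) (Metric.closedBall (γ τ) ρ') :=
  Metric.closedBall_disjoint_closedBall (by rwa [hγ.dist_eq, Real.dist_eq])

theorem tendsto_ediam_zero_of_subset_closedBall {K : ℕ → Set X} {p : ℕ → X} {ρ : ℕ → ℝ}
    (hK : ∀ n, K n ⊆ Metric.closedBall (p n) (ρ n)) (hρ : Tendsto ρ atTop (𝓝 0)) :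
    Tendsto (fun n => Metric.ediam (K n)) atTop (𝓝 0) := by
  have hlim : Tendsto (fun n => ENNReal.ofReal (2 * ρ n)) atTop (𝓝 0) := by
    simpa using ENNReal.tendsto_ofReal (hρ.const_mul 2)
  refine tendsto_of_tendsto_of_tendsto_of_le_of_le tendsto_const_nhds hlim (fun _ => zero_le)
    fun n => Metric.ediam_le fun x hx y hy => ?_
  rw [edist_dist]
  refine ENNReal.ofReal_le_ofReal ((dist_triangle_right x y (p n)).trans ?_)
  rw [two_mul]
  exact add_le_add (hK n hx) (hK n hy)

namespace IsLocalContraction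

theorem smul_closedBall_subset (hg : IsLocalContraction g p r) (hρ : ρ ≤ r) :
    g • Metric.closedBall p ρ ⊆ Metric.closedBall p (ρ / 10) := by
  rintro _ ⟨x, hx, rfl⟩
  have hx' : dist x p ≤ ρ := hx
  have hr : 0 ≤ r := dist_nonneg.trans (hx'.trans hρ)
  have hle := hg.dist_apply_le x (hx'.trans hρ) p (Metric.mem_closedBall_self hr)
  rw [hg.apply_center] at hle
  exact hle.trans (by gcongr)

theorem pow_smul_closedBall_subset (hg : IsLocalContraction g p r) (hr : 0 ≤ r) (n : ℕ) :
    g ^ n • Metric.closedBall p r ⊆ Metric.closedBall p (r * (1 / 10) ^ n) := by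
  induction n with
  | zero => simp
  | succ n ih =>
    have hle : r * (1 / 10) ^ n ≤ r :=
      mul_le_of_le_one_right hr (pow_le_one₀ (by norm_num) (by norm_num))
    have hstep : r * (1 / 10) ^ n / 10 = r * (1 / 10) ^ (n + 1) := by ring
    rw [pow_succ', mul_smul]
    exact (smul_set_mono ih).trans (hstep ▸ hg.smul_closedBall_subset hle)

-- Appending a digit multiplies `n` by at most `3`, which a single contraction outweighs.
theorem mul_dist_binaryWord_smul_le {q : X} {E : Set X} (ha : IsLocalContraction a p r)
    (hb : IsLocalContraction b q r) (hEp : E ⊆ Metric.closedBall p r)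
    (hEq : E ⊆ Metric.closedBall q r) (hE : ∀ n, binaryWord a b n • E ⊆ E) {n : ℕ} (hn : n ≠ 0)
    {x y : X} (hx : x ∈ E) (hy : y ∈ E) :
    n * dist (binaryWord a b n • x) (binaryWord a b n • y) ≤ dist x y := by
  induction n using Nat.binaryRecFromOne with
  | zero => exact absurd rfl hn
  | one => simp [binaryWord_one]
  | bit digit n hn' ih =>
    rw [binaryWord_bit digit hn', mul_smul, mul_smul]
    have hx' := hE n (smul_mem_smul_set hx)
    have hy' := hE n (smul_mem_smul_set hy)
    generalize binaryWord a b n • x = x' at hx' ih ⊢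
    generalize binaryWord a b n • y = y' at hy' ih ⊢
    have hcontr : dist (cond digit b a • x') (cond digit b a • y') ≤ dist x' y' / 10 := by
      cases digit
      · exact ha.dist_apply_le x' (hEp hx') y' (hEp hy')
      · exact hb.dist_apply_le x' (hEq hx') y' (hEq hy')
    have hbit : ((Nat.bit digit n : ℕ) : ℝ) ≤ 3 * n := by
      exact_mod_cast show Nat.bit digit n ≤ 3 * n by cases digit <;> simp [Nat.bit] <;> omega
    calc (Nat.bit digit n : ℕ) * dist (cond digit b a • x') (cond digit b a • y')
        ≤ 3 * n * (dist x' y' / 10) := by gcongr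
      _ ≤ n * dist x' y' := by
          have hnonneg : 0 ≤ (n : ℝ) * dist x' y' := by positivity
          linarith
      _ ≤ dist x y := ih hn'

theorem isPingPong (hγ : Isometry γ) (ha : IsLocalContraction a (γ (-50)) 200)
    (hb : IsLocalContraction b (γ 50) 200) :
    IsPingPong a b (Metric.closedBall (γ 2) 6) (Metric.closedBall (γ 0) 100) := by
  have haE : a • Metric.closedBall (γ 0) 100 ⊆ Metric.closedBall (γ (-50)) 15 :=
    (smul_set_mono (closedBall_subset_of_isometry hγ (by norm_num))).trans
      ((ha.smul_closedBall_subset (ρ := 150) (by norm_num)).trans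
        (closedBall_subset_of_isometry hγ (by norm_num)))
  have hbE : b • Metric.closedBall (γ 0) 100 ⊆ Metric.closedBall (γ 50) 15 :=
    (smul_set_mono (closedBall_subset_of_isometry hγ (by norm_num))).trans
      ((hb.smul_closedBall_subset (ρ := 150) (by norm_num)).trans
        (closedBall_subset_of_isometry hγ (by norm_num)))
  exact
    { base_subset := closedBall_subset_of_isometry hγ (by norm_num)
      left_smul_subset := haE.trans
        (subset_sdiff.2 ⟨closedBall_subset_of_isometry hγ (by norm_num),
          closedBall_disjoint_of_isometry hγ (by norm_num)⟩)
      right_smul_subset := hbE.trans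
        (subset_sdiff.2 ⟨closedBall_subset_of_isometry hγ (by norm_num),
          closedBall_disjoint_of_isometry hγ (by norm_num)⟩)
      disjoint_smul := (closedBall_disjoint_of_isometry hγ (by norm_num)).mono haE hbE }

theorem isGluable_binaryWord_smul (hγ : Isometry γ) (ha : IsLocalContraction a (γ (-50)) 200)
    (hb : IsLocalContraction b (γ 50) 200) :
    IsGluable (X ≃ₜ X) fun n => binaryWord a b (n + 1) • Metric.closedBall (γ 2) 6 := by
  have hab := isPingPong hγ ha hb
  have hE : ∀ τ : ℝ, |τ| ≤ 50 →
      Metric.closedBall (γ 0) 100 ⊆ Metric.closedBall (γ τ) 200 := fun τ hτ =>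
    closedBall_subset_of_isometry hγ (by rw [zero_sub, abs_neg]; linarith)
  refine isGluable_homeomorph
    (fun m n hmn => hab.disjoint_binaryWord_smul m.succ_ne_zero n.succ_ne_zero (by omega))
    (tendsto_ediam_zero_of_subset_closedBall
      (p := fun n => binaryWord a b (n + 1) • γ 2) (ρ := fun n => 6 * (1 / ((n : ℝ) + 1)))
      (fun n => ?_) (by simpa using tendsto_one_div_add_atTop_nhds_zero_nat.const_mul (6 : ℝ)))
  rintro _ ⟨x, hx, rfl⟩
  have hdist := mul_dist_binaryWord_smul_le ha hb (hE _ (by norm_num)) (hE _ (by norm_num))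
    hab.binaryWord_smul_subset n.succ_ne_zero (hab.base_subset hx)
    (hab.base_subset (Metric.mem_closedBall_self (by norm_num)))
  rw [Metric.mem_closedBall, mul_one_div, le_div_iff₀' (by positivity)]
  exact_mod_cast hdist.trans hx

theorem pairwise_disjoint_pow_smul_closedBall (hγ : Isometry γ)
    (hs : IsLocalContraction s (γ 2) 3) :
    Pairwise (Function.onFun Disjoint fun n : ℕ => s ^ n • Metric.closedBall (γ 0) 1) :=
  pairwise_disjoint_pow_smul (C := Metric.closedBall (γ 2) (3 / 10))
    ((smul_set_mono (closedBall_subset_of_isometry hγ (by norm_num))).trans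
      (hs.smul_closedBall_subset le_rfl))
    ((hs.smul_closedBall_subset (by norm_num)).trans
      (Metric.closedBall_subset_closedBall (by norm_num)))
    (closedBall_disjoint_of_isometry hγ (by norm_num))

theorem isGluable_pow_smul_closedBall (hγ : Isometry γ) (hs : IsLocalContraction s (γ 2) 3) :
    IsGluable (X ≃ₜ X) fun n : ℕ => s ^ n • Metric.closedBall (γ 0) 1 := by
  refine isGluable_homeomorph (pairwise_disjoint_pow_smul_closedBall hγ hs)
    (tendsto_ediam_zero_of_subset_closedBall (fun n =>
      (smul_set_mono (closedBall_subset_of_isometry hγ (by norm_num))).trans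
        (hs.pow_smul_closedBall_subset (by norm_num) n)) ?_)
  simpa using (tendsto_pow_atTop_nhds_zero_of_lt_one (r := (1 / 10 : ℝ)) (by norm_num)
    (by norm_num)).const_mul 3

end IsLocalContraction

theorem exists_finset_forall_mem_wordBall_of_isLocalContraction (hγ : Isometry γ)
    (hcontr : ∀ τ r : ℝ, 0 < r → ∃ g : X ≃ₜ X, IsLocalContraction g (γ τ) r) {f : ℕ → X ≃ₜ X}
    (hf : ∀ n, f n ∈ rigidStabilizer (X ≃ₜ X) (Metric.closedBall (γ 0) 1)) :
    ∃ S : Finset (X ≃ₜ X), S.card ≤ 5 ∧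
      (∀ g ∈ S, g ∈ rigidStabilizer (X ≃ₜ X) (Metric.closedBall (γ 0) 450)) ∧
      ∀ n, f n ∈ wordBall S (4 * Nat.log 2 (n + 1) + 4) := by
  obtain ⟨a, ha⟩ := hcontr (-50) 200 (by norm_num)
  obtain ⟨b, hb⟩ := hcontr 50 200 (by norm_num)
  obtain ⟨s, hs⟩ := hcontr 2 3 (by norm_num)
  have hs6 : s ∈ rigidStabilizer (X ≃ₜ X) (Metric.closedBall (γ 2) 6) :=
    rigidStabilizer_mono (Metric.closedBall_subset_closedBall (by norm_num)) hs.mem_rigidStabilizer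
  have hBD : Metric.closedBall (γ 0) 1 ⊆ Metric.closedBall (γ 2) 6 :=
    closedBall_subset_of_isometry hγ (by norm_num)
  obtain ⟨F, hFsupp, hF⟩ := exists_forall_eq_commutator hs6 hBD
    (IsLocalContraction.pairwise_disjoint_pow_smul_closedBall hγ hs)
    (IsLocalContraction.isGluable_pow_smul_closedBall hγ hs)
    (IsLocalContraction.isGluable_binaryWord_smul hγ ha hb) hf
  have hab := IsLocalContraction.isPingPong hγ ha hb
  classical
  refine ⟨{a, b, s, F}, Finset.card_le_four.trans (by norm_num), ?_, fun n => ?_⟩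
  · simp only [Finset.mem_insert, Finset.mem_singleton, forall_eq_or_imp, forall_eq]
    refine ⟨rigidStabilizer_mono (closedBall_subset_of_isometry hγ (by norm_num))
        ha.mem_rigidStabilizer,
      rigidStabilizer_mono (closedBall_subset_of_isometry hγ (by norm_num)) hb.mem_rigidStabilizer,
      rigidStabilizer_mono (closedBall_subset_of_isometry hγ (by norm_num)) hs6,
      rigidStabilizer_mono (iUnion_subset fun n => ?_) hFsupp⟩
    exact (smul_set_mono hab.base_subset).trans
      ((hab.binaryWord_smul_subset _).trans (closedBall_subset_of_isometry hγ (by norm_num)))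
  · rw [hF n]
    exact commutator_conj_mem_wordBall (binaryWord_mem_wordBall (mem_wordBall_one (by simp))
      (mem_wordBall_one (by simp)) _) (mem_wordBall_one (by simp)) (mem_wordBall_one (by simp))

end LocalContraction

section Blocks

variable {l u l' u' p q x y : ℝ} {f g T : ℝ ≃o ℝ} {m : ℕ}

/-- The union of the translates of the interval `(l, u)` by the nonnegative multiples of `24`. -/
def blocks (l u : ℝ) : Set ℝ := ⋃ k : ℕ, Ioo (24 * k + l) (24 * k + u)

theorem mem_blocks : x ∈ blocks l u ↔ ∃ k : ℕ, 24 * k + l < x ∧ x < 24 * k + u :=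
  mem_iUnion

theorem blocks_mono (hl : l' ≤ l) (hu : u ≤ u') : blocks l u ⊆ blocks l' u' :=
  iUnion_mono fun _ => Ioo_subset_Ioo (by gcongr) (by gcongr)

theorem disjoint_blocks (hl : -12 ≤ l) (hu : u ≤ l') (hu' : u' ≤ 12) :
    Disjoint (blocks l u) (blocks l' u') := by
  refine disjoint_left.2 fun x hx hx' => ?_
  obtain ⟨j, hj, hj'⟩ := mem_blocks.1 hx
  obtain ⟨k, hk, hk'⟩ := mem_blocks.1 hx'
  have hkj : k < j := by exact_mod_cast (show (k : ℝ) < j by linarith)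
  have hkj' : (k : ℝ) + 1 ≤ j := by exact_mod_cast hkj
  linarith

theorem add_notMem_blocks (k : ℕ) (hu : u ≤ x + 24) (hl : x ≤ l + 24) (hx : x ∉ Ioo l u) :
    24 * k + x ∉ blocks l u := by
  rw [mem_blocks]
  rintro ⟨j, hj, hj'⟩
  have hjk : j < k + 1 := by exact_mod_cast (show (j : ℝ) < k + 1 by linarith)
  have hkj : k < j + 1 := by exact_mod_cast (show (k : ℝ) < j + 1 by linarith)
  obtain rfl : j = k := by omega
  exact hx ⟨by linarith, by linarith⟩

theorem notMem_blocks_of_le (hx : x ≤ l) : x ∉ blocks l u := by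
  rw [mem_blocks]
  rintro ⟨k, hk, -⟩
  have := k.cast_nonneg (α := ℝ)
  linarith

theorem exists_mem_Icc_of_notMem_blocks (hx : x ∉ blocks l u) (hlx : l < x) :
    ∃ k : ℕ, x ∈ Icc (24 * k + u) (24 * k + 24 + l) := by
  obtain ⟨k, hk⟩ := Nat.exists_eq_succ_of_ne_zero
    (Nat.ceil_pos.2 (div_pos (sub_pos.2 hlx) (by norm_num : (0 : ℝ) < 24))).ne'
  have hlt : (k : ℝ) < (x - l) / 24 := Nat.lt_ceil.1 (by omega)
  have hle : (x - l) / 24 ≤ (k.succ : ℕ) := (Nat.le_ceil _).trans_eq (congrArg _ hk)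
  push_cast at hle
  refine ⟨k, not_lt.1 fun hxu => hx (mem_blocks.2 ⟨k, ?_, hxu⟩), ?_⟩ <;> linarith

theorem smul_blocks_subset (hl : ∀ k : ℕ, 24 * k + l' ≤ g (24 * k + l))
    (hu : ∀ k : ℕ, g (24 * k + u) ≤ 24 * k + u') : g • blocks l u ⊆ blocks l' u' := by
  rintro _ ⟨x, hx, rfl⟩
  obtain ⟨k, hk, hk'⟩ := mem_blocks.1 hx
  exact mem_blocks.2 ⟨k, (hl k).trans_lt (g.strictMono hk), (g.strictMono hk').trans_le (hu k)⟩

theorem exists_orderIso_push_blocks (hp : -12 ≤ p) (hpx : p < x) (hxy : x ≤ y) (hyq : y < q)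
    (hq : q ≤ 12) : ∃ g ∈ rigidStabilizer (ℝ ≃o ℝ) (blocks p q), (∀ t, t ≤ g t) ∧
      ∀ k : ℕ, g (24 * k + x) = 24 * k + y := by
  choose φ hφsupp hφle hφ using fun k : ℕ => exists_orderIso_push (p := 24 * (k : ℝ) + p)
    (x := 24 * k + x) (y := 24 * k + y) (q := 24 * k + q) (by gcongr) (by gcongr) (by gcongr)
  have hdisj : Pairwise (Function.onFun Disjoint fun k : ℕ =>
      Ioo (24 * (k : ℝ) + p) (24 * k + q)) := by
    refine (pairwise_disjoint_on _).2 fun j k hjk => disjoint_left.2 fun t ht ht' => ?_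
    have hjk' : (j : ℝ) + 1 ≤ k := by exact_mod_cast hjk
    linarith [ht.2, ht'.1]
  obtain ⟨g, hgsupp, hg⟩ := isGluable_orderIso hdisj φ hφsupp
  refine ⟨g, hgsupp, fun t => ?_, fun k => ?_⟩
  · by_cases ht : t ∈ blocks p q
    · obtain ⟨k, hk⟩ := mem_iUnion.1 ht
      exact (hφle k t).trans_eq (hg k t hk).symm
    · exact (mem_rigidStabilizer.1 hgsupp t ht).ge
  · have hpush := hφ k (24 * k + x) ⟨by linarith, le_rfl⟩
    refine (hg k _ ⟨by linarith, by linarith⟩).trans (hpush.trans ?_)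
    rw [div_mul_cancel₀ _ (by linarith), add_sub_cancel]

theorem exists_isPingPong_blocks : ∃ a ∈ rigidStabilizer (ℝ ≃o ℝ) (blocks (-12) 12),
    ∃ b ∈ rigidStabilizer (ℝ ≃o ℝ) (blocks (-12) 12),
      IsPingPong a b (blocks (-8) 8) (blocks (-11) 11) := by
  obtain ⟨a, hasupp, -, ha⟩ := exists_orderIso_push_blocks (p := -11) (x := -8) (y := 11)
    (q := 12) (by norm_num) (by norm_num) (by norm_num) (by norm_num) le_rfl
  obtain ⟨b, hbsupp, -, hb⟩ := exists_orderIso_push_blocks (p := -12) (x := -11) (y := 8)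
    (q := 11) le_rfl (by norm_num) (by norm_num) (by norm_num) (by norm_num)
  have hfix_left : ∀ k : ℕ, a⁻¹ (24 * k + -11) = 24 * k + -11 := fun k =>
    mem_rigidStabilizer.1 (inv_mem hasupp) _
      (add_notMem_blocks k (by norm_num) (by norm_num) left_notMem_Ioo)
  have haE : a⁻¹ • blocks (-11) 11 ⊆ blocks (-11) (-8) :=
    smul_blocks_subset (fun k => (hfix_left k).ge) fun k => (a.symm_apply_eq.2 (ha k).symm).le
  have hbE : b • blocks (-11) 11 ⊆ blocks 8 11 :=
    smul_blocks_subset (fun k => (hb k).ge) fun k =>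
      (mem_rigidStabilizer.1 hbsupp _
        (add_notMem_blocks k (by norm_num) (by norm_num) right_notMem_Ioo)).le
  refine ⟨a⁻¹, rigidStabilizer_mono (blocks_mono (by norm_num) le_rfl) (inv_mem hasupp),
    b, rigidStabilizer_mono (blocks_mono le_rfl (by norm_num)) hbsupp, ?_⟩
  exact
    { base_subset := blocks_mono (by norm_num) (by norm_num)
      left_smul_subset := haE.trans (subset_sdiff.2 ⟨blocks_mono le_rfl (by norm_num),
        disjoint_blocks (by norm_num) le_rfl (by norm_num)⟩)
      right_smul_subset := hbE.trans (subset_sdiff.2 ⟨blocks_mono (by norm_num) le_rfl,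
        (disjoint_blocks (by norm_num) le_rfl (by norm_num)).symm⟩)
      disjoint_smul :=
        (disjoint_blocks (by norm_num) (by norm_num) (by norm_num)).mono haE hbE }

theorem exists_displacing_blocks : ∃ s ∈ rigidStabilizer (ℝ ≃o ℝ) (blocks (-8) 8),
    Pairwise (Function.onFun Disjoint fun n : ℕ => s ^ n • blocks (-7) 7) := by
  obtain ⟨s, hssupp, hsle, hs⟩ := exists_orderIso_push_blocks (p := -8) (x := -7) (y := 7)
    (q := 8) (by norm_num) (by norm_num) (by norm_num) (by norm_num) (by norm_num)
  have hright : ∀ k : ℕ, s (24 * k + 8) ≤ 24 * k + 8 := fun k =>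
    (mem_rigidStabilizer.1 hssupp _
      (add_notMem_blocks k (by norm_num) (by norm_num) right_notMem_Ioo)).le
  refine ⟨s, hssupp, pairwise_disjoint_pow_smul (C := blocks 7 8) ?_ ?_
    (disjoint_blocks (by norm_num) le_rfl (by norm_num))⟩
  · exact (smul_set_mono (blocks_mono le_rfl (by norm_num))).trans
      (smul_blocks_subset (fun k => (hs k).ge) hright)
  · exact smul_blocks_subset (fun k => hsle _) hright

theorem exists_orderIso_shift : ∃ T ∈ rigidStabilizer (ℝ ≃o ℝ) (Ioi (0 : ℝ)),
    ∀ x, 1 ≤ x → T x = x + 12 := by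
  refine ⟨supOrderIso 1 (infOrderIso (affineOrderIso 0 0 13 (by norm_num))
    (affineOrderIso 0 12 1 one_pos)), mem_rigidStabilizer.2 fun x hx => ?_, fun x hx => ?_⟩
  · have hx0 : x ≤ 0 := not_lt.1 hx
    change x ⊔ ((0 + 13 * (x - 0)) ⊓ (12 + 1 * (x - 0))) = x
    exact sup_eq_left.2 (inf_le_left.trans (by linarith))
  · change x ⊔ ((0 + 13 * (x - 0)) ⊓ (12 + 1 * (x - 0))) = x + 12
    rw [inf_eq_right.2 (by linarith), sup_eq_right.2 (by linarith)]
    ring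

/-- From `m` on, `f` pushes no integer beyond a neighbouring integer. -/
def IsAlmostIdFrom (m : ℕ) (f : ℝ ≃o ℝ) : Prop :=
  ∀ j : ℕ, m ≤ j → f j ≤ j + 1 ∧ j ≤ f (j + 1)

theorem pow_apply_of_ge (hT : ∀ x, 1 ≤ x → T x = x + 12) (m : ℕ) (hx : 1 ≤ x) :
    (T ^ m) x = x + 12 * m := by
  induction m with
  | zero => simp
  | succ m ih =>
    rw [pow_succ', RelIso.mul_apply, ih, hT _ (by have := m.cast_nonneg (α := ℝ); linarith)]
    push_cast
    ring

theorem IsAlmostIdFrom.conj_shift (hf : IsAlmostIdFrom m f) (hT : ∀ x, 1 ≤ x → T x = x + 12) :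
    IsAlmostIdFrom 1 ((T ^ m)⁻¹ * f * T ^ m) := by
  intro j hj
  have hj' : (1 : ℝ) ≤ j := by exact_mod_cast hj
  obtain ⟨hright, hleft⟩ := hf (j + 12 * m) (by omega)
  push_cast at hright hleft
  change (T ^ m).symm (f ((T ^ m) j)) ≤ j + 1 ∧ j ≤ (T ^ m).symm (f ((T ^ m) (j + 1)))
  rw [OrderIso.symm_apply_le, OrderIso.le_symm_apply, pow_apply_of_ge hT m hj',
    pow_apply_of_ge hT m (by linarith : (1 : ℝ) ≤ j + 1), add_right_comm]
  exact ⟨hright, hleft⟩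

-- `h` is `f` cut off by a push and an inverse push supported in the blocks.
theorem exists_blocks_cutoff (hf : f ∈ rigidStabilizer (ℝ ≃o ℝ) (Ioi (0 : ℝ)))
    (hf' : IsAlmostIdFrom 1 f) : ∃ h ∈ rigidStabilizer (ℝ ≃o ℝ) (blocks (-7) 7),
      h ∈ rigidStabilizer (ℝ ≃o ℝ) (Ioi (0 : ℝ)) ∧
      ∀ k : ℕ, ∀ x ∈ Icc (24 * (k : ℝ) + 19) (24 * k + 29), h x = f x := by
  obtain ⟨U, hUsupp, hUle, hU⟩ := exists_orderIso_push_blocks (p := -7) (x := -5) (y := 6)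
    (q := 7) (by norm_num) (by norm_num) (by norm_num) (by norm_num) (by norm_num)
  obtain ⟨L, hLsupp, hLle, hL⟩ := exists_orderIso_push_blocks (p := -7) (x := -6) (y := 5)
    (q := 7) (by norm_num) (by norm_num) (by norm_num) (by norm_num) (by norm_num)
  have hLsymm : ∀ t, L.symm t ≤ t := fun t => L.symm_apply_le.2 (hLle t)
  refine ⟨supOrderIso L.symm (infOrderIso f U), mem_rigidStabilizer.2 fun x hx => ?_,
    mem_rigidStabilizer.2 fun x hx => ?_, fun k x hx => ?_⟩
  · have hUx : U x = x := mem_rigidStabilizer.1 hUsupp x hx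
    have hLx : L.symm x = x := mem_rigidStabilizer.1 (inv_mem hLsupp) x hx
    change L.symm x ⊔ (f x ⊓ U x) = x
    rw [hUx, hLx, inf_comm, sup_inf_self]
  · have hfx : f x = x := mem_rigidStabilizer.1 hf x hx
    change L.symm x ⊔ (f x ⊓ U x) = x
    rw [hfx, inf_eq_left.2 (hUle x), sup_eq_right.2 (hLsymm x)]
  · have hupper := (hf' (24 * k + 29) (by omega)).1
    have hlower := (hf' (24 * k + 18) (by omega)).2
    have hU' := (hU (k + 1)).ge.trans (U.monotone (show _ ≤ x by push_cast; linarith [hx.1]))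
    have hL' := (L.symm.monotone (show x ≤ _ by push_cast; linarith [hx.2])).trans_eq
      (L.symm_apply_eq.2 (hL (k + 1)).symm)
    push_cast at hupper hlower hU' hL'
    have hfU : f x ≤ U x := (f.monotone hx.2).trans (hupper.trans (by linarith))
    have hLf : L.symm x ≤ f x := by
      refine hL'.trans (le_trans (by linarith) (hlower.trans ?_))
      exact f.monotone (by linarith [hx.1])
    change L.symm x ⊔ (f x ⊓ U x) = f x
    rw [inf_eq_left.2 hfU, sup_eq_right.2 hLf]

-- Off the blocks, `T` maps into the intervals on which the cut-off `h` agrees with `f`, so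
-- `h⁻¹ * f` is a `T`-conjugate of a map supported in the blocks.
theorem exists_eq_mul_conj_blocks (hT : T ∈ rigidStabilizer (ℝ ≃o ℝ) (Ioi (0 : ℝ)))
    (hT' : ∀ x, 1 ≤ x → T x = x + 12) (hf : f ∈ rigidStabilizer (ℝ ≃o ℝ) (Ioi (0 : ℝ)))
    (hf' : IsAlmostIdFrom 1 f) :
    ∃ h ∈ rigidStabilizer (ℝ ≃o ℝ) (blocks (-7) 7),
      ∃ g ∈ rigidStabilizer (ℝ ≃o ℝ) (blocks (-7) 7), f = h * (T * g * T⁻¹) := by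
  obtain ⟨h, hsupp, hid, hcut⟩ := exists_blocks_cutoff hf hf'
  refine ⟨h, hsupp, T⁻¹ * (h⁻¹ * f) * T, mem_rigidStabilizer.2 fun x hx => ?_, by group⟩
  suffices hTx : f (T x) = h (T x) by
    change T.symm (h.symm (f (T x))) = x
    rw [hTx, h.symm_apply_apply, T.symm_apply_apply]
  rcases le_or_gt x (-7) with hx7 | hx7
  · have hx0 : x ∉ Ioi (0 : ℝ) := fun hpos => by linarith [mem_Ioi.1 hpos]
    have hTx : T x = x := mem_rigidStabilizer.1 hT x hx0
    rw [hTx]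
    exact (mem_rigidStabilizer.1 hf x hx0).trans (mem_rigidStabilizer.1 hid x hx0).symm
  · obtain ⟨k, hk, hk'⟩ := exists_mem_Icc_of_notMem_blocks hx hx7
    rw [hT' x (by have := k.cast_nonneg (α := ℝ); linarith)]
    exact (hcut k _ ⟨by linarith, by linarith⟩).symm

theorem exists_finset_forall_mem_wordBall_blocks {φ : ℤ → ℝ ≃o ℝ}
    (hφ : ∀ z, φ z ∈ rigidStabilizer (ℝ ≃o ℝ) (blocks (-7) 7)) :
    ∃ S : Finset (ℝ ≃o ℝ), S.card ≤ 4 ∧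
      (∀ g ∈ S, g ∈ rigidStabilizer (ℝ ≃o ℝ) (blocks (-12) 12)) ∧
      ∀ z, φ z ∈ wordBall S (4 * intWordLength z + 4) := by
  obtain ⟨a, ha, b, hb, hab⟩ := exists_isPingPong_blocks
  obtain ⟨s, hs, hsdisj⟩ := exists_displacing_blocks
  obtain ⟨F, hFsupp, hF⟩ := exists_forall_eq_commutator hs
    (blocks_mono (by norm_num) (by norm_num)) hsdisj (isGluable_orderIso hsdisj)
    (isGluable_orderIso hab.pairwise_disjoint_intWord_smul) hφ
  have hD : blocks (-8) 8 ⊆ blocks (-12) 12 := blocks_mono (by norm_num) (by norm_num)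
  classical
  refine ⟨{a, b, s, F}, Finset.card_le_four, ?_, fun z => ?_⟩
  · simp only [Finset.mem_insert, Finset.mem_singleton, forall_eq_or_imp, forall_eq]
    refine ⟨ha, hb, rigidStabilizer_mono hD hs,
      rigidStabilizer_mono (iUnion_subset fun z => ?_) hFsupp⟩
    rintro _ ⟨x, hx, rfl⟩
    exact (smul_mem_iff_of_mem_rigidStabilizer (intWord_mem_subgroup ha hb z)).2 (hD hx)
  · rw [hF z]
    exact commutator_conj_mem_wordBall (intWord_mem_wordBall (mem_wordBall_one (by simp))
      (mem_wordBall_one (by simp)) z) (mem_wordBall_one (by simp)) (mem_wordBall_one (by simp))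

theorem exists_finset_forall_mem_wordBall_of_isAlmostIdFrom {f : ℕ → ℝ ≃o ℝ} {m : ℕ → ℕ}
    (hf : ∀ n, f n ∈ rigidStabilizer (ℝ ≃o ℝ) (Ioi (0 : ℝ)))
    (hf' : ∀ n, IsAlmostIdFrom (m n) (f n)) :
    ∃ S : Finset (ℝ ≃o ℝ), S.card ≤ 5 ∧
      (∀ g ∈ S, g ∈ rigidStabilizer (ℝ ≃o ℝ) (Ioi (-12 : ℝ))) ∧ ∀ n : ℕ, f n ∈ wordBall S
        (4 * (intWordLength (2 * n - 2) + intWordLength (2 * n - 1)) + 10 + 2 * m n) := by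
  obtain ⟨T, hT, hT'⟩ := exists_orderIso_shift
  choose h hh g hg hfhg using fun n => exists_eq_mul_conj_blocks hT hT'
    (mul_mem (mul_mem (inv_mem (pow_mem hT (m n))) (hf n)) (pow_mem hT (m n)))
    ((hf' n).conj_shift hT')
  obtain ⟨S, hScard, hSsupp, hS⟩ := exists_finset_forall_mem_wordBall_blocks
    (φ := fun z => if Even z then h (z / 2 + 1).toNat else g (z / 2 + 1).toNat)
    fun z => by split_ifs; exacts [hh _, hg _]
  classical
  refine ⟨insert T S, (Finset.card_insert_le T S).trans (by omega), ?_, fun n => ?_⟩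
  · refine (Finset.forall_mem_insert T S _).2 ⟨
      rigidStabilizer_mono (Ioi_subset_Ioi (by norm_num)) hT,
      fun c hc => rigidStabilizer_mono (fun x hx => ?_) (hSsupp c hc)⟩
    exact not_le.1 fun hle => notMem_blocks_of_le hle hx
  · have hTmem : T ∈ wordBall ((insert T S : Finset _) : Set (ℝ ≃o ℝ)) 1 :=
      mem_wordBall_one (Finset.mem_insert_self T S)
    have hSS' : (S : Set (ℝ ≃o ℝ)) ⊆ (insert T S : Finset _) := Finset.subset_insert T S
    have hh' := wordBall_subset_wordBall hSS' (hS (2 * n - 2))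
    have hg' := wordBall_subset_wordBall hSS' (hS (2 * n - 1))
    rw [if_pos (by grind), show ((2 * n - 2 : ℤ) / 2 + 1).toNat = n by omega] at hh'
    rw [if_neg (by grind), show ((2 * n - 1 : ℤ) / 2 + 1).toNat = n by omega] at hg'
    have hfn : f n = T ^ m n * (h n * (T * g n * T⁻¹)) * (T ^ m n)⁻¹ := by
      rw [← hfhg n]
      group
    rw [hfn]
    exact wordBall_mono (by omega) (conj_mem_wordBall (pow_mem_wordBall hTmem)
      (mul_mem_wordBall hh' (conj_mem_wordBall hTmem hg')))

end Blocks

section Reparametrisation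

variable {P : ℤ → ℝ}

/-- The piecewise affine function with value `P i` at the integer `i`. -/
noncomputable def affineInterpolation (P : ℤ → ℝ) (x : ℝ) : ℝ :=
  P ⌊x⌋ + Int.fract x * (P (⌊x⌋ + 1) - P ⌊x⌋)

theorem affineInterpolation_intCast (i : ℤ) : affineInterpolation P i = P i := by
  simp [affineInterpolation]

theorem affineInterpolation_add (i : ℤ) {t : ℝ} (ht : t ∈ Ico 0 1) :
    affineInterpolation P (i + t) = P i + t * (P (i + 1) - P i) := by
  rw [affineInterpolation, Int.floor_intCast_add, Int.fract_intCast_add,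
    Int.floor_eq_zero_iff.2 ht, Int.fract_eq_self.2 ht, add_zero]

theorem affineInterpolation_strictMono (hP : StrictMono P) :
    StrictMono (affineInterpolation P) := by
  have hstep : ∀ i, 0 < P (i + 1) - P i := fun i => sub_pos.2 (hP (lt_add_one i))
  intro x y hxy
  rcases (Int.floor_le_floor hxy.le).eq_or_lt with heq | hlt
  · have hfract : Int.fract x < Int.fract y := by
      rw [Int.fract, Int.fract, heq]
      gcongr
    rw [affineInterpolation, affineInterpolation, heq]
    gcongr
    exact hstep _
  · calc affineInterpolation P x
        < P ⌊x⌋ + 1 * (P (⌊x⌋ + 1) - P ⌊x⌋) := by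
          rw [affineInterpolation]
          gcongr
          exacts [hstep _, Int.fract_lt_one x]
      _ = P (⌊x⌋ + 1) := by ring
      _ ≤ P ⌊y⌋ := hP.monotone hlt
      _ ≤ affineInterpolation P y :=
          le_add_of_nonneg_right (mul_nonneg (Int.fract_nonneg y) (hstep _).le)

theorem affineInterpolation_surjective (hP : StrictMono P) (hbot : ∀ t, ∃ i, P i ≤ t)
    (htop : ∀ t, ∃ i, t < P i) : Function.Surjective (affineInterpolation P) := by
  intro t
  obtain ⟨j, hj⟩ := htop t
  obtain ⟨i, hi, hmax⟩ := Int.exists_greatest_of_bdd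
    ⟨j, fun i hi => hP.le_iff_le.1 (hi.trans hj.le)⟩ (hbot t)
  have hi' : t < P (i + 1) := not_le.1 fun h => (lt_add_one i).not_ge (hmax _ h)
  have hpos : 0 < P (i + 1) - P i := by linarith
  refine ⟨i + (t - P i) / (P (i + 1) - P i), ?_⟩
  rw [affineInterpolation_add i
    ⟨div_nonneg (by linarith) hpos.le, (div_lt_one hpos).2 (by linarith)⟩,
    div_mul_cancel₀ _ hpos.ne', add_sub_cancel]

theorem exists_orderIso_intCast_eq (hPneg : ∀ i ≤ 0, P i = i) (hP : ∀ i, P i + 1 ≤ P (i + 1)) :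
    ∃ φ ∈ rigidStabilizer (ℝ ≃o ℝ) (Ioi (0 : ℝ)), ∀ i : ℤ, φ i = P i := by
  have hmono : StrictMono P := strictMono_int_of_lt_succ fun i => by linarith [hP i]
  have hge : ∀ j : ℕ, (j : ℝ) ≤ P j := fun j => by
    induction j with
    | zero => exact_mod_cast (hPneg 0 le_rfl).ge
    | succ j ih =>
      push_cast
      linarith [hP j]
  have hsurj : Function.Surjective (affineInterpolation P) :=
    affineInterpolation_surjective hmono
      (fun t => ⟨min ⌊t⌋ 0, (hPneg _ (min_le_right _ _)).trans_le
        ((Int.cast_le.2 (min_le_left _ _)).trans (Int.floor_le t))⟩)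
      fun t => (exists_nat_gt t).imp' (↑) fun j hj => hj.trans_le (hge j)
  refine ⟨(affineInterpolation_strictMono hmono).orderIsoOfSurjective _ hsurj,
    mem_rigidStabilizer.2 fun x hx => ?_, affineInterpolation_intCast⟩
  change affineInterpolation P x = x
  rcases (show x ≤ 0 from not_lt.1 hx).eq_or_lt with rfl | hx'
  · exact_mod_cast (affineInterpolation_intCast (P := P) 0).trans (hPneg 0 le_rfl)
  · have hfloor : ⌊x⌋ + 1 ≤ 0 := Int.floor_lt.2 (by exact_mod_cast hx')
    rw [affineInterpolation, hPneg _ (by omega), hPneg _ hfloor]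
    push_cast
    rw [add_sub_cancel_left, mul_one, Int.floor_add_fract]

theorem exists_orderIso_natCast_eq {P : ℕ → ℝ} (hP₀ : P 0 = 0) (hP : ∀ j, P j + 1 ≤ P (j + 1)) :
    ∃ φ ∈ rigidStabilizer (ℝ ≃o ℝ) (Ioi (0 : ℝ)), ∀ j : ℕ, φ j = P j := by
  let Q : ℤ → ℝ := fun i => P i.toNat + min (i : ℝ) 0
  have hQnat : ∀ j : ℕ, Q j = P j := fun j => by simp [Q]
  have hQneg : ∀ i ≤ 0, Q i = i := fun i hi => by
    simp only [Q, Int.toNat_of_nonpos hi, hP₀, zero_add, min_eq_left (Int.cast_nonpos.2 hi)]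
  have hQstep : ∀ i, Q i + 1 ≤ Q (i + 1) := fun i => by
    rcases le_or_gt 0 i with hi | hi
    · lift i to ℕ using hi
      exact (hQnat i).symm ▸ (hP i).trans_eq (hQnat (i + 1)).symm
    · rw [hQneg i hi.le, hQneg (i + 1) hi]
      push_cast
      rfl
  obtain ⟨φ, hφ, hφQ⟩ := exists_orderIso_intCast_eq hQneg hQstep
  exact ⟨φ, hφ, fun j => (hφQ j).trans (hQnat j)⟩

theorem exists_conj_isAlmostIdFrom {ι : Type*} (f : ι → ℝ ≃o ℝ) {m : ι → ℕ}
    (hm : ∀ j, {i | m i ≤ j}.Finite) : ∃ φ ∈ rigidStabilizer (ℝ ≃o ℝ) (Ioi (0 : ℝ)),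
      ∀ i, IsAlmostIdFrom (m i) (φ⁻¹ * f i * φ) := by
  have hnext : ∀ (j : ℕ) (t : ℝ), ∃ t', t + 1 ≤ t' ∧
      ∀ i, m i ≤ j → f i t ≤ t' ∧ t ≤ f i t' := by
    intro j t
    obtain ⟨u, hu⟩ := ((hm j).image fun i => f i t ⊔ (f i).symm t).bddAbove
    refine ⟨(t + 1) ⊔ u, le_sup_left, fun i hi => ?_⟩
    have hiu := hu (mem_image_of_mem _ hi)
    exact ⟨le_sup_left.trans (hiu.trans le_sup_right),
      (f i).symm_apply_le.1 (le_sup_right.trans (hiu.trans le_sup_right))⟩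
  choose next hnext_ge hnext_le using hnext
  let P : ℕ → ℝ := Nat.rec 0 next
  obtain ⟨φ, hφ, hφP⟩ := exists_orderIso_natCast_eq (P := P) rfl fun j => hnext_ge j (P j)
  refine ⟨φ, hφ, fun i j hij => ?_⟩
  obtain ⟨hright, hleft⟩ := hnext_le j (P j) i hij
  have hφsucc : φ ((j : ℝ) + 1) = next j (P j) := by exact_mod_cast hφP (j + 1)
  change φ.symm (f i (φ j)) ≤ j + 1 ∧ j ≤ φ.symm (f i (φ (j + 1)))
  rw [OrderIso.symm_apply_le, OrderIso.le_symm_apply, hφP, hφsucc]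
  exact ⟨hright, hleft⟩

theorem finite_setOf_log_div_le (b k j : ℕ) (hb : 1 < b) (hk : 0 < k) :
    {n | Nat.log b n / k ≤ j}.Finite := by
  refine (finite_Iio (b ^ (k * (j + 1)))).subset fun n hn => ?_
  refine Nat.lt_pow_of_log_lt hb ?_
  rw [mul_comm]
  exact (Nat.div_lt_iff_lt_mul hk).1 (Nat.lt_succ_of_le hn)

/-- The bound obtained for the word length of the `n`-th order automorphism of the line. -/
def lineWordLength (n : ℕ) : ℕ :=
  4 * (intWordLength (2 * n - 2) + intWordLength (2 * n - 1)) + 10 + 2 * (Nat.log 2 n / 16)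

theorem exists_finset_forall_mem_wordBall_orderIso {f : ℕ → ℝ ≃o ℝ}
    (hf : ∀ n, f n ∈ rigidStabilizer (ℝ ≃o ℝ) (Ioi (0 : ℝ))) :
    ∃ S : Finset (ℝ ≃o ℝ), S.card ≤ 5 ∧
      (∀ g ∈ S, g ∈ rigidStabilizer (ℝ ≃o ℝ) (Ioi (-12 : ℝ))) ∧
      ∀ n : ℕ, f n ∈ wordBall S (lineWordLength n) := by
  obtain ⟨φ, hφ, hφf⟩ := exists_conj_isAlmostIdFrom f
    fun j => finite_setOf_log_div_le 2 16 j one_lt_two (by norm_num)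
  obtain ⟨S, hScard, hSsupp, hS⟩ := exists_finset_forall_mem_wordBall_of_isAlmostIdFrom
    (fun n => mul_mem (mul_mem (inv_mem hφ) (hf n)) hφ) hφf
  have hφ' := rigidStabilizer_mono (Ioi_subset_Ioi (by norm_num : (-12 : ℝ) ≤ 0)) hφ
  classical
  refine ⟨S.image (MulAut.conj φ), Finset.card_image_le.trans hScard, ?_, fun n => ?_⟩
  · rw [Finset.forall_mem_image]
    exact fun g hg => mul_mem (mul_mem hφ' (hSsupp g hg)) (inv_mem hφ')
  · have hconj : f n = MulAut.conj φ (φ⁻¹ * f n * φ) := by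
      rw [MulAut.conj_apply]
      group
    rw [hconj, Finset.coe_image]
    exact map_mem_wordBall (MulAut.conj φ).toMonoidHom (hS n)

end Reparametrisation

section HalfLine

open scoped NNReal

/-- The decreasing parametrisation `y ↦ exp (-y)` of the open half-line. It sends the end `+∞` of
the line to the endpoint `0`, which every homeomorphism of the half-line fixes. -/
noncomputable def expNeg (y : ℝ) : ℝ≥0 :=
  NNReal.mk (Real.exp (-y)) (Real.exp_pos _).le

theorem expNeg_ne_zero (y : ℝ) : expNeg y ≠ 0 :=
  NNReal.coe_ne_zero.1 (Real.exp_pos _).ne'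

theorem expNeg_strictAnti : StrictAnti expNeg := fun _ _ hxy =>
  NNReal.coe_lt_coe.1 (Real.exp_lt_exp.2 (neg_lt_neg hxy))

theorem eq_zero_or_exists_expNeg_eq (x : ℝ≥0) : x = 0 ∨ ∃ y, expNeg y = x := by
  rcases eq_or_ne x 0 with hx | hx
  · exact Or.inl hx
  · refine Or.inr ⟨-Real.log x, NNReal.eq ?_⟩
    change Real.exp (- -Real.log x) = x
    rw [neg_neg, Real.exp_log (NNReal.coe_pos.2 (pos_iff_ne_zero.2 hx))]

/-- The extension to the half-line of the transport of a self-map of the line by `expNeg`. -/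
noncomputable def halfLineMap (g : ℝ → ℝ) (x : ℝ≥0) : ℝ≥0 :=
  if x = 0 then 0 else expNeg (g (-Real.log x))

theorem halfLineMap_zero (g : ℝ → ℝ) : halfLineMap g 0 = 0 :=
  if_pos rfl

theorem halfLineMap_expNeg (g : ℝ → ℝ) (y : ℝ) : halfLineMap g (expNeg y) = expNeg (g y) := by
  rw [halfLineMap, if_neg (expNeg_ne_zero y)]
  change expNeg (g (-Real.log (Real.exp (-y)))) = _
  rw [Real.log_exp, neg_neg]

theorem halfLineMap_id (x : ℝ≥0) : halfLineMap id x = x := by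
  obtain rfl | ⟨y, rfl⟩ := eq_zero_or_exists_expNeg_eq x
  · exact halfLineMap_zero _
  · exact halfLineMap_expNeg _ y

theorem halfLineMap_comp (g h : ℝ → ℝ) (x : ℝ≥0) :
    halfLineMap (g ∘ h) x = halfLineMap g (halfLineMap h x) := by
  obtain rfl | ⟨y, rfl⟩ := eq_zero_or_exists_expNeg_eq x
  · rw [halfLineMap_zero, halfLineMap_zero, halfLineMap_zero]
  · rw [halfLineMap_expNeg, halfLineMap_expNeg, halfLineMap_expNeg, Function.comp_apply]

theorem halfLineMap_leftInverse {g h : ℝ → ℝ} (hgh : Function.LeftInverse g h) :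
    Function.LeftInverse (halfLineMap g) (halfLineMap h) := fun x => by
  rw [← halfLineMap_comp, hgh.comp_eq_id, halfLineMap_id]

theorem halfLineMap_monotone {g : ℝ → ℝ} (hg : Monotone g) : Monotone (halfLineMap g) := by
  intro x x' hxx'
  obtain rfl | ⟨y, rfl⟩ := eq_zero_or_exists_expNeg_eq x
  · exact (halfLineMap_zero g).trans_le zero_le
  obtain rfl | ⟨y', rfl⟩ := eq_zero_or_exists_expNeg_eq x'
  · exact absurd (le_zero_iff.1 hxx') (expNeg_ne_zero y)
  rw [halfLineMap_expNeg, halfLineMap_expNeg]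
  exact expNeg_strictAnti.antitone (hg (expNeg_strictAnti.le_iff_ge.1 hxx'))

/-- The action of the order automorphisms of the line on the half-line induced by `expNeg`. -/
noncomputable def halfLineHom : (ℝ ≃o ℝ) →* (ℝ≥0 ≃ₜ ℝ≥0) where
  toFun g := (Equiv.toOrderIso
    { toFun := halfLineMap g
      invFun := halfLineMap g.symm
      left_inv := halfLineMap_leftInverse g.symm_apply_apply
      right_inv := halfLineMap_leftInverse g.apply_symm_apply }
    (halfLineMap_monotone g.monotone) (halfLineMap_monotone g.symm.monotone)).toHomeomorph
  map_one' := Homeomorph.ext halfLineMap_id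
  map_mul' g h := Homeomorph.ext (halfLineMap_comp g h)

theorem halfLineHom_expNeg (g : ℝ ≃o ℝ) (y : ℝ) : halfLineHom g (expNeg y) = expNeg (g y) :=
  halfLineMap_expNeg g y

theorem halfLineHom_mem_rigidStabilizer {g : ℝ ≃o ℝ} {c : ℝ}
    (hg : g ∈ rigidStabilizer (ℝ ≃o ℝ) (Ioi c)) :
    halfLineHom g ∈ rigidStabilizer (ℝ≥0 ≃ₜ ℝ≥0) (Iic (expNeg c)) := by
  refine mem_rigidStabilizer.2 fun x hx => ?_
  obtain rfl | ⟨y, rfl⟩ := eq_zero_or_exists_expNeg_eq x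
  · exact halfLineMap_zero g
  · have hyc : y ≤ c := (expNeg_strictAnti.lt_iff_gt.1 (not_le.1 hx)).le
    exact (halfLineHom_expNeg g y).trans
      (congrArg expNeg (mem_rigidStabilizer.1 hg y (not_lt.2 hyc)))

theorem strictMono_of_homeomorph_nnreal (h : ℝ≥0 ≃ₜ ℝ≥0) : StrictMono h := by
  refine (h.continuous.strictMono_of_inj h.injective).resolve_right fun hanti => ?_
  obtain ⟨x, hx⟩ := h.surjective (h 0 + 1)
  exact (hanti.antitone (zero_le (a := x))).not_gt (hx ▸ lt_add_one (h 0))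

theorem homeomorph_nnreal_zero (h : ℝ≥0 ≃ₜ ℝ≥0) : h 0 = 0 :=
  ((strictMono_of_homeomorph_nnreal h).orderIsoOfSurjective h h.surjective).map_bot

theorem exists_orderIso_expNeg (h : ℝ≥0 ≃ₜ ℝ≥0) :
    ∃ g : ℝ ≃o ℝ, ∀ y, expNeg (g y) = h (expNeg y) := by
  have hh : ∀ (h : ℝ≥0 ≃ₜ ℝ≥0) (y : ℝ), ∃ z, expNeg z = h (expNeg y) := fun h y =>
    (eq_zero_or_exists_expNeg_eq _).resolve_left fun h0 =>
      expNeg_ne_zero y (h.injective (h0.trans (homeomorph_nnreal_zero h).symm))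
  choose g hg using hh h
  have hgmono : StrictMono g := fun y z hyz => by
    rw [← expNeg_strictAnti.lt_iff_gt, hg, hg]
    exact strictMono_of_homeomorph_nnreal h (expNeg_strictAnti hyz)
  have hgsurj : Function.Surjective g := fun y => by
    obtain ⟨z, hz⟩ := hh h.symm y
    exact ⟨z, expNeg_strictAnti.injective (by rw [hg, hz, h.apply_symm_apply])⟩
  exact ⟨hgmono.orderIsoOfSurjective g hgsurj, hg⟩

theorem exists_halfLineHom_eq {h : ℝ≥0 ≃ₜ ℝ≥0} {c : ℝ}
    (hh : h ∈ rigidStabilizer (ℝ≥0 ≃ₜ ℝ≥0) (Iic (expNeg c))) :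
    ∃ g ∈ rigidStabilizer (ℝ ≃o ℝ) (Ioi c), halfLineHom g = h := by
  obtain ⟨g, hg⟩ := exists_orderIso_expNeg h
  have hgc : closure (Iio c) ⊆ {y | g y = y} := by
    refine closure_minimal (fun y hy => expNeg_strictAnti.injective ?_)
      (isClosed_eq g.continuous continuous_id)
    exact (hg y).trans (mem_rigidStabilizer.1 hh _ (not_le.2 (expNeg_strictAnti hy)))
  rw [closure_Iio] at hgc
  refine ⟨g, mem_rigidStabilizer.2 fun y hy => hgc (mem_Iic.2 (not_lt.1 hy)),
    Homeomorph.ext fun x => ?_⟩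
  obtain rfl | ⟨y, rfl⟩ := eq_zero_or_exists_expNeg_eq x
  · rw [homeomorph_nnreal_zero, homeomorph_nnreal_zero]
  · rw [halfLineHom_expNeg, hg]

theorem exists_finset_forall_mem_wordBall_nnreal {f : ℕ → ℝ≥0 ≃ₜ ℝ≥0}
    (hf : ∀ n, f n ∈ rigidStabilizer (ℝ≥0 ≃ₜ ℝ≥0) (Iic (1 : ℝ≥0))) :
    ∃ S : Finset (ℝ≥0 ≃ₜ ℝ≥0), S.card ≤ 5 ∧
      (∀ g ∈ S, g ∈ rigidStabilizer (ℝ≥0 ≃ₜ ℝ≥0) (Iic (expNeg (-12)))) ∧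
      ∀ n, f n ∈ wordBall S (lineWordLength n) := by
  have hexp : expNeg 0 = 1 := by
    rw [← NNReal.coe_inj, expNeg, NNReal.coe_mk, neg_zero, Real.exp_zero, NNReal.coe_one]
  rw [← hexp] at hf
  choose g hg hgf using fun n => exists_halfLineHom_eq (hf n)
  obtain ⟨S, hScard, hSsupp, hS⟩ := exists_finset_forall_mem_wordBall_orderIso hg
  classical
  refine ⟨S.image halfLineHom, Finset.card_image_le.trans hScard, ?_, fun n => ?_⟩
  · rw [Finset.forall_mem_image]
    exact fun g hg => halfLineHom_mem_rigidStabilizer (hSsupp g hg)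
  · rw [← hgf n, Finset.coe_image]
    exact map_mem_wordBall halfLineHom (hS n)

end HalfLine

section WordLengthBounds

variable {n : ℕ}

theorem natLog_two_mul_le_log (n : ℕ) : Nat.log 2 n * (0.69 : ℝ) ≤ Real.log n := by
  have hlogb := Real.natLog_le_logb n 2
  rw [Real.logb, Nat.cast_ofNat, le_div_iff₀ (Real.log_pos one_lt_two)] at hlogb
  exact le_trans (by gcongr; linarith [Real.log_two_gt_d9]) hlogb

theorem four_mul_natLog_add_four_le (hn : n ≠ 0) :
    ((4 * Nat.log 2 (n + 1) + 4 : ℕ) : ℝ) ≤ 14 * Real.log n + 14 := by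
  have hsucc : Nat.log 2 (n + 1) ≤ Nat.log 2 n + 1 := by
    rw [← Nat.log_mul_base one_lt_two hn]
    exact Nat.log_mono_right (by omega)
  calc ((4 * Nat.log 2 (n + 1) + 4 : ℕ) : ℝ) ≤ 4 * Nat.log 2 n + 8 := by exact_mod_cast (by omega)
    _ ≤ 14 * Real.log n + 14 := by linarith [natLog_two_mul_le_log n]

theorem lineWordLength_eq (hn : n ≠ 0) : lineWordLength n =
    4 * (Nat.log 2 (2 * n - 1) + (Nat.log 2 n + 1)) + 10 + 2 * (Nat.log 2 n / 16) := by
  have hleft : (2 * n - 2 : ℤ) = (2 * n - 2 : ℕ) := by omega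
  have hright : (2 * n - 1 : ℤ) = (2 * n - 1 : ℕ) := by omega
  rw [lineWordLength, hleft, hright, intWordLength_natCast, intWordLength_natCast,
    show 2 * n - 2 + 1 = 2 * n - 1 by omega, show 2 * n - 1 + 1 = n * 2 by omega,
    Nat.log_mul_base one_lt_two hn]

theorem lineWordLength_le_of_lt_eight (hn : n ≠ 0) (hn8 : n < 8) :
    (lineWordLength n : ℝ) ≤ 14 * Real.log n + 14 := by
  have hlog2 := Real.log_two_gt_d9
  have hlog3 : 3 * Real.log 2 ≤ 2 * Real.log 3 := by
    have := Real.log_le_log (by norm_num) (by norm_num : (2 : ℝ) ^ 3 ≤ 3 ^ 2)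
    simpa only [Real.log_pow, Nat.cast_ofNat] using this
  have hlog5 : 9 * Real.log 2 ≤ 4 * Real.log 5 := by
    have := Real.log_le_log (by norm_num) (by norm_num : (2 : ℝ) ^ 9 ≤ 5 ^ 4)
    simpa only [Real.log_pow, Nat.cast_ofNat] using this
  have hlog4 : Real.log 4 = 2 * Real.log 2 := by
    rw [show (4 : ℝ) = 2 ^ 2 by norm_num, Real.log_pow, Nat.cast_ofNat]
  have hlog6 : Real.log 5 ≤ Real.log 6 := Real.log_le_log (by norm_num) (by norm_num)
  have hlog7 : Real.log 5 ≤ Real.log 7 := Real.log_le_log (by norm_num) (by norm_num)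
  rw [lineWordLength_eq hn]
  interval_cases n <;> norm_num [Nat.log] at * <;> linarith

theorem lineWordLength_le (hn : n ≠ 0) : (lineWordLength n : ℝ) ≤ 14 * Real.log n + 14 := by
  rcases lt_or_ge n 8 with hn8 | hn8
  · exact lineWordLength_le_of_lt_eight hn hn8
  have hlog : 3 ≤ Nat.log 2 n := Nat.le_log_of_pow_le one_lt_two hn8
  have hpred : Nat.log 2 (2 * n - 1) ≤ Nat.log 2 n + 1 := by
    rw [← Nat.log_mul_base one_lt_two hn]
    exact Nat.log_mono_right (by omega)
  have hline : 8 * lineWordLength n ≤ 65 * Nat.log 2 n + 8 * 18 := by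
    rw [lineWordLength_eq hn]
    omega
  have hline' : 8 * (lineWordLength n : ℝ) ≤ 65 * Nat.log 2 n + 8 * 18 := by exact_mod_cast hline
  have hlog' : (3 : ℝ) ≤ Nat.log 2 n := by exact_mod_cast hlog
  linarith [natLog_two_mul_le_log n]

end WordLengthBounds

section LogGenerated

variable {X : Type*} [TopologicalSpace X] {f : ℕ → X ≃ₜ X} {K : Set X}

/-- The sequence `f` lies in a group generated by at most five compactly supported homeomorphisms,
with word lengths growing at most logarithmically. -/
def IsLogGenerated (f : ℕ → X ≃ₜ X) : Prop :=
  ∃ 𝒢 : Finset (X ≃ₜ X), 𝒢.card ≤ 5 ∧ (∀ g ∈ 𝒢, IsCompact (homeoSupport g)) ∧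
    (∀ n, f n ∈ Subgroup.closure (𝒢 : Set _)) ∧
    ∀ n : ℕ, 1 ≤ n → (wordLength (𝒢 : Set _) (f n) : ℝ) ≤ 14 * Real.log n + 14

theorem mem_rigidStabilizer_of_homeoSupport_subset {g : X ≃ₜ X} (hg : homeoSupport g ⊆ K) :
    g ∈ rigidStabilizer (X ≃ₜ X) K :=
  mem_rigidStabilizer.2 fun _ hx => of_not_not fun hgx => hx (hg (subset_closure hgx))

theorem isCompact_homeoSupport [R1Space X] (hK : IsCompact K) {g : X ≃ₜ X}
    (hg : g ∈ rigidStabilizer (X ≃ₜ X) K) : IsCompact (homeoSupport g) :=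
  hK.closure_of_subset fun x hx => of_not_not fun hxK => hx (mem_rigidStabilizer.1 hg x hxK)

theorem isLogGenerated_of_forall_mem_wordBall [R1Space X] (hK : IsCompact K) {L : ℕ → ℕ}
    (hL : ∀ n ≠ 0, (L n : ℝ) ≤ 14 * Real.log n + 14)
    (hf : ∃ S : Finset (X ≃ₜ X), S.card ≤ 5 ∧ (∀ g ∈ S, g ∈ rigidStabilizer (X ≃ₜ X) K) ∧
      ∀ n, f n ∈ wordBall S (L n)) : IsLogGenerated f := by
  obtain ⟨S, hScard, hSsupp, hS⟩ := hf
  refine ⟨S, hScard, fun g hg => isCompact_homeoSupport hK (hSsupp g hg),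
    fun n => mem_closure_of_mem_wordBall (hS n), fun n hn => ?_⟩
  exact (Nat.cast_le.2 (wordLength_le_of_mem_wordBall (hS n))).trans
    (hL n (Nat.one_le_iff_ne_zero.1 hn))

theorem isLogGenerated_of_isometry {X V : Type*} [MetricSpace X] [ProperSpace X]
    [NormedAddCommGroup V] [NormedSpace ℝ V] {ι : X → V} (hι : Isometry ι) {o : X} (ho : ι o = 0)
    {e : V} (he : ‖e‖ = 1) (hcone : ∀ x, ∀ t τ : ℝ, 0 < t → ∃ y, ι y = t • ι x + τ • e)
    {f : ℕ → X ≃ₜ X} (hf : ∀ n, homeoSupport (f n) ⊆ Metric.closedBall o 1) :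
    IsLogGenerated f := by
  choose γ hγ using fun τ => hcone o 1 τ one_pos
  simp only [ho, smul_zero, zero_add] at hγ
  have hγo : γ 0 = o := hι.injective (by rw [hγ, ho, zero_smul])
  have hγiso : Isometry γ := Isometry.of_dist_eq fun σ τ => by
    rw [← hι.dist_eq, hγ, hγ, dist_eq_norm, ← sub_smul, norm_smul, he, mul_one, Real.dist_eq,
      Real.norm_eq_abs]
  have hcontr : ∀ τ r : ℝ, 0 < r → ∃ g : X ≃ₜ X, IsLocalContraction g (γ τ) r := by
    refine fun τ r hr => exists_isLocalContraction hι (fun x t ht => ?_) hr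
    obtain ⟨y, hy⟩ := hcone x t ((1 - t) * τ) ht
    refine ⟨y, ?_⟩
    rw [hy, hγ]
    module
  exact isLogGenerated_of_forall_mem_wordBall (isCompact_closedBall (γ 0) 450)
    (fun n hn => four_mul_natLog_add_four_le hn)
    (exists_finset_forall_mem_wordBall_of_isLocalContraction hγiso hcontr fun n =>
      mem_rigidStabilizer_of_homeoSupport_subset (hγo ▸ hf n))

end LogGenerated

section Spaces

open scoped NNReal

/-- Conjugation by a homeomorphism `κ : X ≃ₜ Y`, as an isomorphism of homeomorphism groups. -/
def homeomorphConj {X Y : Type*} [TopologicalSpace X] [TopologicalSpace Y] (κ : X ≃ₜ Y) :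
    (X ≃ₜ X) ≃* (Y ≃ₜ Y) where
  toFun g := (κ.symm.trans g).trans κ
  invFun g := (κ.trans g).trans κ.symm
  left_inv g := Homeomorph.ext fun x => by simp
  right_inv g := Homeomorph.ext fun x => by simp
  map_mul' g h := Homeomorph.ext fun y =>
    congrArg (fun x => κ (g x)) (κ.symm_apply_apply (h (κ.symm y))).symm

theorem homeomorphConj_mem_rigidStabilizer {X Y : Type*} [TopologicalSpace X] [TopologicalSpace Y]
    (κ : X ≃ₜ Y) {g : X ≃ₜ X} {K : Set X} (hg : g ∈ rigidStabilizer (X ≃ₜ X) K) :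
    homeomorphConj κ g ∈ rigidStabilizer (Y ≃ₜ Y) (κ.symm ⁻¹' K) :=
  mem_rigidStabilizer.2 fun y hy => (congrArg κ (mem_rigidStabilizer.1 hg _ hy)).trans
    (κ.apply_symm_apply y)

variable {d : ℕ} [NeZero d]

/-- The half-space of dimension `1` is the half-line; the dimension hypothesis takes the form
`∀ i : Fin d, i = 0` to keep `d` a variable. -/
noncomputable def halfSpaceHomeomorph (hd : ∀ i : Fin d, i = 0) : HalfSpace d ≃ₜ ℝ≥0 where
  toFun x := NNReal.mk (x.1 0) x.2
  invFun t := ⟨WithLp.toLp 2 fun _ => t, t.2⟩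
  left_inv x := Subtype.ext (PiLp.ext fun i => by rw [hd i]; rfl)
  right_inv t := rfl
  continuous_toFun := Continuous.subtype_mk (by fun_prop) _
  continuous_invFun := by fun_prop

theorem coe_halfSpaceHomeomorph (hd : ∀ i : Fin d, i = 0) (x : HalfSpace d) :
    (halfSpaceHomeomorph hd x : ℝ) = ‖x.1‖ := by
  rw [EuclideanSpace.norm_eq, Fintype.sum_eq_single 0 fun i hi => absurd (hd i) hi,
    Real.norm_eq_abs, sq_abs, Real.sqrt_sq x.2]
  rfl

theorem isLogGenerated_halfSpace_of_dim_eq_one (hd : ∀ i : Fin d, i = 0)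
    {f : ℕ → HalfSpace d ≃ₜ HalfSpace d} (hf : ∀ n, homeoSupport (f n) ⊆ {x | ‖x.1‖ ≤ 1}) :
    IsLogGenerated f := by
  let κ := halfSpaceHomeomorph hd
  have hball : κ.symm ⁻¹' {x | ‖x.1‖ ≤ 1} = Iic (1 : ℝ≥0) := by
    ext t
    rw [mem_preimage, mem_ofPred_eq, ← coe_halfSpaceHomeomorph hd, κ.apply_symm_apply, mem_Iic]
    exact_mod_cast Iff.rfl
  obtain ⟨S, hScard, hSsupp, hS⟩ := exists_finset_forall_mem_wordBall_nnreal fun n => hball ▸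
    homeomorphConj_mem_rigidStabilizer κ (mem_rigidStabilizer_of_homeoSupport_subset (hf n))
  have hcompact : IsCompact (κ ⁻¹' Iic (expNeg (-12))) :=
    κ.isCompact_preimage.2 (Icc_bot (a := expNeg (-12)) ▸ isCompact_Icc)
  classical
  refine isLogGenerated_of_forall_mem_wordBall hcompact (fun n hn => lineWordLength_le hn)
    ⟨S.image (homeomorphConj κ.symm), Finset.card_image_le.trans hScard, ?_, fun n => ?_⟩
  · rw [Finset.forall_mem_image]
    exact fun g hg => homeomorphConj_mem_rigidStabilizer κ.symm (hSsupp g hg)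
  · rw [← (homeomorphConj κ).symm_apply_apply (f n), Finset.coe_image]
    exact map_mem_wordBall (homeomorphConj κ.symm).toMonoidHom (hS n)

theorem isLogGenerated_halfSpace_of_ne_zero {i : Fin d} (hi : i ≠ 0)
    {f : ℕ → HalfSpace d ≃ₜ HalfSpace d} (hf : ∀ n, homeoSupport (f n) ⊆ {x | ‖x.1‖ ≤ 1}) :
    IsLogGenerated f := by
  have hclosed : IsClosed {x : EuclideanSpace ℝ (Fin d) | 0 ≤ x 0} :=
    isClosed_le continuous_const (by fun_prop)
  have : ProperSpace (HalfSpace d) := ProperSpace.of_isClosed hclosed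
  have hball : {x : HalfSpace d | ‖x.1‖ ≤ 1} = Metric.closedBall ⟨0, le_rfl⟩ 1 := by
    ext x
    rw [mem_ofPred_eq, Metric.mem_closedBall, Subtype.dist_eq, dist_zero_right]
  refine isLogGenerated_of_isometry (o := ⟨0, le_rfl⟩) (e := EuclideanSpace.single i 1)
    isometry_subtype_coe rfl (by simp) (fun x t τ ht => ?_) (hball ▸ hf)
  refine ⟨⟨t • x.1 + τ • EuclideanSpace.single i 1, ?_⟩, rfl⟩
  have hzero : EuclideanSpace.single i (1 : ℝ) 0 = 0 := by simp [hi.symm]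
  simp only [PiLp.add_apply, PiLp.smul_apply, hzero, smul_eq_mul, mul_zero, add_zero]
  exact mul_nonneg ht.le x.2

end Spaces

/-- **Lemma (after Avila).** For every sequence `(f_n)` of homeomorphisms of `ℝ^d`
supported in the closed unit ball, there is a finite set `𝒢` of compactly supported
homeomorphisms of `ℝ^d` with `#𝒢 ≤ 5`, such that every `f_n` lies in the group generated
by `𝒢` and `l_𝒢(f_n) ≤ 14·log n + 14` for every `n ≥ 1`; and the same statement holds for
homeomorphisms of the half-space `H^d` supported in the unit half-ball. -/
theorem avila_lemma (d : ℕ) [NeZero d] :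
    (∀ f : ℕ → (EuclideanSpace ℝ (Fin d) ≃ₜ EuclideanSpace ℝ (Fin d)),
      (∀ n, homeoSupport (f n) ⊆ Metric.closedBall 0 1) →
      ∃ 𝒢 : Finset (EuclideanSpace ℝ (Fin d) ≃ₜ EuclideanSpace ℝ (Fin d)),
        𝒢.card ≤ 5 ∧ (∀ g ∈ 𝒢, IsCompact (homeoSupport g)) ∧
        (∀ n, f n ∈ Subgroup.closure (𝒢 : Set _)) ∧
        ∀ n : ℕ, 1 ≤ n →
          (wordLength (𝒢 : Set _) (f n) : ℝ) ≤ 14 * Real.log n + 14) ∧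
    (∀ f : ℕ → (HalfSpace d ≃ₜ HalfSpace d),
      (∀ n, homeoSupport (f n) ⊆ {x : HalfSpace d | ‖x.1‖ ≤ 1}) →
      ∃ 𝒢 : Finset (HalfSpace d ≃ₜ HalfSpace d),
        𝒢.card ≤ 5 ∧ (∀ g ∈ 𝒢, IsCompact (homeoSupport g)) ∧
        (∀ n, f n ∈ Subgroup.closure (𝒢 : Set _)) ∧
        ∀ n : ℕ, 1 ≤ n →
          (wordLength (𝒢 : Set _) (f n) : ℝ) ≤ 14 * Real.log n + 14) := by
  refine ⟨fun f hf => ?_, fun f hf => ?_⟩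
  · exact isLogGenerated_of_isometry isometry_id rfl
      (by simp : ‖EuclideanSpace.single (0 : Fin d) (1 : ℝ)‖ = 1) (fun _ _ _ _ => ⟨_, rfl⟩) hf
  · by_cases hd : ∀ i : Fin d, i = 0
    · exact isLogGenerated_halfSpace_of_dim_eq_one hd hf
    · obtain ⟨i, hi⟩ := not_forall.1 hd
      exact isLogGenerated_halfSpace_of_ne_zero hi hf
end

section
/- Let f ∈ Homeo₀(𝔸) with a lift f̃ whose rotation set is the singleton {p/q}, where p, q are integers with either (q > 0, 0 < p < q, and p, q coprime) or (p = 0 and q = 1). Then for every integer n > 1 there exists a family (γ_i)_{i ∈ ℤ/nqℤ} of pairwise disjoint simple curves joining the two boundary components of 𝔸 such that for every index i: (1) γ_i lies strictly between γ_{i−1} and γ_{i+1}; (2) f(γ_i) lies strictly between γ_{i+np−1} and γ_{i+np+1}. -/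
open Filter Topology Set

/-- The closed annulus `𝔸 = (ℝ/ℤ) × [0,1]`. -/
noncomputable abbrev Annulus : Type := AddCircle (1 : ℝ) × unitInterval

/-- The strip `ℝ × [0,1]`, universal cover of the annulus. -/
abbrev Strip : Type := ℝ × unitInterval

/-- The covering map `π : ℝ × [0,1] → 𝔸`. -/
noncomputable def pA : Strip → Annulus := fun x => ((x.1 : AddCircle (1 : ℝ)), x.2)

/-- `ft` is a lift of `f` to the strip. -/
def IsLiftA (f : Annulus ≃ₜ Annulus) (ft : Strip ≃ₜ Strip) : Prop :=
  pA ∘ ft = f ∘ pA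

/-- The rotation set of a homeomorphism `ft` of the strip: the set of limits of sequences
`(p₁(ftⁿᵏ(x̃ₖ)) − p₁(x̃ₖ))/nₖ` with `nₖ → +∞`. -/
def rotSet (ft : Strip ≃ₜ Strip) : Set ℝ :=
  {r | ∃ (nk : ℕ → ℕ) (xk : ℕ → Strip), Tendsto nk atTop atTop ∧
    Tendsto (fun k => (((⇑ft)^[nk k] (xk k)).1 - (xk k).1) / nk k) atTop (nhds r)}

/-- A simple curve in the annulus joining the two boundary components. -/
def JoinsBoundaryA (γ : unitInterval → Annulus) : Prop :=
  Continuous γ ∧ Function.Injective γ ∧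
    ((γ 0).2 : ℝ) = 0 ∧ ((γ 1).2 : ℝ) = 1 ∧
    ∀ t : unitInterval, t ≠ 0 → t ≠ 1 → ((γ t).2 : ℝ) ∈ Set.Ioo (0 : ℝ) 1

/-- A simple curve in the strip joining the two boundary components. -/
def JoinsBoundaryS (γ : unitInterval → Strip) : Prop :=
  Continuous γ ∧ Function.Injective γ ∧
    ((γ 0).2 : ℝ) = 0 ∧ ((γ 1).2 : ℝ) = 1 ∧
    ∀ t : unitInterval, t ≠ 0 → t ≠ 1 → ((γ t).2 : ℝ) ∈ Set.Ioo (0 : ℝ) 1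

/-- `γt` is a (continuous) lift to the strip of the curve `γ` in the annulus. -/
def IsCurveLift (γ : unitInterval → Annulus) (γt : unitInterval → Strip) : Prop :=
  Continuous γt ∧ pA ∘ γt = γ

/-- The point `x` lies strictly on the right of the curve `γt` of the strip: it belongs
to the connected component of the complement of `γt` containing all the far-right points
(for a curve oriented from the bottom boundary to the top boundary of the strip, the
right-hand side is towards `x₁ = +∞`). -/
def OnRightS (γt : unitInterval → Strip) (x : Strip) : Prop :=
  ∃ q : Strip, (∀ t, (γt t).1 < q.1) ∧ x ∈ connectedComponentIn (Set.range γt)ᶜ q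

/-- The point `x` lies strictly on the left of the curve `γt` of the strip. -/
def OnLeftS (γt : unitInterval → Strip) (x : Strip) : Prop :=
  ∃ q : Strip, (∀ t, q.1 < (γt t).1) ∧ x ∈ connectedComponentIn (Set.range γt)ᶜ q

/-- The set `A` lies strictly on the right of the curve `γt` of the strip. -/
def StrictlyRightS (γt : unitInterval → Strip) (A : Set Strip) : Prop :=
  ∀ x ∈ A, OnRightS γt x

/-- The set `A` lies strictly on the left of the curve `γt` of the strip. -/
def StrictlyLeftS (γt : unitInterval → Strip) (A : Set Strip) : Prop :=
  ∀ x ∈ A, OnLeftS γt x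

/-- The curve `γ₂` lies strictly between the curves `γ₁` and `γ₃` (three pairwise
disjoint simple curves joining the two boundary components of the annulus): there are
lifts `γt₁`, `γt₂` of `γ₁`, `γ₂` such that `γt₂` lies strictly on the right of `γt₁`
and, for every lift `γt₃` of `γ₃` lying strictly on the right of `γt₁`, the curve `γt₂`
lies strictly on the left of `γt₃`. -/
def StrictlyBetween (γ₁ γ₂ γ₃ : unitInterval → Annulus) : Prop :=
  ∃ γt₁ γt₂ : unitInterval → Strip, IsCurveLift γ₁ γt₁ ∧ IsCurveLift γ₂ γt₂ ∧
    StrictlyRightS γt₁ (Set.range γt₂) ∧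
    ∀ γt₃ : unitInterval → Strip, IsCurveLift γ₃ γt₃ →
      StrictlyRightS γt₁ (Set.range γt₃) → StrictlyLeftS γt₃ (Set.range γt₂)

/-!
Suppose `h : ℝ × [0,1] → ℝ` is continuous and increases by `m` under the unit translation. If
`h ∘ f̃ - h` stays strictly between `a - 1` and `a + 1`, then `f̃` maps the level `z` of `h`
strictly between the levels `z + a - 1` and `z + a + 1`. A multiple of a long Birkhoff average of
`p₁` is such an `h`, because the rotation set of `f̃` is contained in
`((a - 1) / m, (a + 1) / m)`; the theorem is the case `m = nq`, `a = np`.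

The level sets of `h` can be wild, and comparing values of `h` says nothing about the side of a
curve on which a point lies unless every superlevel set connects to the right end of the strip
and every sublevel set to the left end. Two successive maximin operations produce a function with
these properties without losing equivariance or the bounds on `h ∘ f̃ - h`. Each band
`{z - δ < h < z + δ}` contains a simple arc crossing the strip: otherwise `h`, truncated to the
band, would define a circle-valued map on a rectangle which is constant on three of the sides but
of degree one on the remaining side.
-/

/-! ### Escaping to an end and the maximin regularization -/

section Escape

variable {X : Type*} [TopologicalSpace X] {l : Filter X} {A B S : Set X} {x y : X}

/-- The point `x` can escape to the end `l` of `X` inside `A`: its connected component in `A`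
accumulates at `l`. An end of `X` is encoded as a filter. The component is empty, so that nothing
escapes, when `x ∉ A`. -/
def EscapesIn (l : Filter X) (A : Set X) (x : X) : Prop :=
  ∃ᶠ y in l, y ∈ connectedComponentIn A x

lemma escapesIn_of_isPreconnected (hS : IsPreconnected S) (hSA : S ⊆ A) (hx : x ∈ S)
    (hSl : ∃ᶠ y in l, y ∈ S) : EscapesIn l A x :=
  hSl.mono fun _ hy => hS.subset_connectedComponentIn hx hSA hy

namespace EscapesIn

lemma mem (hx : EscapesIn l A x) : x ∈ A := by
  obtain ⟨y, hy⟩ := Frequently.exists hx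
  exact connectedComponentIn_nonempty_iff.mp ⟨y, hy⟩

lemma of_connectedComponentIn_subset (hx : EscapesIn l A x)
    (hAB : connectedComponentIn A x ⊆ B) : EscapesIn l B x :=
  escapesIn_of_isPreconnected isPreconnected_connectedComponentIn hAB
    (mem_connectedComponentIn hx.mem) hx

lemma mono (hx : EscapesIn l A x) (hAB : A ⊆ B) : EscapesIn l B x :=
  hx.of_connectedComponentIn_subset ((connectedComponentIn_subset A x).trans hAB)

lemma of_mem_connectedComponentIn (hx : EscapesIn l A x) (hy : y ∈ connectedComponentIn A x) :
    EscapesIn l A y :=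
  escapesIn_of_isPreconnected isPreconnected_connectedComponentIn
    (connectedComponentIn_subset A x) hy hx

lemma of_mem_isPreconnected (hx : EscapesIn l A x) (hS : IsPreconnected S) (hSA : S ⊆ A)
    (hxS : x ∈ S) (hyS : y ∈ S) : EscapesIn l A y :=
  hx.of_mem_connectedComponentIn (hS.subset_connectedComponentIn hxS hSA hyS)

lemma map {Y : Type*} [TopologicalSpace Y] {k : Filter Y} {B : Set Y} {φ : X → Y}
    (hx : EscapesIn l A x) (hφ : Continuous φ) (hφl : Tendsto φ l k) (hφA : MapsTo φ A B) :
    EscapesIn k B (φ x) :=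
  escapesIn_of_isPreconnected
    (isPreconnected_connectedComponentIn.image φ hφ.continuousOn)
    (image_subset_iff.mpr fun _ hy => hφA (connectedComponentIn_subset A x hy))
    (mem_image_of_mem φ (mem_connectedComponentIn hx.mem))
    (hφl.frequently (Frequently.mono hx fun _ hy => mem_image_of_mem φ hy))

end EscapesIn

lemma exists_mem_closure_connectedComponentIn_notMem [LocallyConnectedSpace X]
    [PreconnectedSpace X] (hA : IsOpen A) (hx : x ∈ A) (hne : connectedComponentIn A x ≠ univ) :
    ∃ z ∈ closure (connectedComponentIn A x), z ∉ A := by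
  obtain ⟨z, hz⟩ := nonempty_frontier_iff.mpr ⟨⟨x, mem_connectedComponentIn hx⟩, hne⟩
  refine ⟨z, frontier_subset_closure hz, fun hzA => ?_⟩
  obtain ⟨w, hwz, hwx⟩ := mem_closure_iff.mp (frontier_subset_closure hz)
    (connectedComponentIn A z) hA.connectedComponentIn (mem_connectedComponentIn hzA)
  have hzx : z ∈ connectedComponentIn A x := by
    rw [connectedComponentIn_eq hwx, ← connectedComponentIn_eq hwz]
    exact mem_connectedComponentIn hzA
  exact hz.2 (by rwa [hA.connectedComponentIn.interior_eq])

end Escape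

section Maximin

variable {X : Type*} [TopologicalSpace X] {l l' : Filter X} {h : X → ℝ} {x y : X} {a b c : ℝ}

/-- Every point of an open superlevel set of `h` escapes to the end `l` inside that set. -/
def ConnectsToEnd (l : Filter X) (h : X → ℝ) : Prop :=
  ∀ c x, c < h x → EscapesIn l {y | c < h y} x

/-- The levels `c` such that `x` escapes to the end `l` without leaving `{h ≥ c}`. -/
def escapeLevels (l : Filter X) (h : X → ℝ) (x : X) : Set ℝ :=
  {c | EscapesIn l {y | c ≤ h y} x}

/-- The maximin value of `h` along the connected sets joining `x` to the end `l`, that is, the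
highest level at which `x` escapes to `l`. It is the junk value `0` if `x` escapes at no level. -/
noncomputable def maximin (l : Filter X) (h : X → ℝ) (x : X) : ℝ :=
  sSup (escapeLevels l h x)

lemma connectsToEnd_neg_iff :
    ConnectsToEnd l (-h) ↔ ∀ c x, h x < c → EscapesIn l {y | h y < c} x := by
  refine ⟨fun hh c x hx => ?_, fun hh c x hx => ?_⟩
  · simpa using hh (-c) x (by simpa using hx)
  · simpa [lt_neg] using hh (-c) x (by simpa [lt_neg] using hx)

lemma le_of_mem_escapeLevels (hc : c ∈ escapeLevels l h x) : c ≤ h x :=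
  EscapesIn.mem (A := {y | c ≤ h y}) hc

lemma le_maximin (hc : c ∈ escapeLevels l h x) : c ≤ maximin l h x :=
  le_csSup ⟨h x, fun _ => le_of_mem_escapeLevels⟩ hc

lemma maximin_le (hx : (escapeLevels l h x).Nonempty) : maximin l h x ≤ h x :=
  csSup_le hx fun _ => le_of_mem_escapeLevels

lemma mem_escapeLevels_of_lt_maximin (hx : (escapeLevels l h x).Nonempty)
    (hc : c < maximin l h x) : c ∈ escapeLevels l h x := by
  obtain ⟨d, hd, hcd⟩ := exists_lt_of_lt_csSup hx hc
  exact EscapesIn.mono hd fun _ hy => hcd.le.trans hy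

lemma connectsToEnd_maximin (hne : ∀ x, (escapeLevels l h x).Nonempty) :
    ConnectsToEnd l (maximin l h) := by
  intro c x hx
  obtain ⟨d, hcd, hdx⟩ := exists_between hx
  have hd : EscapesIn l {y | d ≤ h y} x := mem_escapeLevels_of_lt_maximin (hne x) hdx
  exact hd.of_connectedComponentIn_subset fun y hy =>
    hcd.trans_le (le_maximin (hd.of_mem_connectedComponentIn hy))

lemma maximin_le_of_isPreconnected {S : Set X} (hne : (escapeLevels l h y).Nonempty)
    (hS : IsPreconnected S) (hSc : ∀ z ∈ S, c ≤ h z) (hxS : x ∈ S) (hyS : y ∈ S)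
    (hx : maximin l h x < c) : maximin l h y ≤ c := by
  by_contra! hy
  have hyc : EscapesIn l {z | c ≤ h z} y := mem_escapeLevels_of_lt_maximin hne hy
  exact hx.not_ge (le_maximin (hyc.of_mem_isPreconnected hS hSc hyS hxS))

/- If `maximin l h x < c' < h x`, the component of `x` in `{h > c'}` cannot reach the end `l`.
On its closure `maximin l h ≤ c'`, and the closure contains a point where `h ≤ c'`, from which one
escapes to the end `l'`. -/
lemma connectsToEnd_neg_maximin [LocallyConnectedSpace X] [PreconnectedSpace X] [l.NeBot]
    (hh : Continuous h) (hne : ∀ x, (escapeLevels l h x).Nonempty)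
    (hl' : ConnectsToEnd l' (-h)) : ConnectsToEnd l' (-maximin l h) := by
  rw [connectsToEnd_neg_iff] at hl' ⊢
  intro c x hx
  have escapes_of_lt {z : X} (hz : h z < c) : EscapesIn l' {y | maximin l h y < c} z :=
    (hl' c z hz).mono fun y hy => (maximin_le (hne y)).trans_lt hy
  rcases lt_or_ge (h x) c with hxc | hxc
  · exact escapes_of_lt hxc
  obtain ⟨c', hxc', hcc'⟩ := exists_between hx
  set C := connectedComponentIn {y | c' < h y} x
  have hC : IsPreconnected (closure C) := isPreconnected_connectedComponentIn.closure
  have le_of_mem_closure : ∀ y ∈ closure C, c' ≤ h y := fun y hy =>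
    closure_minimal ((connectedComponentIn_subset _ x).trans fun _ hz => le_of_lt hz)
      (isClosed_le continuous_const hh) hy
  have hxC : x ∈ closure C :=
    subset_closure (mem_connectedComponentIn (show c' < h x from hcc'.trans_le hxc))
  have hCuniv : C ≠ univ := fun hC' => hxc'.not_ge <| le_maximin <|
    escapesIn_of_isPreconnected hC le_of_mem_closure hxC (.of_forall fun y => by simp [hC'])
  obtain ⟨z, hzC, hz⟩ := exists_mem_closure_connectedComponentIn_notMem
    (isOpen_lt continuous_const hh) (hcc'.trans_le hxc) hCuniv
  exact (escapes_of_lt ((not_lt.mp hz).trans_lt hcc')).of_mem_isPreconnected hC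
    (fun y hy => (maximin_le_of_isPreconnected (hne y) hC le_of_mem_closure hxC hy hxc').trans_lt
      hcc') hzC hxC

lemma maximin_sub_le_of_isPreconnected {S : Set X} (hne : (escapeLevels l h x).Nonempty)
    (hS : IsPreconnected S) (hSc : ∀ z ∈ S, h x - c ≤ h z) (hc : 0 ≤ c) (hxS : x ∈ S)
    (hyS : y ∈ S) : maximin l h x - c ≤ maximin l h y := by
  refine le_of_forall_lt fun d hd => ?_
  obtain ⟨e, hde, hex⟩ := exists_between (lt_sub_iff_add_lt.mp hd)
  refine (lt_sub_iff_add_lt.mpr hde).trans_le (le_maximin ?_)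
  have hx : EscapesIn l {z | e ≤ h z} x := mem_escapeLevels_of_lt_maximin hne hex
  refine (hx.mono fun z hz => ?_).of_mem_isPreconnected hS (fun z hz => ?_) hxS hyS
  · exact (sub_le_self e hc).trans hz
  · exact (sub_le_sub_right hx.mem c).trans (hSc z hz)

lemma continuous_maximin [LocallyConnectedSpace X] (hh : Continuous h)
    (hne : ∀ x, (escapeLevels l h x).Nonempty) : Continuous (maximin l h) := by
  refine continuous_iff_continuousAt.mpr fun x => Metric.tendsto_nhds.mpr fun ε hε => ?_
  set A : Set X := h ⁻¹' Metric.ball (h x) (ε / 4)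
  have hxA : x ∈ A := Metric.mem_ball_self (by positivity)
  have hA : IsOpen A := Metric.isOpen_ball.preimage hh
  have near {y z : X} (hy : y ∈ connectedComponentIn A x) (hz : z ∈ connectedComponentIn A x) :
      maximin l h y - ε / 2 ≤ maximin l h z := by
    refine maximin_sub_le_of_isPreconnected (hne y) isPreconnected_connectedComponentIn
      (fun w hw => ?_) (by positivity) hy hz
    have hyx : |h y - h x| < ε / 4 := connectedComponentIn_subset A x hy
    have hwx : |h w - h x| < ε / 4 := connectedComponentIn_subset A x hw
    linarith [(abs_lt.mp hyx).2, (abs_lt.mp hwx).1]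
  filter_upwards [hA.connectedComponentIn.mem_nhds (mem_connectedComponentIn hxA)] with y hy
  have hx := mem_connectedComponentIn hxA
  exact abs_lt.mpr ⟨by linarith [near hx hy], by linarith [near hy hx]⟩

lemma maximin_add_le_comp {φ : X → X} (hne : (escapeLevels l h x).Nonempty) (hφ : Continuous φ)
    (hφl : Tendsto φ l l) (ha : ∀ y, h y + a ≤ h (φ y)) :
    maximin l h x + a ≤ maximin l h (φ x) := by
  refine le_of_forall_lt fun c hc => ?_
  obtain ⟨d, hcd, hdx⟩ := exists_between (sub_lt_iff_lt_add.mpr hc)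
  have hx : EscapesIn l {y | d ≤ h y} x := mem_escapeLevels_of_lt_maximin hne hdx
  exact (sub_lt_iff_lt_add.mp hcd).trans_le <| le_maximin <|
    hx.map hφ hφl fun y hy => (add_le_add_left hy a).trans (ha y)

lemma maximin_apply_sub_mem_Icc {φ : X ≃ₜ X} (hne : ∀ x, (escapeLevels l h x).Nonempty)
    (hφ : Tendsto φ l l) (hφ' : Tendsto φ.symm l l) (hab : ∀ x, h (φ x) - h x ∈ Icc a b) (x : X) :
    maximin l h (φ x) - maximin l h x ∈ Icc a b := by
  have lower := maximin_add_le_comp (hne x) φ.continuous hφ (a := a)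
    fun y => by linarith [(hab y).1]
  have upper := maximin_add_le_comp (hne (φ x)) φ.symm.continuous hφ' (a := -b) fun y => by
    have := (hab (φ.symm y)).2
    rw [φ.apply_symm_apply] at this
    linarith
  rw [φ.symm_apply_apply] at upper
  exact ⟨by linarith, by linarith⟩

/-- Two successive maximin operations, for the superlevel sets and the end `l` and then for the
sublevel sets and the end `l'`. The second operation does not destroy what the first one achieves:
see `connectsToEnd_endRegularization`. -/
noncomputable def endRegularization (l l' : Filter X) (h : X → ℝ) : X → ℝ :=
  -maximin l' (-maximin l h)

lemma nonempty_escapeLevels_neg_maximin (hne : ∀ x, (escapeLevels l h x).Nonempty)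
    (hx : (escapeLevels l' (-h) x).Nonempty) : (escapeLevels l' (-maximin l h) x).Nonempty :=
  hx.mono fun _ hc => EscapesIn.mono hc fun y hy => hy.trans (neg_le_neg (maximin_le (hne y)))

section Regularization

variable (hl : ∀ x, (escapeLevels l h x).Nonempty) (hl' : ∀ x, (escapeLevels l' (-h) x).Nonempty)
include hl hl'

lemma continuous_endRegularization [LocallyConnectedSpace X] (hh : Continuous h) :
    Continuous (endRegularization l l' h) :=
  (continuous_maximin (continuous_maximin hh hl).neg
    fun x => nonempty_escapeLevels_neg_maximin hl (hl' x)).neg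

lemma connectsToEnd_endRegularization [LocallyConnectedSpace X] [PreconnectedSpace X] [l'.NeBot]
    (hh : Continuous h) : ConnectsToEnd l (endRegularization l l' h) :=
  connectsToEnd_neg_maximin (continuous_maximin hh hl).neg
    (fun x => nonempty_escapeLevels_neg_maximin hl (hl' x))
    (by simpa only [neg_neg] using connectsToEnd_maximin hl)

lemma connectsToEnd_neg_endRegularization : ConnectsToEnd l' (-endRegularization l l' h) := by
  simpa only [endRegularization, neg_neg] using
    connectsToEnd_maximin fun x => nonempty_escapeLevels_neg_maximin hl (hl' x)

lemma endRegularization_apply_sub_mem_Icc {φ : X ≃ₜ X} (hφl : Tendsto φ l l)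
    (hφl_symm : Tendsto φ.symm l l) (hφl' : Tendsto φ l' l') (hφl'_symm : Tendsto φ.symm l' l')
    (hab : ∀ x, h (φ x) - h x ∈ Icc a b) (x : X) :
    endRegularization l l' h (φ x) - endRegularization l l' h x ∈ Icc a b := by
  have first := maximin_apply_sub_mem_Icc hl hφl hφl_symm hab
  have second := maximin_apply_sub_mem_Icc (a := -b) (b := -a)
    (fun x => nonempty_escapeLevels_neg_maximin hl (hl' x)) hφl' hφl'_symm
    (fun y => by
      simp only [Pi.neg_apply]
      exact ⟨by linarith [(first y).2], by linarith [(first y).1]⟩) x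
  simp only [endRegularization, Pi.neg_apply]
  exact ⟨by linarith [second.2], by linarith [second.1]⟩

end Regularization

end Maximin

/-! ### Simple arcs -/

section Arcs

variable {X Y : Type*} [TopologicalSpace X] [TopologicalSpace Y] {U : Set X} {x y z : X}
  {γ γ' : ℝ → X} {a b c : ℝ}

/-- The restriction of `γ` to the segment `[a, b]` is a simple arc, possibly reduced to a point,
from `x` to `y` inside `U`. -/
structure IsArcIn (U : Set X) (x y : X) (γ : ℝ → X) (a b : ℝ) : Prop where
  le : a ≤ b
  continuousOn : ContinuousOn γ (Icc a b)
  injOn : InjOn γ (Icc a b)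
  mapsTo : MapsTo γ (Icc a b) U
  source : γ a = x
  target : γ b = y

/-- The points `x` and `y` are the endpoints of a simple arc inside `U`. -/
def ArcJoinedIn (U : Set X) (x y : X) : Prop :=
  ∃ γ a b, IsArcIn U x y γ a b

lemma arcJoinedIn_refl (hx : x ∈ U) : ArcJoinedIn U x x :=
  ⟨fun _ => x, 0, 0, le_rfl, continuousOn_const, by simp, fun _ _ => hx, rfl, rfl⟩

lemma ArcJoinedIn.map {φ : X → Y} {W : Set Y} (h : ArcJoinedIn U x y) (hφ : ContinuousOn φ U)
    (hφ' : InjOn φ U) (hUW : MapsTo φ U W) : ArcJoinedIn W (φ x) (φ y) := by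
  obtain ⟨γ, a, b, hγ⟩ := h
  exact ⟨φ ∘ γ, a, b, hγ.le, hφ.comp hγ.continuousOn hγ.mapsTo, hφ'.comp hγ.injOn hγ.mapsTo,
    hUW.comp hγ.mapsTo, congrArg φ hγ.source, congrArg φ hγ.target⟩

namespace IsArcIn

lemma restrict_right (h : IsArcIn U x y γ a b) (hc : c ∈ Icc a b) : IsArcIn U x (γ c) γ a c where
  le := hc.1
  continuousOn := h.continuousOn.mono (Icc_subset_Icc_right hc.2)
  injOn := h.injOn.mono (Icc_subset_Icc_right hc.2)
  mapsTo := h.mapsTo.mono_left (Icc_subset_Icc_right hc.2)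
  source := h.source
  target := rfl

lemma restrict_left (h : IsArcIn U x y γ a b) (hc : c ∈ Icc a b) : IsArcIn U (γ c) y γ c b where
  le := hc.2
  continuousOn := h.continuousOn.mono (Icc_subset_Icc_left hc.1)
  injOn := h.injOn.mono (Icc_subset_Icc_left hc.1)
  mapsTo := h.mapsTo.mono_left (Icc_subset_Icc_left hc.1)
  source := rfl
  target := h.target

lemma comp_add_const (h : IsArcIn U x y γ a b) (s : ℝ) :
    IsArcIn U x y (fun t => γ (t + s)) (a - s) (b - s) := by
  have hmaps : MapsTo (· + s) (Icc (a - s) (b - s)) (Icc a b) := fun t ht =>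
    ⟨sub_le_iff_le_add.mp ht.1, le_sub_iff_add_le.mp ht.2⟩
  exact ⟨sub_le_sub_right h.le s, h.continuousOn.comp (by fun_prop) hmaps,
    h.injOn.comp (add_left_injective s).injOn hmaps, h.mapsTo.comp hmaps,
    by simpa using h.source, by simpa using h.target⟩

lemma append (h : IsArcIn U x y γ a b) (h' : IsArcIn U y z γ' b c)
    (hdisj : ∀ s ∈ Icc a b, ∀ t ∈ Icc b c, γ s = γ' t → t = b) :
    IsArcIn U x z (fun t => if t ≤ b then γ t else γ' t) a c := by
  have inl {t : ℝ} (ht : t ∈ Icc a c) (htb : t ≤ b) : t ∈ Icc a b := ⟨ht.1, htb⟩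
  have inr {t : ℝ} (ht : t ∈ Icc a c) (htb : ¬t ≤ b) : t ∈ Icc b c := ⟨(not_le.mp htb).le, ht.2⟩
  refine ⟨h.le.trans h'.le, ?_, fun s hs t ht hst => ?_, fun t ht => ?_, ?_, ?_⟩
  · rw [← Icc_union_Icc_eq_Icc h.le h'.le]
    refine ContinuousOn.union_of_isClosed (h.continuousOn.congr fun t ht => if_pos ht.2)
      (h'.continuousOn.congr fun t ht => ?_) isClosed_Icc isClosed_Icc
    rcases ht.1.eq_or_lt with rfl | hbt
    · simp only [le_refl, if_true, h.target, h'.source]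
    · exact if_neg hbt.not_ge
  · by_cases hsb : s ≤ b <;> by_cases htb : t ≤ b <;> simp only [hsb, htb, if_true, if_false] at hst
    · exact h.injOn (inl hs hsb) (inl ht htb) hst
    · exact absurd (hdisj s (inl hs hsb) t (inr ht htb) hst).le htb
    · exact absurd (hdisj t (inl ht htb) s (inr hs hsb) hst.symm).le hsb
    · exact h'.injOn (inr hs hsb) (inr ht htb) hst
  · by_cases htb : t ≤ b <;> simp only [htb, if_true, if_false]
    · exact h.mapsTo (inl ht htb)
    · exact h'.mapsTo (inr ht htb)
  · simp only [h.le, if_true, h.source]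
  · rcases h'.le.eq_or_lt with rfl | hbc
    · simp only [le_refl, if_true, h.target, ← h'.source, h'.target]
    · simp only [hbc.not_ge, if_false, h'.target]

end IsArcIn

/- Follow the first arc until it hits the second one, then follow the second one. -/
lemma ArcJoinedIn.trans [T2Space X] (h : ArcJoinedIn U x y) (h' : ArcJoinedIn U y z) :
    ArcJoinedIn U x z := by
  obtain ⟨γ, a, b, hγ⟩ := h
  obtain ⟨γ', c, d, hγ'⟩ := h'
  set K : Set X := γ' '' Icc c d
  have hK : IsClosed K := (isCompact_Icc.image_of_continuousOn hγ'.continuousOn).isClosed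
  have hb : b ∈ Icc a b ∩ γ ⁻¹' K :=
    ⟨right_mem_Icc.mpr hγ.le, c, left_mem_Icc.mpr hγ'.le, hγ'.source.trans hγ.target.symm⟩
  have hcompact : IsCompact (Icc a b ∩ γ ⁻¹' K) := isCompact_Icc.of_isClosed_subset
    (hγ.continuousOn.preimage_isClosed_of_isClosed isClosed_Icc hK) inter_subset_left
  obtain ⟨s, ⟨hs, t, ht, hst⟩, hsmin⟩ := hcompact.exists_isLeast ⟨b, hb⟩
  have tail := (hγ'.restrict_left ht).comp_add_const (t - s)
  rw [sub_sub_cancel, hst] at tail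
  refine ⟨_, _, _, (hγ.restrict_right hs).append tail fun r hr r' hr' hrr' => ?_⟩
  have mem_tail : r' + (t - s) ∈ Icc c d :=
    ⟨by linarith [ht.1, hr'.1], by linarith [hr'.2]⟩
  have hrs : r = s := hr.2.antisymm (hsmin ⟨⟨hr.1, hr.2.trans hs.2⟩, _, mem_tail, hrr'.symm⟩)
  have hr't : r' + (t - s) = t := hγ'.injOn mem_tail ht (by rw [← hrr', hrs, hst])
  linarith

lemma arcJoinedIn_of_convex {E : Type*} [AddCommGroup E] [Module ℝ E] [TopologicalSpace E]
    [IsTopologicalAddGroup E] [ContinuousSMul ℝ E] {C : Set E} (hC : Convex ℝ C) {v w : E}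
    (hv : v ∈ C) (hw : w ∈ C) : ArcJoinedIn C v w := by
  rcases eq_or_ne v w with rfl | hvw
  · exact arcJoinedIn_refl hv
  · exact ⟨AffineMap.lineMap v w, 0, 1, zero_le_one, by fun_prop,
      (AffineMap.lineMap_injective ℝ hvw).injOn, fun t ht => hC.lineMap_mem hv hw ht,
      by simp, by simp⟩

/- First time at `q`, then the last previous time at `p`. -/
lemma exists_Ioo_forall_ne_of_apply_eq [T1Space X] {φ : ℝ → X} {p q : X} (hpq : p ≠ q)
    (hab : a ≤ b) (hφ : ContinuousOn φ (Icc a b)) (ha : φ a = p) (hb : φ b = q) :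
    ∃ a' b', a ≤ a' ∧ a' < b' ∧ b' ≤ b ∧ φ a' = p ∧ φ b' = q ∧
      ∀ t ∈ Ioo a' b', φ t ≠ p ∧ φ t ≠ q := by
  have compact {a b : ℝ} (hφ : ContinuousOn φ (Icc a b)) (r : X) :
      IsCompact (Icc a b ∩ φ ⁻¹' {r}) :=
    isCompact_Icc.of_isClosed_subset
      (hφ.preimage_isClosed_of_isClosed isClosed_Icc isClosed_singleton) inter_subset_left
  obtain ⟨b', ⟨hb', hb'q : φ b' = q⟩, hb'min⟩ :=
    (compact hφ q).exists_isLeast ⟨b, right_mem_Icc.mpr hab, hb⟩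
  obtain ⟨a', ⟨ha', ha'p : φ a' = p⟩, ha'max⟩ :=
    (compact (hφ.mono (Icc_subset_Icc_right hb'.2)) p).exists_isGreatest
      ⟨a, left_mem_Icc.mpr hb'.1, ha⟩
  have hne : a' ≠ b' := fun h => hpq (by rw [← ha'p, ← hb'q, h])
  refine ⟨a', b', ha'.1, ha'.2.lt_of_ne hne, hb'.2, ha'p, hb'q, fun t ht => ⟨fun htp => ?_,
    fun htq => ?_⟩⟩
  · exact ht.1.not_ge (ha'max ⟨⟨ha'.1.trans ht.1.le, ht.2.le⟩, htp⟩)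
  · exact ht.2.not_ge (hb'min ⟨⟨ha'.1.trans ht.1.le, ht.2.le.trans hb'.2⟩, htq⟩)

end Arcs

section StripArcs

variable {U : Set Strip} {x y : Strip}

lemma exists_mem_nhds_forall_arcJoinedIn (hU : U ∈ 𝓝 x) :
    ∃ N ∈ 𝓝 x, ∀ y ∈ N, ∀ z ∈ N, ArcJoinedIn U y z := by
  obtain ⟨r, hr, hrU⟩ := Metric.mem_nhds_iff.mp hU
  refine ⟨Metric.ball x r, Metric.ball_mem_nhds x hr, fun y hy z hz => ?_⟩
  set ι : Strip → ℝ × ℝ := Prod.map id Subtype.val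
  set ψ : ℝ × ℝ → Strip := Prod.map id (projIcc 0 1 zero_le_one)
  set C : Set (ℝ × ℝ) := Metric.ball (ι x) r ∩ univ ×ˢ Icc 0 1
  have hC : Convex ℝ C := (convex_ball _ _).inter (convex_univ.prod (convex_Icc 0 1))
  have ψ_ι (w : Strip) : ψ (ι w) = w := Prod.ext rfl (projIcc_val zero_le_one w.2)
  have ι_ψ : LeftInvOn ι ψ C := fun v hv =>
    Prod.ext rfl (congrArg Subtype.val (projIcc_of_mem zero_le_one hv.2.2))
  have hψC : MapsTo ψ C U := fun v hv => hrU <| by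
    have hv' : ι (ψ v) ∈ Metric.ball (ι x) r := by rw [ι_ψ hv]; exact hv.1
    exact hv'
  have hψ : Continuous ψ := continuous_id.prodMap continuous_projIcc
  have hyz : ArcJoinedIn C (ι y) (ι z) :=
    arcJoinedIn_of_convex hC ⟨hy, mem_univ _, y.2.2⟩ ⟨hz, mem_univ _, z.2.2⟩
  simpa only [ψ_ι] using hyz.map hψ.continuousOn ι_ψ.injOn hψC

lemma exists_joinsBoundaryS_of_arcJoinedIn (h : ArcJoinedIn U x y) (hx : x.2 = 0) (hy : y.2 = 1) :
    ∃ γ, JoinsBoundaryS γ ∧ ∀ t, γ t ∈ U := by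
  obtain ⟨γ, a, b, hγ⟩ := h
  obtain ⟨a', b', haa', hab', hbb', ha', hb', hne⟩ := exists_Ioo_forall_ne_of_apply_eq
    (φ := fun t => (γ t).2) zero_ne_one hγ.le (continuous_snd.comp_continuousOn hγ.continuousOn)
    (by rw [hγ.source, hx]) (by rw [hγ.target, hy])
  set τ : unitInterval → ℝ := fun t => AffineMap.lineMap a' b' (t : ℝ)
  have hτ : Continuous τ := by fun_prop
  have τ_mem (t : unitInterval) : τ t ∈ Icc a b :=
    Icc_subset_Icc haa' hbb' ((convex_Icc a' b').lineMap_mem (left_mem_Icc.mpr hab'.le)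
      (right_mem_Icc.mpr hab'.le) t.2)
  have τ_inj : τ.Injective :=
    (AffineMap.lineMap_injective ℝ hab'.ne).comp Subtype.val_injective
  have τ_mem_Ioo {t : unitInterval} (h0 : t ≠ 0) (h1 : t ≠ 1) : τ t ∈ Ioo a' b' :=
    ⟨(left_lt_lineMap_iff_lt (unitInterval.pos_iff_ne_zero.mpr h0)).mpr hab',
      (lineMap_lt_right_iff_lt (unitInterval.lt_one_iff_ne_one.mpr h1)).mpr hab'⟩
  refine ⟨γ ∘ τ, ⟨hγ.continuousOn.comp_continuous hτ τ_mem, fun s t hst =>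
    τ_inj (hγ.injOn (τ_mem s) (τ_mem t) hst), ?_, ?_, fun t h0 h1 => ?_⟩,
    fun t => hγ.mapsTo (τ_mem t)⟩
  · simp [τ, ha']
  · simp [τ, hb']
  · obtain ⟨h0, h1⟩ := hne _ (τ_mem_Ioo h0 h1)
    exact ⟨unitInterval.pos_iff_ne_zero.mpr h0, unitInterval.lt_one_iff_ne_one.mpr h1⟩

end StripArcs

/-! ### Crossing the strip near a level -/

section VerticalCrossing

lemma eq_of_homotopy_const {A E X : Type*} [TopologicalSpace A] [PreconnectedSpace A]
    [TopologicalSpace E] [TopologicalSpace X] {p : E → X} (hp : IsCoveringMap p)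
    {H : C(unitInterval × A, X)} {g : C(A, E)} (hHg : ∀ a, H (0, a) = p (g a)) {a b : A}
    (ha : ∀ t, H (t, a) = H (0, a)) (hb : ∀ t, H (t, b) = H (0, b))
    (htop : ∀ c, H (1, c) = H (1, a)) : g a = g b := by
  set L := hp.liftHomotopy H g hHg
  have L_lifts (y : unitInterval × A) : p (L y) = H y :=
    congrFun (hp.liftHomotopy_lifts H g hHg) y
  have L_zero (c : A) : L (0, c) = g c := hp.liftHomotopy_zero H g hHg c
  have L_vertical {c : A} (hc : ∀ t, H (t, c) = H (0, c)) : L (0, c) = L (1, c) :=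
    hp.const_of_comp (g := fun t => L (t, c)) (by fun_prop)
      (fun t t' => by rw [L_lifts, L_lifts, hc t, hc t']) 0 1
  have L_top : L (1, a) = L (1, b) :=
    hp.const_of_comp (g := fun c => L (1, c)) (by fun_prop)
      (fun c c' => by rw [L_lifts, L_lifts, htop c, htop c']) a b
  rw [← L_zero, ← L_zero, L_vertical ha, L_vertical hb, L_top]

lemma coe_projIcc_eq_zero {v : ℝ} (hv : v ∉ Ioo (0 : ℝ) 1) :
    ((projIcc (0 : ℝ) 1 zero_le_one v : ℝ) : AddCircle (1 : ℝ)) = 0 := by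
  rcases le_or_gt v 0 with h0 | h0
  · simp [projIcc_of_le_left zero_le_one h0]
  · have h1 : 1 ≤ v := not_lt.mp fun h1 => hv ⟨h0, h1⟩
    simp [projIcc_of_right_le zero_le_one h1]

/- The truncation of `u` to `[0, 1]`, collapsed to `0` outside `V`, is a well-defined circle-valued
map. If `V` did not reach the top, a lift of this map would be constant on the vertical lines
`x = l` and `x = r` and on the top, whereas it varies from `0` to `1` on the bottom. -/
lemma exists_top_mem_of_frontier_disjoint {u : Strip → ℝ} (hu : Continuous u) {l r : ℝ}
    (hl : ∀ t, u (l, t) ≤ 0) (hr : ∀ t, 1 ≤ u (r, t)) {V : Set Strip}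
    (hV : Disjoint (frontier V) (u ⁻¹' Ioo 0 1)) (hbot : ∀ x, u (x, 0) ∈ Ioo 0 1 → (x, 0) ∈ V) :
    ∃ y ∈ V, y.2 = 1 := by
  classical
  by_contra! htop
  set w : Strip → ℝ := fun y => projIcc 0 1 zero_le_one (u y)
  have hw : Continuous w := by fun_prop
  set G : Strip → AddCircle (1 : ℝ) := fun y => if y ∈ V then (w y : AddCircle (1 : ℝ)) else 0
  have hG : Continuous G := continuous_if
    (fun y hy => coe_projIcc_eq_zero (disjoint_left.mp hV hy))
    ((AddCircle.continuous_mk' 1).comp hw).continuousOn continuousOn_const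
  have G_eq_zero {y : Strip} (hy : u y ∉ Ioo 0 1) : G y = 0 := by
    simp only [G, w, coe_projIcc_eq_zero hy, ite_self]
  have G_bot (x : ℝ) : G (x, 0) = (w (x, 0) : AddCircle (1 : ℝ)) := by
    by_cases hx : u (x, 0) ∈ Ioo 0 1
    · exact if_pos (hbot x hx)
    · rw [G_eq_zero hx, coe_projIcc_eq_zero hx]
  have w_bot_eq : w (l, 0) = w (r, 0) := eq_of_homotopy_const
    (AddCircle.isCoveringMap_coe (1 : ℝ)) (H := ⟨fun y => G (y.2, y.1), by fun_prop⟩)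
    (g := ⟨fun x => w (x, 0), by fun_prop⟩) G_bot
    (fun t => (G_eq_zero fun h => (hl t).not_gt h.1).trans
      (G_eq_zero fun h => (hl 0).not_gt h.1).symm)
    (fun t => (G_eq_zero fun h => (hr t).not_gt h.2).trans
      (G_eq_zero fun h => (hr 0).not_gt h.2).symm)
    (fun x => (if_neg fun h => htop _ h rfl).trans (if_neg fun h => htop _ h rfl).symm)
  have w_left : w (l, 0) = 0 := by simp [w, projIcc_of_le_left zero_le_one (hl 0)]
  have w_right : w (r, 0) = 1 := by simp [w, projIcc_of_right_le zero_le_one (hr 0)]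
  exact zero_ne_one (w_left.symm.trans (w_bot_eq.trans w_right))

lemma exists_joinsBoundaryS_mem_Ioo {u : Strip → ℝ} (hu : Continuous u) {l r a b : ℝ} (hab : a < b)
    (hl : ∀ t, u (l, t) ≤ a) (hr : ∀ t, b ≤ u (r, t)) :
    ∃ γ, JoinsBoundaryS γ ∧ ∀ t, u (γ t) ∈ Ioo a b := by
  set U : Set Strip := u ⁻¹' Ioo a b
  have hU : IsOpen U := isOpen_Ioo.preimage hu
  set V : Set Strip := {y | ∃ x, x.2 = 0 ∧ ArcJoinedIn U x y}
  have hV : Disjoint (frontier V) U := by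
    refine disjoint_left.mpr fun y hyV hyU => ?_
    obtain ⟨N, hN, hNU⟩ := exists_mem_nhds_forall_arcJoinedIn (hU.mem_nhds hyU)
    obtain ⟨z, hzN, x, hx, hxz⟩ := mem_closure_iff_nhds.mp (frontier_subset_closure hyV) N hN
    exact hyV.2 (mem_interior_iff_mem_nhds.mpr
      (mem_of_superset hN fun w hw => ⟨x, hx, hxz.trans (hNU z hzN w hw)⟩))
  have hba : 0 < b - a := sub_pos.mpr hab
  have rescale (y : Strip) : (u y - a) / (b - a) ∈ Ioo 0 1 ↔ u y ∈ Ioo a b := by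
    simp only [mem_Ioo, lt_div_iff₀ hba, div_lt_iff₀ hba, zero_mul, one_mul, sub_pos,
      sub_lt_sub_iff_right]
  obtain ⟨y, ⟨x, hx, hxy⟩, hy⟩ := exists_top_mem_of_frontier_disjoint
    (u := fun y => (u y - a) / (b - a)) (by fun_prop)
    (fun t => div_nonpos_of_nonpos_of_nonneg (sub_nonpos.mpr (hl t)) hba.le)
    (fun t => (one_le_div hba).mpr (sub_le_sub_right (hr t) a))
    (hV.mono_right fun y hy => (rescale y).mp hy)
    (fun x hx => ⟨(x, 0), rfl, arcJoinedIn_refl ((rescale (x, 0)).mp hx)⟩)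
  exact exists_joinsBoundaryS_of_arcJoinedIn hxy hx hy

end VerticalCrossing

/-! ### The two sides of a curve crossing the strip -/

section Sides

variable {γ : unitInterval → Strip} {x : Strip} {c : ℝ}

/- Otherwise both curves stay at distance at least `ε` from each other. In the parameter square,
the set where their abscissae differ by less than `ε` is crossed from bottom to top by a curve,
along which the difference of the heights changes sign. -/
lemma exists_apply_eq_of_joinsBoundaryS (hγ : JoinsBoundaryS γ) {α : unitInterval → Strip}
    (hα : Continuous α) (hl : ∀ t, (α 0).1 < (γ t).1) (hr : ∀ t, (γ t).1 < (α 1).1) :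
    ∃ s t, α s = γ t := by
  by_contra! hne
  have hγc : Continuous γ := hγ.1
  obtain ⟨ε, hε, hεle⟩ := isCompact_univ.exists_forall_le'
    (f := fun y : unitInterval × unitInterval =>
      min (dist (α y.1) (γ y.2)) (min ((γ y.2).1 - (α 0).1) ((α 1).1 - (γ y.2).1)))
    (by fun_prop) (a := 0) fun y _ => lt_min (dist_pos.mpr (hne y.1 y.2))
      (lt_min (sub_pos.mpr (hl y.2)) (sub_pos.mpr (hr y.2)))
  simp only [mem_univ, forall_const, Prod.forall, le_min_iff] at hεle
  set ξ : ℝ → unitInterval := projIcc 0 1 zero_le_one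
  have ξ_zero : ξ 0 = 0 := projIcc_left zero_le_one
  have ξ_one : ξ 1 = 1 := projIcc_right zero_le_one
  obtain ⟨η, hη, hηε⟩ := exists_joinsBoundaryS_mem_Ioo
    (u := fun y => (α (ξ y.1)).1 - (γ y.2).1) (by fun_prop) (l := 0) (r := 1) (neg_lt_self hε)
    (fun t => by simp only [ξ_zero]; linarith [(hεle 0 t).2.1])
    (fun t => by simp only [ξ_one]; linarith [(hεle 0 t).2.2])
  have hηc : Continuous η := hη.1
  have γ_bot : (γ (η 0).2).2 = 0 := by
    rw [show (η 0).2 = 0 from Subtype.ext hη.2.2.1]; exact Subtype.ext hγ.2.2.1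
  have γ_top : (γ (η 1).2).2 = 1 := by
    rw [show (η 1).2 = 1 from Subtype.ext hη.2.2.2.1]; exact Subtype.ext hγ.2.2.2.1
  obtain ⟨s, hs⟩ : ∃ s, (γ (η s).2).2 = (α (ξ (η s).1)).2 :=
    intermediate_value_univ₂ (a := 0) (b := 1) (by fun_prop) (by fun_prop)
      (γ_bot.trans_le unitInterval.nonneg') (unitInterval.le_one'.trans_eq γ_top.symm)
  have hdist : dist (α (ξ (η s).1)) (γ (η s).2) = |(α (ξ (η s).1)).1 - (γ (η s).2).1| := by
    rw [Prod.dist_eq, hs, dist_self, max_eq_left dist_nonneg, Real.dist_eq]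
  exact (abs_lt.mpr (hηε s)).not_ge (hdist ▸ (hεle (ξ (η s).1) (η s).2).1)

instance unitInterval_locallyPathConnectedSpace : LocallyPathConnectedSpace unitInterval :=
  (convex_Icc (0 : ℝ) 1).locallyPathConnectedSpace

lemma not_onLeftS_of_onRightS (hγ : JoinsBoundaryS γ) (hx : OnRightS γ x) : ¬OnLeftS γ x := by
  rintro ⟨q', hq', hxq'⟩
  obtain ⟨q, hq, hxq⟩ := hx
  have hopen : IsOpen (range γ)ᶜ := (isCompact_range hγ.1).isClosed.isOpen_compl
  have mem_compl : q ∈ (range γ)ᶜ := by rintro ⟨t, rfl⟩; exact lt_irrefl _ (hq t)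
  have mem_compl' : q' ∈ (range γ)ᶜ := by rintro ⟨t, rfl⟩; exact lt_irrefl _ (hq' t)
  have hpath : IsPathConnected (connectedComponentIn (range γ)ᶜ q) :=
    hopen.connectedComponentIn.isConnected_iff_isPathConnected.mp
      (isConnected_connectedComponentIn_iff.mpr mem_compl)
  have hq'q : q' ∈ connectedComponentIn (range γ)ᶜ q := by
    rw [connectedComponentIn_eq hxq, ← connectedComponentIn_eq hxq']
    exact mem_connectedComponentIn mem_compl'
  obtain ⟨α, hα⟩ := hpath.joinedIn q' hq'q q (mem_connectedComponentIn mem_compl)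
  obtain ⟨s, t, hst⟩ := exists_apply_eq_of_joinsBoundaryS hγ α.continuous
    (by simpa only [α.source] using hq') (by simpa only [α.target] using hq)
  exact connectedComponentIn_subset _ _ (hα s) ⟨t, hst.symm⟩

/-- The end `x₁ → +∞` of the strip. -/
def rightEnd : Filter Strip := comap Prod.fst atTop

/-- The end `x₁ → -∞` of the strip. -/
def leftEnd : Filter Strip := comap Prod.fst atBot

instance rightEnd_neBot : rightEnd.NeBot := comap_fst_neBot

instance leftEnd_neBot : leftEnd.NeBot := comap_fst_neBot

lemma onRightS_of_escapesIn (hγ : Continuous γ) (hx : EscapesIn rightEnd (range γ)ᶜ x) :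
    OnRightS γ x := by
  obtain ⟨M, hM⟩ := (isCompact_range (continuous_fst.comp hγ)).bddAbove
  have hfar : ∀ᶠ q in rightEnd, M < q.1 := tendsto_comap.eventually (eventually_gt_atTop M)
  obtain ⟨q, hqx, hMq⟩ := (Frequently.and_eventually hx hfar).exists
  exact ⟨q, fun t => (hM ⟨t, rfl⟩).trans_lt hMq,
    connectedComponentIn_eq hqx ▸ mem_connectedComponentIn hx.mem⟩

lemma onLeftS_of_escapesIn (hγ : Continuous γ) (hx : EscapesIn leftEnd (range γ)ᶜ x) :
    OnLeftS γ x := by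
  obtain ⟨M, hM⟩ := (isCompact_range (continuous_fst.comp hγ)).bddBelow
  have hfar : ∀ᶠ q in leftEnd, q.1 < M := tendsto_comap.eventually (eventually_lt_atBot M)
  obtain ⟨q, hqx, hMq⟩ := (Frequently.and_eventually hx hfar).exists
  exact ⟨q, fun t => hMq.trans_le (hM ⟨t, rfl⟩),
    connectedComponentIn_eq hqx ▸ mem_connectedComponentIn hx.mem⟩

lemma onRightS_of_lt {g : Strip → ℝ} (hg : ConnectsToEnd rightEnd g) (hγ : Continuous γ)
    (hγc : ∀ t, g (γ t) ≤ c) (hx : c < g x) : OnRightS γ x := by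
  refine onRightS_of_escapesIn hγ ((hg c x hx).mono ?_)
  rintro y hy ⟨t, rfl⟩
  exact (hγc t).not_gt hy

lemma onLeftS_of_lt {g : Strip → ℝ} (hg : ConnectsToEnd leftEnd (-g)) (hγ : Continuous γ)
    (hγc : ∀ t, c ≤ g (γ t)) (hx : g x < c) : OnLeftS γ x := by
  refine onLeftS_of_escapesIn hγ ((connectsToEnd_neg_iff.mp hg c x hx).mono ?_)
  rintro y hy ⟨t, rfl⟩
  exact (hγc t).not_gt hy

end Sides

/-! ### Deck transformations and lifts -/

section Deck

/-- The deck transformation `(x₁, x₂) ↦ (x₁ + k, x₂)` of the covering `pA`. -/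
def deck (k : ℤ) : Strip ≃ₜ Strip :=
  (Homeomorph.addRight (k : ℝ)).prodCongr (Homeomorph.refl unitInterval)

@[simp] lemma deck_fst (k : ℤ) (x : Strip) : (deck k x).1 = x.1 + k := rfl

@[simp] lemma deck_snd (k : ℤ) (x : Strip) : (deck k x).2 = x.2 := rfl

lemma deck_deck (j k : ℤ) (x : Strip) : deck j (deck k x) = deck (j + k) x :=
  Prod.ext (by simp only [deck_fst, Int.cast_add]; ring) rfl

lemma deck_left_injective (x : Strip) : Function.Injective fun k => deck k x := fun j k hjk =>
  Int.cast_injective (add_left_cancel (congrArg Prod.fst hjk : x.1 + (j : ℝ) = x.1 + k))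

lemma continuous_pA : Continuous pA :=
  ((AddCircle.continuous_mk' 1).comp continuous_fst).prodMk continuous_snd

lemma coe_eq_coe_iff_exists_int {s t : ℝ} :
    (s : AddCircle (1 : ℝ)) = t ↔ ∃ k : ℤ, t = s + k := by
  rw [eq_comm, ← sub_eq_zero, ← AddCircle.coe_sub, AddCircle.coe_eq_zero_iff]
  simp only [zsmul_eq_mul, mul_one, eq_comm (b := t - s), sub_eq_iff_eq_add']

lemma pA_eq_pA_iff {x y : Strip} : pA x = pA y ↔ ∃ k, y = deck k x := by
  simp only [pA, Prod.ext_iff, coe_eq_coe_iff_exists_int, deck_fst, deck_snd, exists_and_right,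
    eq_comm]

@[simp] lemma pA_deck (k : ℤ) (x : Strip) : pA (deck k x) = pA x :=
  (pA_eq_pA_iff.mpr ⟨k, rfl⟩).symm

lemma exists_forall_eq_deck_of_pA_comp_eq {X : Type*} [TopologicalSpace X] [PreconnectedSpace X]
    {c c' : X → Strip} (hc : Continuous c) (hc' : Continuous c')
    (h : ∀ t, pA (c t) = pA (c' t)) : ∃ k, ∀ t, c' t = deck k (c t) := by
  rcases isEmpty_or_nonempty X with hX | ⟨⟨t₀⟩⟩
  · exact ⟨0, fun t => (IsEmpty.false t).elim⟩
  obtain ⟨k, hk⟩ := pA_eq_pA_iff.mp (h t₀)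
  have coe_sub_eq_zero (t : X) : (((c' t).1 - (c t).1 : ℝ) : AddCircle (1 : ℝ)) = 0 := by
    rw [AddCircle.coe_sub, sub_eq_zero]
    exact (congrArg Prod.fst (h t)).symm
  refine ⟨k, fun t => Prod.ext ?_ (congrArg Prod.snd (h t)).symm⟩
  have := (AddCircle.isCoveringMap_coe (1 : ℝ)).const_of_comp (g := fun t => (c' t).1 - (c t).1)
    (by fun_prop) (fun t t' => (coe_sub_eq_zero t).trans (coe_sub_eq_zero t').symm) t t₀
  simp only [hk, deck_fst] at this ⊢
  linarith

lemma tendsto_rightEnd_of_abs_fst_sub_le {φ : Strip → Strip} {K : ℝ}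
    (hφ : ∀ x, |(φ x).1 - x.1| ≤ K) : Tendsto φ rightEnd rightEnd :=
  tendsto_comap_iff.mpr <| tendsto_atTop_mono
    (fun x => le_sub_iff_add_le'.mp (abs_le.mp (hφ x)).1)
    (tendsto_atTop_add_const_right _ (-K) tendsto_comap)

lemma tendsto_leftEnd_of_abs_fst_sub_le {φ : Strip → Strip} {K : ℝ}
    (hφ : ∀ x, |(φ x).1 - x.1| ≤ K) : Tendsto φ leftEnd leftEnd :=
  tendsto_comap_iff.mpr <| tendsto_atBot_mono
    (fun x => sub_le_iff_le_add'.mp (abs_le.mp (hφ x)).2)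
    (tendsto_atBot_add_const_right _ K tendsto_comap)

end Deck

section Lifts

variable {f : Annulus ≃ₜ Annulus} {ft : Strip ≃ₜ Strip}

lemma pA_apply_of_isLiftA (h : IsLiftA f ft) (x : Strip) : pA (ft x) = f (pA x) :=
  congrFun h x

lemma isLiftA_symm (h : IsLiftA f ft) : IsLiftA f.symm ft.symm := by
  funext x
  simp only [Function.comp_apply, Homeomorph.eq_symm_apply, ← pA_apply_of_isLiftA h,
    Homeomorph.apply_symm_apply]

lemma exists_addMonoidHom_apply_deck (h : IsLiftA f ft) :
    ∃ d : ℤ →+ ℤ, ∀ m, Function.Semiconj ft (deck m) (deck (d m)) := by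
  have exists_deck (m : ℤ) : ∃ k, ∀ x, ft (deck m x) = deck k (ft x) :=
    exists_forall_eq_deck_of_pA_comp_eq ft.continuous (by fun_prop) fun x => by
      rw [pA_apply_of_isLiftA h, pA_apply_of_isLiftA h, pA_deck]
  choose d hd using exists_deck
  refine ⟨AddMonoidHom.mk' d fun j k => deck_left_injective (ft (0, 0)) ?_, hd⟩
  simp only [← hd, ← deck_deck]

lemma semiconj_deck_or_semiconj_deck_neg (h : IsLiftA f ft) :
    (∀ m, Function.Semiconj ft (deck m) (deck m)) ∨
      ∀ m, Function.Semiconj ft (deck m) (deck (-m)) := by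
  obtain ⟨d, hd⟩ := exists_addMonoidHom_apply_deck h
  obtain ⟨e, he⟩ := exists_addMonoidHom_apply_deck (isLiftA_symm h)
  have hed : d 1 * e 1 = 1 := by
    have : e (d 1) = 1 := deck_left_injective (0, 0) <| by
      simpa only [ft.symm_apply_apply] using
        ((he (d 1) (ft (0, 0))).symm.trans (congrArg ft.symm (hd 1 (0, 0)).symm))
    rwa [← mul_one (d 1), ← smul_eq_mul, map_zsmul, smul_eq_mul] at this
  have hdm (m : ℤ) : d m = m * d 1 := by
    rw [← smul_eq_mul, ← map_zsmul, smul_eq_mul, mul_one]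
  rcases Int.eq_one_or_neg_one_of_mul_eq_one hed with h1 | h1
  · exact .inl fun m => by simpa only [hdm m, h1, mul_one] using hd m
  · exact .inr fun m => by simpa only [hdm m, h1, mul_neg_one] using hd m

lemma iterate_odd_apply_deck (hft : ∀ m, Function.Semiconj ft (deck m) (deck (-m))) (i : ℕ) (m : ℤ)
    (x : Strip) : ft^[2 * i + 1] (deck m x) = deck (-m) (ft^[2 * i + 1] x) := by
  have commute_sq : Function.Commute (ft^[2]) (deck m) := fun x => by
    simp only [Function.iterate_succ, Function.iterate_zero, Function.comp_apply, id_eq,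
      (hft _).eq, neg_neg]
  rw [Function.iterate_succ_apply', Function.iterate_succ_apply', Function.iterate_mul,
    (commute_sq.iterate_left i).eq, (hft m).eq]

/- The displacement of `deck m x` under an odd iterate is that of `x` minus `2 * m`. -/
lemma rotSet_eq_univ_of_semiconj_deck_neg (hft : ∀ m, Function.Semiconj ft (deck m) (deck (-m))) :
    rotSet ft = univ := by
  refine eq_univ_of_forall fun r => ?_
  set n : ℕ → ℕ := fun i => 2 * i + 1
  set e : ℕ → ℝ := fun i => (ft^[n i] (0, 0)).1 - r * n i
  have hn : Tendsto n atTop atTop :=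
    tendsto_atTop_mono (fun i => show i ≤ 2 * i + 1 by omega) tendsto_id
  have hn0 (i : ℕ) : (0 : ℝ) < n i := by positivity
  refine ⟨n, fun i => deck (round (e i / 2)) (0, 0), hn, ?_⟩
  refine tendsto_iff_dist_tendsto_zero.mpr (squeeze_zero (fun _ => dist_nonneg) (fun i => ?_)
    (tendsto_one_div_atTop_nhds_zero_nat.comp hn))
  simp only [n, iterate_odd_apply_deck hft, Real.dist_eq, Function.comp_apply]
  rw [div_sub' (hn0 i).ne', abs_div, abs_of_pos (hn0 i)]
  gcongr
  have hround := abs_le.mp (abs_sub_round (e i / 2))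
  simp only [deck_fst, Int.cast_neg, zero_add]
  simp only [e, n] at hround
  exact abs_le.mpr ⟨by linarith [hround.1], by linarith [hround.2]⟩

lemma commute_deck_of_rotSet_ne_univ (h : IsLiftA f ft) (hrot : rotSet ft ≠ univ) (m : ℤ) :
    Function.Commute ft (deck m) :=
  (semiconj_deck_or_semiconj_deck_neg h).resolve_right
    (fun hft => hrot (rotSet_eq_univ_of_semiconj_deck_neg hft)) m

end Lifts

/-! ### Equivariant heights -/

section Heights

variable {m a b : ℝ} {h : Strip → ℝ} {x : Strip}

lemma isCompact_range_of_deck_invariant {Y : Type*} [TopologicalSpace Y] {φ : Strip → Y}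
    (hφ : Continuous φ) (hdeck : ∀ k x, φ (deck k x) = φ x) : IsCompact (range φ) := by
  suffices range φ = φ '' (Icc 0 1 ×ˢ univ) from
    this ▸ (isCompact_Icc.prod isCompact_univ).image hφ
  refine (image_subset_range _ _).antisymm' ?_
  rintro _ ⟨x, rfl⟩
  refine ⟨deck (-⌊x.1⌋) x, ⟨⟨?_, ?_⟩, mem_univ _⟩, hdeck _ _⟩
  · simpa using Int.floor_le x.1
  · simpa [add_comm] using (Int.lt_floor_add_one x.1).le

/-- A continuous function on the strip which increases by `m` under the unit translation. -/
structure IsEquivariantHeight (m : ℝ) (h : Strip → ℝ) : Prop where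
  continuous : Continuous h
  map_deck : ∀ k x, h (deck k x) = h x + m * k

lemma IsEquivariantHeight.exists_abs_sub_le (hh : IsEquivariantHeight m h) :
    ∃ B, ∀ x, |h x - m * x.1| ≤ B := by
  have hcont := hh.continuous
  obtain ⟨B, hB⟩ := (isCompact_range_of_deck_invariant (φ := fun x => h x - m * x.1)
    (by fun_prop) fun k x => by
      simp only [hh.map_deck, deck_fst]
      ring).isBounded.exists_norm_le
  exact ⟨B, fun x => hB _ ⟨x, rfl⟩⟩

lemma nonempty_escapeLevels_rightEnd (hx : BddBelow (h '' (Prod.fst ⁻¹' Ici x.1))) :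
    (escapeLevels rightEnd h x).Nonempty := by
  obtain ⟨c, hc⟩ := hx
  have hpre : IsPreconnected (Prod.fst ⁻¹' Ici x.1 : Set Strip) := by
    simpa only [prod_univ] using isPreconnected_Ici.prod (isPreconnected_univ (α := unitInterval))
  exact ⟨c, escapesIn_of_isPreconnected hpre (fun y hy => hc ⟨y, hy, rfl⟩)
    (le_refl x.1) (tendsto_comap.eventually (eventually_ge_atTop x.1)).frequently⟩

lemma nonempty_escapeLevels_leftEnd (hx : BddBelow (h '' (Prod.fst ⁻¹' Iic x.1))) :
    (escapeLevels leftEnd h x).Nonempty := by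
  obtain ⟨c, hc⟩ := hx
  have hpre : IsPreconnected (Prod.fst ⁻¹' Iic x.1 : Set Strip) := by
    simpa only [prod_univ] using isPreconnected_Iic.prod (isPreconnected_univ (α := unitInterval))
  exact ⟨c, escapesIn_of_isPreconnected hpre (fun y hy => hc ⟨y, hy, rfl⟩)
    (le_refl x.1) (tendsto_comap.eventually (eventually_le_atBot x.1)).frequently⟩

/-- An equivariant height all of whose superlevel sets connect to the right end of the strip and
all of whose sublevel sets connect to the left end. -/
structure IsMonotoneHeight (m : ℝ) (h : Strip → ℝ) : Prop extends IsEquivariantHeight m h where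
  connectsToEnd_right : ConnectsToEnd rightEnd h
  connectsToEnd_left : ConnectsToEnd leftEnd (-h)

namespace IsEquivariantHeight

section

variable (hh : IsEquivariantHeight m h) (hm : 0 ≤ m)
include hh hm

lemma nonempty_escapeLevels_right (x : Strip) : (escapeLevels rightEnd h x).Nonempty := by
  obtain ⟨B, hB⟩ := hh.exists_abs_sub_le
  refine nonempty_escapeLevels_rightEnd ⟨m * x.1 - B, ?_⟩
  rintro _ ⟨y, hxy, rfl⟩
  linarith [(abs_le.mp (hB y)).1, mul_le_mul_of_nonneg_left hxy hm]

lemma nonempty_escapeLevels_left (x : Strip) : (escapeLevels leftEnd (-h) x).Nonempty := by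
  obtain ⟨B, hB⟩ := hh.exists_abs_sub_le
  refine nonempty_escapeLevels_leftEnd ⟨-(m * x.1 + B), ?_⟩
  rintro _ ⟨y, hyx, rfl⟩
  exact neg_le_neg (by linarith [(abs_le.mp (hB y)).2, mul_le_mul_of_nonneg_left hyx hm])

lemma endRegularization_apply_sub_mem_Icc {φ : Strip ≃ₜ Strip} {K : ℝ}
    (hφ : ∀ x, |(φ x).1 - x.1| ≤ K) (hab : ∀ x, h (φ x) - h x ∈ Icc a b) (x : Strip) :
    endRegularization rightEnd leftEnd h (φ x) - endRegularization rightEnd leftEnd h x ∈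
      Icc a b := by
  have hφ' (x : Strip) : |(φ.symm x).1 - x.1| ≤ K := by
    simpa only [φ.apply_symm_apply, abs_sub_comm] using hφ (φ.symm x)
  exact _root_.endRegularization_apply_sub_mem_Icc (hh.nonempty_escapeLevels_right hm)
    (hh.nonempty_escapeLevels_left hm) (tendsto_rightEnd_of_abs_fst_sub_le hφ)
    (tendsto_rightEnd_of_abs_fst_sub_le hφ') (tendsto_leftEnd_of_abs_fst_sub_le hφ)
    (tendsto_leftEnd_of_abs_fst_sub_le hφ') hab x

lemma isMonotoneHeight_endRegularization :
    IsMonotoneHeight m (endRegularization rightEnd leftEnd h) where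
  continuous := continuous_endRegularization (hh.nonempty_escapeLevels_right hm)
    (hh.nonempty_escapeLevels_left hm) hh.continuous
  map_deck k x := by
    have := hh.endRegularization_apply_sub_mem_Icc hm (φ := deck k) (K := |(k : ℝ)|)
      (a := m * k) (b := m * k) (fun y => by simp) (fun y => by simp [hh.map_deck]) x
    rw [Icc_self, mem_singleton_iff, sub_eq_iff_eq_add'] at this
    exact this
  connectsToEnd_right := connectsToEnd_endRegularization (hh.nonempty_escapeLevels_right hm)
    (hh.nonempty_escapeLevels_left hm) hh.continuous
  connectsToEnd_left := connectsToEnd_neg_endRegularization (hh.nonempty_escapeLevels_right hm)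
    (hh.nonempty_escapeLevels_left hm)

end

lemma exists_joinsBoundaryS_mem_Ioo (hh : IsEquivariantHeight m h) (hm : 0 < m) (hab : a < b) :
    ∃ γ, JoinsBoundaryS γ ∧ ∀ t, h (γ t) ∈ Ioo a b := by
  obtain ⟨B, hB⟩ := hh.exists_abs_sub_le
  refine _root_.exists_joinsBoundaryS_mem_Ioo hh.continuous (l := (a - B) / m) (r := (b + B) / m)
    hab (fun t => ?_) (fun t => ?_)
  · have := (abs_le.mp (hB ((a - B) / m, t))).2
    rw [mul_div_cancel₀ _ hm.ne'] at this
    linarith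
  · have := (abs_le.mp (hB ((b + B) / m, t))).1
    rw [mul_div_cancel₀ _ hm.ne'] at this
    linarith

end IsEquivariantHeight

end Heights

section Rotation

variable {ft : Strip ≃ₜ Strip}

lemma continuous_iterate_fst (n : ℕ) : Continuous fun x => (ft^[n] x).1 :=
  continuous_fst.comp (ft.continuous.iterate n)

lemma abs_iterate_fst_sub_le {K : ℝ} (hK : ∀ x, |(ft x).1 - x.1| ≤ K) (n : ℕ) (x : Strip) :
    |(ft^[n] x).1 - x.1| ≤ n * K := by
  have := dist_le_range_sum_of_dist_le (f := fun i => (ft^[i] x).1) n (d := fun _ => K)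
    fun {i} _ => by
      rw [dist_comm, Real.dist_eq, Function.iterate_succ_apply']
      exact hK _
  rw [dist_comm, Real.dist_eq] at this
  simpa only [Finset.sum_const, Finset.card_range, nsmul_eq_mul, Function.iterate_zero, id_eq]
    using this

variable (hft : ∀ k, Function.Commute ft (deck k))
include hft

lemma isEquivariantHeight_iterate_fst (n : ℕ) : IsEquivariantHeight 1 fun x => (ft^[n] x).1 :=
  ⟨continuous_iterate_fst n, fun k x => by
    simp only [((hft k).iterate_left n).eq, deck_fst, one_mul]⟩

lemma exists_abs_apply_fst_sub_le : ∃ K, ∀ x, |(ft x).1 - x.1| ≤ K := by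
  simpa only [one_mul, Function.iterate_one] using
    (isEquivariantHeight_iterate_fst hft 1).exists_abs_sub_le

lemma exists_forall_iterate_displacement_mem {U : Set ℝ} (hU : IsOpen U) (hrot : rotSet ft ⊆ U) :
    ∃ N : ℕ, 0 < N ∧ ∀ x, ((ft^[N] x).1 - x.1) / N ∈ U := by
  by_contra! hN
  obtain ⟨K, hK⟩ := exists_abs_apply_fst_sub_le hft
  choose x hx using fun n : ℕ => hN (n + 1) n.succ_pos
  set v : ℕ → ℝ := fun n => ((ft^[n + 1] (x n)).1 - (x n).1) / (n + 1 : ℕ)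
  have hv (n : ℕ) : v n ∈ Icc (-K) K := by
    rw [mem_Icc, ← abs_le, abs_div, Nat.abs_cast, div_le_iff₀ (by positivity), mul_comm]
    exact abs_iterate_fst_sub_le hK _ _
  obtain ⟨r, -, φ, hφ, hr⟩ := isCompact_Icc.tendsto_subseq hv
  have hr_rot : r ∈ rotSet ft :=
    ⟨fun i => φ i + 1, x ∘ φ, (tendsto_add_atTop_nat 1).comp hφ.tendsto_atTop, hr⟩
  exact hU.isClosed_compl.mem_of_tendsto hr (.of_forall fun i => hx (φ i)) (hrot hr_rot)

lemma isEquivariantHeight_birkhoffAverage (m : ℝ) {N : ℕ} (hN : 0 < N) :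
    IsEquivariantHeight m fun x => m * birkhoffAverage ℝ ft Prod.fst N x where
  continuous := by
    simp only [birkhoffAverage, birkhoffSum]
    exact continuous_const.mul (continuous_const.mul
      (continuous_finsetSum _ fun i _ => continuous_iterate_fst i))
  map_deck k x := by
    have hN' : (N : ℝ) ≠ 0 := by positivity
    simp only [birkhoffAverage, birkhoffSum, ((hft k).iterate_left _).eq, deck_fst,
      Finset.sum_add_distrib, Finset.sum_const, Finset.card_range, nsmul_eq_mul, smul_eq_mul]
    field_simp

lemma exists_isEquivariantHeight_apply_sub_mem_Ioo {m a b : ℝ} (hm : 0 < m)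
    (hrot : rotSet ft ⊆ Ioo (a / m) (b / m)) :
    ∃ h, IsEquivariantHeight m h ∧ ∀ x, h (ft x) - h x ∈ Ioo a b := by
  obtain ⟨N, hN, hdisp⟩ := exists_forall_iterate_displacement_mem hft isOpen_Ioo hrot
  refine ⟨_, isEquivariantHeight_birkhoffAverage hft m hN, fun x => ?_⟩
  rw [← mul_sub, birkhoffAverage_apply_sub_birkhoffAverage, smul_eq_mul, inv_mul_eq_div]
  exact ⟨(div_lt_iff₀' hm).mp (hdisp x).1, (lt_div_iff₀' hm).mp (hdisp x).2⟩

lemma exists_pos_apply_sub_mem_Icc {m a b : ℝ} {h : Strip → ℝ} (hh : IsEquivariantHeight m h)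
    (hab : ∀ x, h (ft x) - h x ∈ Ioo a b) :
    ∃ ε > 0, ∀ x, h (ft x) - h x ∈ Icc (a + ε) (b - ε) := by
  have hcont := hh.continuous
  have hcompact : IsCompact (range fun x => h (ft x) - h x) :=
    isCompact_range_of_deck_invariant (by fun_prop) fun k x => by
      simp only [(hft k).eq, hh.map_deck, add_sub_add_right_eq_sub]
  obtain ⟨ε, hε, hεle⟩ := hcompact.exists_forall_le' (f := fun d => min (d - a) (b - d))
    (by fun_prop) (a := 0) (by
      rintro _ ⟨x, rfl⟩
      exact lt_min (sub_pos.mpr (hab x).1) (sub_pos.mpr (hab x).2))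
  refine ⟨ε, hε, fun x => ?_⟩
  obtain ⟨hleft, hright⟩ := le_min_iff.mp (hεle _ ⟨x, rfl⟩)
  exact ⟨by linarith, by linarith⟩

lemma exists_isMonotoneHeight_apply_sub_mem_Icc {m a b : ℝ} (hm : 0 < m)
    (hrot : rotSet ft ⊆ Ioo (a / m) (b / m)) :
    ∃ ε > 0, ∃ g, IsMonotoneHeight m g ∧ ∀ x, g (ft x) - g x ∈ Icc (a + ε) (b - ε) := by
  obtain ⟨h, hh, hab⟩ := exists_isEquivariantHeight_apply_sub_mem_Ioo hft hm hrot
  obtain ⟨ε, hε, hhε⟩ := exists_pos_apply_sub_mem_Icc hft hh hab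
  obtain ⟨K, hK⟩ := exists_abs_apply_fst_sub_le hft
  exact ⟨ε, hε, _, hh.isMonotoneHeight_endRegularization hm.le,
    hh.endRegularization_apply_sub_mem_Icc hm.le hK hhε⟩

end Rotation

/-! ### Families of curves near the integer levels -/

section LevelFamilies

variable {m : ℕ} {g : Strip → ℝ} {δ : ℝ} {c : ℤ → unitInterval → Strip}
  {γ : unitInterval → Strip} {w z : ℤ}

/-- A family of simple curves crossing the strip, invariant under the deck transformations, whose
`z`-th member is within `δ` of the level `z` of the function `g`. -/
structure IsLevelFamily (m : ℕ) (g : Strip → ℝ) (δ : ℝ) (c : ℤ → unitInterval → Strip) : Prop where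
  joins : ∀ z, JoinsBoundaryS (c z)
  mem_Ioo : ∀ (z : ℤ) t, g (c z t) ∈ Ioo (z - δ) (z + δ)
  map_deck : ∀ z k t, c (z + m * k) t = deck k (c z t)

lemma joinsBoundaryS_deck_comp (hγ : JoinsBoundaryS γ) (k : ℤ) : JoinsBoundaryS (deck k ∘ γ) := by
  obtain ⟨hcont, hinj, hbot, htop, hmid⟩ := hγ
  exact ⟨(deck k).continuous.comp hcont, (deck k).injective.comp hinj, hbot, htop, hmid⟩

lemma exists_isLevelFamily (hg : IsEquivariantHeight m g) (hm : 0 < m) (hδ : 0 < δ) :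
    ∃ c, IsLevelFamily m g δ c := by
  choose b hb hbδ using fun z : ℤ => hg.exists_joinsBoundaryS_mem_Ioo (Nat.cast_pos.mpr hm)
    (show z - δ < z + δ by linarith)
  refine ⟨fun z => deck (z / m) ∘ b (z % m), fun z => joinsBoundaryS_deck_comp (hb _) _,
    fun z t => ?_, fun z k t => ?_⟩
  · have hz : ((z % m : ℤ) : ℝ) + m * (z / m : ℤ) = z := mod_cast Int.emod_add_mul_ediv z m
    have := hbδ (z % m) t
    rw [Function.comp_apply, hg.map_deck, ← hz]
    exact ⟨by linarith [this.1], by linarith [this.2]⟩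
  · have hm' : (m : ℤ) ≠ 0 := mod_cast hm.ne'
    simp only [Function.comp_apply, deck_deck, Int.add_mul_emod_self_left,
      Int.add_mul_ediv_left z k hm', add_comm]

lemma notMem_range_of_onRightS {x : Strip} (hx : OnRightS γ x) : x ∉ range γ := by
  obtain ⟨q, -, hxq⟩ := hx
  exact connectedComponentIn_subset _ q hxq

/-- The projection to the annulus of a family of curves of the strip, indexed by `ℤ/mℤ`. It is
meaningful when `c` is invariant under the deck transformations, so that the choice of the integer
representing `i` is irrelevant. -/
noncomputable def levelCurve (c : ℤ → unitInterval → Strip) (i : ZMod m) : unitInterval → Annulus :=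
  pA ∘ c i.cast

namespace IsLevelFamily

variable (hc : IsLevelFamily m g δ c)
include hc

lemma exists_eq_of_isCurveLift (hγ : IsCurveLift (pA ∘ c z) γ) : ∃ k : ℤ, γ = c (z + m * k) := by
  obtain ⟨k, hk⟩ := exists_forall_eq_deck_of_pA_comp_eq (hc.joins z).1 hγ.1
    fun t => (congrFun hγ.2 t).symm
  exact ⟨k, funext fun t => (hk t).trans (hc.map_deck z k t).symm⟩

lemma exists_eq_of_pA_eq (hδ : δ ≤ 1 / 2) {s t : unitInterval} (h : pA (c z s) = pA (c w t)) :
    (∃ k : ℤ, w = z + m * k) ∧ s = t := by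
  obtain ⟨k, hk⟩ := pA_eq_pA_iff.mp h
  rw [← hc.map_deck] at hk
  have hw := hc.mem_Ioo w t
  have hz := hc.mem_Ioo (z + m * k) s
  rw [hk] at hw
  have habs : |(w : ℝ) - (z + m * k : ℤ)| < 1 :=
    abs_lt.mpr ⟨by linarith [hw.2, hz.1], by linarith [hw.1, hz.2]⟩
  have hwz : w = z + m * k := sub_eq_zero.mp (Int.abs_lt_one_iff.mp (mod_cast habs))
  rw [← hwz] at hk
  exact ⟨⟨k, hwz⟩, ((hc.joins w).2.1 hk).symm⟩

lemma levelCurve_intCast (z : ℤ) : levelCurve c (z : ZMod m) = pA ∘ c z := by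
  funext t
  have hz := hc.map_deck (z % m) (z / m) t
  rw [Int.emod_add_mul_ediv] at hz
  simp only [levelCurve, ZMod.coe_intCast, Function.comp_apply, hz, pA_deck]

lemma joinsBoundaryA_levelCurve (hδ : δ ≤ 1 / 2) (i : ZMod m) :
    JoinsBoundaryA (levelCurve c i) := by
  obtain ⟨hcont, -, hbot, htop, hmid⟩ := hc.joins i.cast
  exact ⟨continuous_pA.comp hcont, fun s t hst => (hc.exists_eq_of_pA_eq hδ hst).2, hbot, htop,
    hmid⟩

lemma disjoint_range_levelCurve (hδ : δ ≤ 1 / 2) {i j : ZMod m} (hij : i ≠ j) :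
    Disjoint (range (levelCurve c i)) (range (levelCurve c j)) := by
  refine disjoint_left.mpr ?_
  rintro _ ⟨s, rfl⟩ ⟨t, hst⟩
  obtain ⟨⟨k, hk⟩, -⟩ := hc.exists_eq_of_pA_eq hδ hst
  exact hij (by simpa using congrArg (Int.cast : ℤ → ZMod m) hk)

variable (hg : IsMonotoneHeight m g)
include hg

lemma onRightS {x : Strip} (hx : z + δ < g x) : OnRightS (c z) x :=
  onRightS_of_lt hg.connectsToEnd_right (hc.joins z).1 (fun t => (hc.mem_Ioo z t).2.le) hx

lemma onLeftS {x : Strip} (hx : g x < z - δ) : OnLeftS (c z) x :=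
  onLeftS_of_lt hg.connectsToEnd_left (hc.joins z).1 (fun t => (hc.mem_Ioo z t).1.le) hx

lemma lt_of_strictlyRightS (hδ : δ ≤ 1 / 2) (h : StrictlyRightS (c z) (range (c w))) : z < w := by
  have hright : OnRightS (c z) (c w 0) := h _ (mem_range_self 0)
  by_contra! hwz
  rcases hwz.eq_or_lt with rfl | hwz
  · exact notMem_range_of_onRightS hright (mem_range_self 0)
  · have hwz' : (w : ℝ) + 1 ≤ z := mod_cast hwz
    exact not_onLeftS_of_onRightS (hc.joins z) hright
      (hc.onLeftS hg (by linarith [(hc.mem_Ioo w 0).2]))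

lemma strictlyBetween (hδ : δ ≤ 1 / 2) (hm : 1 < m) (hγ : Continuous γ)
    (hγz : ∀ t, g (γ t) ∈ Ioo (z - 1 + δ) (z + 1 - δ)) :
    StrictlyBetween (pA ∘ c (z - 1)) (pA ∘ γ) (pA ∘ c (z + 1)) := by
  refine ⟨c (z - 1), γ, ⟨(hc.joins _).1, rfl⟩, ⟨hγ, rfl⟩, ?_, fun γ₃ hγ₃ hright => ?_⟩
  · rintro _ ⟨t, rfl⟩
    exact hc.onRightS hg (by push_cast; exact (hγz t).1)
  · obtain ⟨k, rfl⟩ := hc.exists_eq_of_isCurveLift hγ₃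
    have hlt := hc.lt_of_strictlyRightS hg hδ hright
    have hne : z + 1 + m * k ≠ z := fun h => by
      have hdvd : (m : ℤ) ∣ 1 := ⟨-k, by linarith⟩
      have := Int.le_of_dvd one_pos hdvd
      omega
    have hle : ((z + 1 : ℤ) : ℝ) ≤ (z + 1 + m * k : ℤ) := by exact_mod_cast (by omega)
    rintro _ ⟨t, rfl⟩
    refine hc.onLeftS hg ((hγz t).2.trans_le ?_)
    push_cast at hle ⊢
    linarith

lemma strictlyBetween_levelCurve (hδ : δ ≤ 1 / 2) (hm : 1 < m) (i : ZMod m) :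
    StrictlyBetween (levelCurve c (i - 1)) (levelCurve c i) (levelCurve c (i + 1)) := by
  obtain ⟨z, rfl⟩ := ZMod.intCast_surjective i
  have := hc.strictlyBetween hg hδ hm (z := z) (hc.joins z).1 fun t =>
    Ioo_subset_Ioo (by linarith) (by linarith) (hc.mem_Ioo z t)
  simpa only [← hc.levelCurve_intCast, Int.cast_sub, Int.cast_add, Int.cast_one] using this

lemma strictlyBetween_levelCurve_image (hδ : δ ≤ 1 / 2) (hm : 1 < m) {f : Annulus ≃ₜ Annulus}
    {ft : Strip ≃ₜ Strip} (hlift : IsLiftA f ft) {a : ℤ}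
    (ha : ∀ x, g (ft x) - g x ∈ Icc (a - 1 + 2 * δ) (a + 1 - 2 * δ)) (i : ZMod m) :
    StrictlyBetween (levelCurve c (i + (a : ZMod m) - 1)) (fun t => f (levelCurve c i t))
      (levelCurve c (i + (a : ZMod m) + 1)) := by
  obtain ⟨z, rfl⟩ := ZMod.intCast_surjective i
  have hz : pA ∘ ft ∘ c z = fun t => f (levelCurve c (z : ZMod m) t) := by
    rw [← Function.comp_assoc, hlift, hc.levelCurve_intCast]
    rfl
  have := hc.strictlyBetween hg hδ hm (z := z + a) (ft.continuous.comp (hc.joins z).1) fun t => by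
    have hstep := ha (c z t)
    have hstart := hc.mem_Ioo z t
    rw [Function.comp_apply, Int.cast_add]
    exact ⟨by linarith [hstep.1, hstart.1], by linarith [hstep.2, hstart.2]⟩
  simpa only [← hc.levelCurve_intCast, hz, Int.cast_sub, Int.cast_add, Int.cast_one] using this

end IsLevelFamily

end LevelFamilies

theorem vertical_curves_of_rational_pseudoRotation_general
    (f : Annulus ≃ₜ Annulus) (ft : Strip ≃ₜ Strip) (hlift : IsLiftA f ft)
    (m : ℕ) (hm : 1 < m) (a : ℤ) (hrot : rotSet ft ⊆ Ioo ((a - 1 : ℝ) / m) ((a + 1 : ℝ) / m)) :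
    ∃ γ : ZMod m → unitInterval → Annulus,
      (∀ i, JoinsBoundaryA (γ i)) ∧
      (∀ i j, i ≠ j → Disjoint (range (γ i)) (range (γ j))) ∧
      ∀ i : ZMod m,
        StrictlyBetween (γ (i - 1)) (γ i) (γ (i + 1)) ∧
        StrictlyBetween (γ (i + a - 1)) (fun t => f (γ i t)) (γ (i + a + 1)) := by
  have hm' : (0 : ℝ) < m := by positivity
  have hcomm : ∀ k, Function.Commute ft (deck k) := commute_deck_of_rotSet_ne_univ hlift fun h =>
    (hrot (h ▸ mem_univ ((a + 1 : ℝ) / m))).2.false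
  obtain ⟨ε, hε, g, hg, hgε⟩ := exists_isMonotoneHeight_apply_sub_mem_Icc hcomm hm' hrot
  set δ := min (1 / 2) (ε / 2)
  have hδ : δ ≤ 1 / 2 := min_le_left _ _
  have hδε : 2 * δ ≤ ε := by linarith [min_le_right (1 / 2) (ε / 2)]
  obtain ⟨c, hc⟩ := exists_isLevelFamily hg.toIsEquivariantHeight (zero_lt_one.trans hm)
    (lt_min one_half_pos (half_pos hε) : 0 < δ)
  exact ⟨levelCurve c, hc.joinsBoundaryA_levelCurve hδ, fun _ _ => hc.disjoint_range_levelCurve hδ,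
    fun i => ⟨hc.strictlyBetween_levelCurve hg hδ hm i,
      hc.strictlyBetween_levelCurve_image hg hδ hm hlift
        (fun x => Icc_subset_Icc (by linarith) (by linarith) (hgε x)) i⟩⟩

lemma div_mem_Ioo_mul_div_mul (p : ℝ) {q n : ℝ} (hq : 0 < q) (hn : 0 < n) :
    p / q ∈ Ioo ((n * p - 1) / (n * q)) ((n * p + 1) / (n * q)) := by
  rw [← mul_div_mul_left p q hn.ne']
  exact ⟨by gcongr; exact sub_one_lt _, by gcongr; exact lt_add_one _⟩

/-- **Proposition.** Let `f ∈ Homeo₀(𝔸)` have a lift with rotation set `{p/q}`, where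
either `q > 0`, `0 < p < q` and `p, q` are coprime, or `p = 0` and `q = 1`. Then for
every integer `n > 1` there is a family `(γ_i)_{i ∈ ℤ/nqℤ}` of pairwise disjoint simple
curves joining the two boundary components of the annulus such that, for every `i`, the
curve `γ_i` lies strictly between `γ_{i-1}` and `γ_{i+1}`, and the curve `f(γ_i)` lies
strictly between `γ_{i+np-1}` and `γ_{i+np+1}`. -/
theorem vertical_curves_of_rational_pseudoRotation
    (f : Annulus ≃ₜ Annulus) (hf : IsotopicToId f)
    (ft : Strip ≃ₜ Strip) (hlift : IsLiftA f ft)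
    (p q : ℕ) (hpq : (0 < p ∧ p < q ∧ Nat.Coprime p q) ∨ (p = 0 ∧ q = 1))
    (hrot : rotSet ft = {(p : ℝ) / (q : ℝ)})
    (n : ℕ) (hn : 1 < n) :
    ∃ γ : ZMod (n * q) → unitInterval → Annulus,
      (∀ i, JoinsBoundaryA (γ i)) ∧
      (∀ i j, i ≠ j → Disjoint (Set.range (γ i)) (Set.range (γ j))) ∧
      ∀ i : ZMod (n * q),
        StrictlyBetween (γ (i - 1)) (γ i) (γ (i + 1)) ∧
        StrictlyBetween (γ (i + (n * p : ℕ) - 1)) (fun t => f (γ i t))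
          (γ (i + (n * p : ℕ) + 1)) := by
  have hq : 0 < q := by omega
  have hpq_mem := div_mem_Ioo_mul_div_mul (p : ℝ) (Nat.cast_pos.mpr hq) (n := n) (by positivity)
  simpa only [Int.cast_natCast] using
    vertical_curves_of_rational_pseudoRotation_general f ft hlift (n * q)
      (hn.trans_le (Nat.le_mul_of_pos_right n hq)) (n * p : ℕ) (by simpa [hrot] using hpq_mem)
end
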